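/- Let M be a non-quasianalytic weight sequence of moderate growth such that m_k := M_k/k! is log-convex, and let d ≥ 1. Then the ring of germs at 0 ∈ ℝ^d of complex-valued E^{(M)}-functions has property (D): for every function f defined on an open neighborhood of 0 in ℝ^d and every integer j ≥ 1, if f^j and f^{j+1} are of class E^{(M)} on some open neighborhood of 0, then f is of class E^{(M)} on some open neighborhood of 0. -/

import Mathlib

open Filter Set Asymptotics MeasureTheory

noncomputable section

/-- `M` is a weight sequence: `M 0 = 1`, positive, `M 1 ≥ 1`, log-convex and
`M k ^ (1/k) → ∞`. -/
def IsWeightSeq (M : ℕ → ℝ) : Prop :=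
  M 0 = 1 ∧ (∀ k, 0 < M k) ∧ 1 ≤ M 1 ∧
    (∀ k : ℕ, 1 ≤ k → M k ^ 2 ≤ M (k - 1) * M (k + 1)) ∧
    Tendsto (fun k : ℕ => M k ^ (1 / (k : ℝ))) atTop atTop

/-- The sequence `m k = M k / k!`. -/
def mseq (M : ℕ → ℝ) : ℕ → ℝ := fun k => M k / (Nat.factorial k : ℝ)

/-- Log-convexity of a sequence. -/
def LogConvexSeq (m : ℕ → ℝ) : Prop := ∀ k : ℕ, 1 ≤ k → m k ^ 2 ≤ m (k - 1) * m (k + 1)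

/-- `m k ^ (1/k) → ∞`. -/
def RootTendsToInfty (m : ℕ → ℝ) : Prop :=
  Tendsto (fun k : ℕ => m k ^ (1 / (k : ℝ))) atTop atTop

/-- Moderate growth of a sequence. -/
def ModerateGrowth (M : ℕ → ℝ) : Prop :=
  ∃ C : ℝ, 0 < C ∧ ∀ j k : ℕ, M (j + k) ≤ C ^ (j + k) * M j * M k

/-- Derivation closedness of a sequence. -/
def DerivClosed (M : ℕ → ℝ) : Prop :=
  ∃ C : ℝ, 0 < C ∧ ∀ k : ℕ, M (k + 1) ≤ C ^ (k + 1) * M k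

/-- Non-quasianalyticity: `∑_{k≥1} M (k-1) / M k = ∑_{k≥1} 1/μ_k < ∞`. -/
def NonQuasianalytic (M : ℕ → ℝ) : Prop := Summable fun k : ℕ => M k / M (k + 1)

/-- Quasianalyticity: `∑_{k≥1} 1/μ_k = ∞`. -/
def Quasianalytic (M : ℕ → ℝ) : Prop := ¬ NonQuasianalytic M

/-- The associated function `h_m (t) = inf_k m k * t ^ k`. -/
def hFun (m : ℕ → ℝ) (t : ℝ) : ℝ := ⨅ k : ℕ, m k * t ^ k

/-- `Γ̄_m (t) = min {k | h_m t = m k * t ^ k}`. -/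
def GammaBar (m : ℕ → ℝ) (t : ℝ) : ℕ := sInf {k : ℕ | hFun m t = m k * t ^ k}

/-- `Γ̲_m (t) = min {k | m (k+1) / m k ≥ 1 / t}`. -/
def GammaLow (m : ℕ → ℝ) (t : ℝ) : ℕ := sInf {k : ℕ | 1 / t ≤ m (k + 1) / m k}

/-- The set whose supremum is `mg (M, N)`. -/
def mgSet (M N : ℕ → ℝ) : Set ℝ :=
  {x | ∃ j k : ℕ, 1 ≤ j + k ∧ x = (M (j + k) / (N j * N k)) ^ (1 / (j + k : ℝ))}

/-- `mg (M, N) = sup_{j+k ≥ 1} (M (j+k) / (N j * N k)) ^ (1/(j+k))`. -/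
def mg (M N : ℕ → ℝ) : ℝ := sSup (mgSet M N)

/-- `mg (M, N) < ∞`. -/
def MgFinite (M N : ℕ → ℝ) : Prop := BddAbove (mgSet M N)

/-- A weight sequence is regular: `m k ^ (1/k) → ∞`, derivation closed, and
`Γ̄_m (C t) ≤ Γ̲_m t` for some `C ≥ 1`. -/
def RegularWS (M : ℕ → ℝ) : Prop :=
  RootTendsToInfty (mseq M) ∧ DerivClosed M ∧
    ∃ C : ℝ, 1 ≤ C ∧ ∀ t : ℝ, 0 < t → GammaBar (mseq M) (C * t) ≤ GammaLow (mseq M) t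

/-- `f` is of class `E^{M}` (Roumieu) on the open set `U`. -/
def RoumieuOn {E : Type*} [NormedAddCommGroup E] [NormedSpace ℝ E]
    (M : ℕ → ℝ) (f : E → ℂ) (U : Set E) : Prop :=
  ContDiffOn ℝ (⊤ : ℕ∞) f U ∧
    ∀ V : Set E, IsOpen V → IsCompact (closure V) → closure V ⊆ U →
      ∃ C σ : ℝ, 0 < C ∧ 0 < σ ∧
        ∀ x ∈ V, ∀ k : ℕ, ‖iteratedFDerivWithin ℝ k f U x‖ ≤ C * σ ^ k * M k

/-- `f` is of class `E^{(M)}` (Beurling) on the open set `U`. -/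
def BeurlingOn {E : Type*} [NormedAddCommGroup E] [NormedSpace ℝ E]
    (M : ℕ → ℝ) (f : E → ℂ) (U : Set E) : Prop :=
  ContDiffOn ℝ (⊤ : ℕ∞) f U ∧
    ∀ V : Set E, IsOpen V → IsCompact (closure V) → closure V ⊆ U →
      ∀ σ : ℝ, 0 < σ → ∃ C : ℝ, 0 < C ∧
        ∀ x ∈ V, ∀ k : ℕ, ‖iteratedFDerivWithin ℝ k f U x‖ ≤ C * σ ^ k * M k

/-- A weight matrix: a nonempty, pointwise totally ordered family of weight sequences. -/
def IsWeightMatrix (W : Set (ℕ → ℝ)) : Prop :=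
  W.Nonempty ∧ (∀ M ∈ W, IsWeightSeq M) ∧
    ∀ M ∈ W, ∀ N ∈ W, (∀ k, M k ≤ N k) ∨ (∀ k, N k ≤ M k)

/-- R-regularity of a weight matrix. -/
def RRegular (W : Set (ℕ → ℝ)) : Prop :=
  (∀ M ∈ W, RootTendsToInfty (mseq M)) ∧
    (∀ M ∈ W, ∃ N ∈ W, ∃ C : ℝ, 1 ≤ C ∧ ∀ j : ℕ, M (j + 1) ≤ C ^ (j + 1) * N j) ∧
    (∀ M ∈ W, ∃ N ∈ W, ∃ C : ℝ, 1 ≤ C ∧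
      ∀ t : ℝ, 0 < t → GammaBar (mseq N) (C * t) ≤ GammaLow (mseq M) t)

/-- B-regularity of a weight matrix. -/
def BRegular (W : Set (ℕ → ℝ)) : Prop :=
  (∀ M ∈ W, RootTendsToInfty (mseq M)) ∧
    (∀ M ∈ W, ∃ N ∈ W, ∃ C : ℝ, 1 ≤ C ∧ ∀ j : ℕ, N (j + 1) ≤ C ^ j * M j) ∧
    (∀ M ∈ W, ∃ N ∈ W, ∃ C : ℝ, 1 ≤ C ∧
      ∀ t : ℝ, 0 < t → GammaBar (mseq M) (C * t) ≤ GammaLow (mseq N) t)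

/-- R-moderate growth of a weight matrix. -/
def RModerateGrowth (W : Set (ℕ → ℝ)) : Prop := ∀ M ∈ W, ∃ N ∈ W, MgFinite M N

/-- B-moderate growth of a weight matrix. -/
def BModerateGrowth (W : Set (ℕ → ℝ)) : Prop := ∀ M ∈ W, ∃ N ∈ W, MgFinite N M

/-- `f` is of class `E^{W}` (Roumieu, weight matrix) on the open set `U`. -/
def MatrixRoumieuOn {E : Type*} [NormedAddCommGroup E] [NormedSpace ℝ E]
    (W : Set (ℕ → ℝ)) (f : E → ℂ) (U : Set E) : Prop :=
  ContDiffOn ℝ (⊤ : ℕ∞) f U ∧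
    ∀ V : Set E, IsOpen V → IsCompact (closure V) → closure V ⊆ U →
      ∃ M ∈ W, ∃ C σ : ℝ, 0 < C ∧ 0 < σ ∧
        ∀ x ∈ V, ∀ k : ℕ, ‖iteratedFDerivWithin ℝ k f U x‖ ≤ C * σ ^ k * M k

/-- `f` is of class `E^{(W)}` (Beurling, weight matrix) on the open set `U`. -/
def MatrixBeurlingOn {E : Type*} [NormedAddCommGroup E] [NormedSpace ℝ E]
    (W : Set (ℕ → ℝ)) (f : E → ℂ) (U : Set E) : Prop :=
  ContDiffOn ℝ (⊤ : ℕ∞) f U ∧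
    ∀ V : Set E, IsOpen V → IsCompact (closure V) → closure V ⊆ U →
      ∀ M ∈ W, ∀ σ : ℝ, 0 < σ → ∃ C : ℝ, 0 < C ∧
        ∀ x ∈ V, ∀ k : ℕ, ‖iteratedFDerivWithin ℝ k f U x‖ ≤ C * σ ^ k * M k

/-- `ω` is a weight function. -/
def IsWeightFunction (ω : ℝ → ℝ) : Prop :=
  ContinuousOn ω (Ici 0) ∧ MonotoneOn ω (Ici 0) ∧ (∀ t ∈ Ici (0 : ℝ), 0 ≤ ω t) ∧
    ((fun t => ω (2 * t)) =O[atTop] ω) ∧ (ω =o[atTop] fun t : ℝ => t) ∧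
    ((fun t => Real.log t) =o[atTop] ω) ∧ ConvexOn ℝ (Ici 0) fun t => ω (Real.exp t)

/-- The Young conjugate `φ*_ω (s) = sup_{t ≥ 0} (s t - ω (e^t))`. -/
def phiStar (ω : ℝ → ℝ) (s : ℝ) : ℝ := sSup ((fun t => s * t - ω (Real.exp t)) '' Ici 0)

/-- Non-quasianalyticity of a weight function. -/
def NonQuasianalyticW (ω : ℝ → ℝ) : Prop := IntegrableOn (fun t => ω t / t ^ 2) (Ici 1)

/-- `f` is of class `E^{ω}` (Roumieu) on the open set `U`. -/
def OmegaRoumieuOn {E : Type*} [NormedAddCommGroup E] [NormedSpace ℝ E]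
    (ω : ℝ → ℝ) (f : E → ℂ) (U : Set E) : Prop :=
  ContDiffOn ℝ (⊤ : ℕ∞) f U ∧
    ∀ V : Set E, IsOpen V → IsCompact (closure V) → closure V ⊆ U →
      ∃ C ρ : ℝ, 0 < C ∧ 0 < ρ ∧
        ∀ x ∈ V, ∀ k : ℕ,
          ‖iteratedFDerivWithin ℝ k f U x‖ ≤ C * Real.exp (phiStar ω (ρ * k) / ρ)

/-- `f` is of class `E^{(ω)}` (Beurling) on the open set `U`. -/
def OmegaBeurlingOn {E : Type*} [NormedAddCommGroup E] [NormedSpace ℝ E]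
    (ω : ℝ → ℝ) (f : E → ℂ) (U : Set E) : Prop :=
  ContDiffOn ℝ (⊤ : ℕ∞) f U ∧
    ∀ V : Set E, IsOpen V → IsCompact (closure V) → closure V ⊆ U →
      ∀ ρ : ℝ, 0 < ρ → ∃ C : ℝ, 0 < C ∧
        ∀ x ∈ V, ∀ k : ℕ,
          ‖iteratedFDerivWithin ℝ k f U x‖ ≤ C * Real.exp (phiStar ω (ρ * k) / ρ)

/-- The open ellipse `Ω_ε` with vertices `± cosh ε` and co-vertices `± i sinh ε`. -/
def OmegaE (ε : ℝ) : Set ℂ :=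
  {z : ℂ | (z.re / Real.cosh ε) ^ 2 + (z.im / Real.sinh ε) ^ 2 < 1}

/-- The sequence space `Λ^{M}`. -/
def Lambda (M : ℕ → ℝ) : Set (ℕ → ℂ) :=
  {c | ∃ ρ : ℝ, 0 < ρ ∧ ∃ C : ℝ, ∀ k, ‖c k‖ ≤ C * ρ ^ k * M k}

/-- `L(M)`: all non-quasianalytic weight sequences `N ≥ M` with `n = N/k!` log-convex. -/
def LM (M : ℕ → ℝ) : Set (ℕ → ℝ) :=
  {N | IsWeightSeq N ∧ NonQuasianalytic N ∧ (∀ k, M k ≤ N k) ∧ LogConvexSeq (mseq N)}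

/-- A quasianalytic weight sequence `M` is intersectable if `Λ^{M} = ⋂_{N ∈ L(M)} Λ^{N}`. -/
def Intersectable (M : ℕ → ℝ) : Prop := Lambda M = ⋂ N ∈ LM M, Lambda N

open scoped Topology ContDiff fwdDiff Convolution

/-!
Fix a segment `t ↦ x + t • w`, `t ∈ [0, 1]`, and replace `f ^ j` and `f ^ (j + 1)` on it by their
Taylor polynomials `G` and `H` of order `n`. Since `(f ^ (j + 1)) ^ j = (f ^ j) ^ (j + 1)`, the
polynomial `H ^ j - G ^ (j + 1)` vanishes to order `n` at `0`, so by Schwarz's lemma it is tiny on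
small complex discs. There the regularized quotient `H Ḡ / (|G|² + τ²)` is well defined, it is close
to `f` on the real segment, and its `∂̄`-derivative is small in an integrated sense, as it is
controlled by the distances to the zeros of `G`. Subtracting a Cauchy transform makes it
holomorphic. This yields holomorphic approximations of `f` on discs of dyadic radii, and Cauchy's
estimates, summed over the scales, bound the differences of order `k ≈ n` of `f`.

When the length of the segment is adapted to `k`, moderate growth of `M`, log-convexity of `m` and
`m_k ^ (1 / k) → ∞` (a consequence of non-quasianalyticity) turn this bound into
`‖(Δ_[v])^[k] f x‖ ≤ B σ ^ k M_k ‖v‖ ^ k` for every `σ > 0`. Finally, mollification and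
polarization convert bounds on differences into smoothness and bounds on derivatives.
-/

section CauchyRiemann

/-- The Cauchy–Riemann operator `∂̄ = (∂ₓ + i ∂_y) / 2` on functions of a complex variable. -/
def dbar (g : ℂ → ℂ) (z : ℂ) : ℂ := (fderiv ℝ g z 1 + Complex.I * fderiv ℝ g z Complex.I) / 2

lemma differentiableAt_iff_dbar_eq_zero {g : ℂ → ℂ} {z : ℂ} (hg : DifferentiableAt ℝ g z) :
    DifferentiableAt ℂ g z ↔ dbar g z = 0 := by
  rw [differentiableAt_complex_iff_differentiableAt_real, smul_eq_mul, dbar,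
    div_eq_zero_iff, or_iff_left two_ne_zero]
  have hI : Complex.I * Complex.I = -1 := Complex.I_mul_I
  constructor
  · rintro ⟨-, h⟩
    linear_combination Complex.I * h + fderiv ℝ g z 1 * hI
  · intro h
    exact ⟨hg, by linear_combination -Complex.I * h + fderiv ℝ g z Complex.I * hI⟩

lemma dbar_sub {f g : ℂ → ℂ} {z : ℂ} (hf : DifferentiableAt ℝ f z) (hg : DifferentiableAt ℝ g z) :
    dbar (fun z => f z - g z) z = dbar f z - dbar g z := by
  simp only [dbar, fderiv_fun_sub hf hg, sub_apply]
  ring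

lemma dbar_const_mul {g : ℂ → ℂ} {z : ℂ} (c : ℂ) (hg : DifferentiableAt ℝ g z) :
    dbar (fun z => c * g z) z = c * dbar g z := by
  simp only [dbar, fderiv_const_mul hg, smul_apply, smul_eq_mul]
  ring

lemma dbar_mul {f g : ℂ → ℂ} {z : ℂ} (hf : DifferentiableAt ℝ f z) (hg : DifferentiableAt ℝ g z) :
    dbar (fun z => f z * g z) z = f z * dbar g z + dbar f z * g z := by
  simp only [dbar, fderiv_fun_mul hf hg, add_apply, smul_apply, smul_eq_mul]
  ring

lemma dbar_conj {g : ℂ → ℂ} {z : ℂ} (hg : DifferentiableAt ℂ g z) :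
    dbar (fun z => starRingEnd ℂ (g z)) z = starRingEnd ℂ (deriv g z) := by
  have hderiv : HasFDerivAt (fun z => starRingEnd ℂ (g z)) _ z :=
    (Complex.conjCLE : ℂ →L[ℝ] ℂ).hasFDerivAt.comp z (hg.hasDerivAt.hasFDerivAt.restrictScalars ℝ)
  rw [dbar, hderiv.fderiv]
  simp only [ContinuousLinearMap.comp_apply, ContinuousLinearMap.coe_restrictScalars',
    ContinuousLinearMap.toSpanSingleton_apply, smul_eq_mul, one_mul,
    ContinuousLinearEquiv.coe_coe, ContinuousAlgEquiv.coeCLE_apply, Complex.conjCAE_apply, map_mul,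
    Complex.conj_I, neg_mul, mul_neg]
  linear_combination -(starRingEnd ℂ (deriv g z) / 2) * Complex.I_mul_I

lemma dbar_comp_sub_left {g : ℂ → ℂ} {w z : ℂ} (hg : DifferentiableAt ℝ g (w - z)) :
    dbar (fun z => g (w - z)) z = -dbar g (w - z) := by
  have hderiv : HasFDerivAt (fun z => g (w - z)) _ z :=
    hg.hasFDerivAt.comp z ((hasFDerivAt_id (𝕜 := ℝ) z).const_sub w)
  rw [dbar, hderiv.fderiv, dbar]
  simp only [ContinuousLinearMap.comp_apply, neg_apply, ContinuousLinearMap.id_apply, map_neg]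
  ring

lemma dbar_div_circleMap (g : ℂ → ℂ) (z : ℂ) (θ : ℝ) :
    dbar g z / circleMap 0 1 θ =
      (fderiv ℝ g z (circleMap 0 1 θ) +
        Complex.I * fderiv ℝ g z (circleMap 0 1 θ * Complex.I)) / 2 := by
  set c : ℂ := (Real.cos θ : ℂ) with hc
  set s : ℂ := (Real.sin θ : ℂ) with hs
  have hdir : circleMap 0 1 θ = Real.cos θ • (1 : ℂ) + Real.sin θ • Complex.I := by
    simp [circleMap, Complex.exp_mul_I]
  have hdir' : circleMap 0 1 θ * Complex.I = Real.cos θ • Complex.I - Real.sin θ • (1 : ℂ) := by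
    rw [hdir]
    simp only [Complex.real_smul]
    linear_combination s * Complex.I_mul_I
  have htrig : s ^ 2 + c ^ 2 = 1 := by
    rw [hs, hc]
    exact_mod_cast Real.sin_sq_add_cos_sq θ
  rw [div_eq_iff (circleMap_ne_center one_ne_zero), hdir', hdir, map_sub, map_add,
    map_smul, map_smul, map_smul, map_smul, dbar]
  simp only [Complex.real_smul, ← hc, ← hs]
  set a := fderiv ℝ g z 1
  set b := fderiv ℝ g z Complex.I
  linear_combination -((a + Complex.I * b) / 2) * htrig +
    ((a * s ^ 2 - c * s * b) / 2) * Complex.I_mul_I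

lemma hasDerivAt_comp_circleMap_angle {g : ℂ → ℂ} (hg : Differentiable ℝ g) (r θ : ℝ) :
    HasDerivAt (fun θ => g (circleMap 0 r θ))
      (r * fderiv ℝ g (circleMap 0 r θ) (circleMap 0 1 θ * Complex.I)) θ := by
  have hdir : circleMap 0 r θ * Complex.I = r • (circleMap 0 1 θ * Complex.I) := by
    simp [circleMap, mul_assoc]
  have hderiv := (hg (circleMap 0 r θ)).hasFDerivAt.comp_hasDerivAt θ (hasDerivAt_circleMap 0 r θ)
  rwa [hdir, map_smul, Complex.real_smul] at hderiv

lemma hasDerivAt_comp_circleMap_radius {g : ℂ → ℂ} (hg : Differentiable ℝ g) (r θ : ℝ) :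
    HasDerivAt (fun r => g (circleMap 0 r θ))
      (fderiv ℝ g (circleMap 0 r θ) (circleMap 0 1 θ)) r := by
  have hray : HasDerivAt (fun r => circleMap 0 r θ) (circleMap 0 1 θ) r := by
    simpa [circleMap] using (hasDerivAt_id r).ofReal_comp.mul_const (Complex.exp (θ * Complex.I))
  exact (hg (circleMap 0 r θ)).hasFDerivAt.comp_hasDerivAt r hray

lemma integral_fderiv_angle_eq_zero {g : ℂ → ℂ} (hg : ContDiff ℝ 1 g) {r : ℝ} (hr : r ≠ 0) :
    ∫ θ in Ioo (-Real.pi) Real.pi, fderiv ℝ g (circleMap 0 r θ) (circleMap 0 1 θ * Complex.I) =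
      0 := by
  have := hg.continuous_fderiv one_ne_zero
  have hperiod : ∫ θ in (-Real.pi)..Real.pi,
      (r : ℂ) * fderiv ℝ g (circleMap 0 r θ) (circleMap 0 1 θ * Complex.I) = 0 := by
    rw [intervalIntegral.integral_eq_sub_of_hasDerivAt
      (fun θ _ => hasDerivAt_comp_circleMap_angle (hg.differentiable one_ne_zero) r θ)]
    · simp [circleMap]
    · exact Continuous.intervalIntegrable (by fun_prop) _ _
  rw [intervalIntegral.integral_const_mul, mul_eq_zero_iff_left (by exact_mod_cast hr),
    intervalIntegral.integral_of_le (by linarith [Real.pi_pos])] at hperiod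
  rwa [← integral_Ioc_eq_integral_Ioo]

lemma exists_pos_forall_fderiv_circleMap_eq_zero {g : ℂ → ℂ} (hg : HasCompactSupport g) :
    ∃ R, 0 < R ∧ ∀ r, R < r → ∀ θ, g (circleMap 0 r θ) = 0 ∧ fderiv ℝ g (circleMap 0 r θ) = 0 := by
  obtain ⟨R, hR, hsupp⟩ := hg.isCompact.isBounded.subset_closedBall_lt 0 0
  refine ⟨R, hR, fun r hr θ => ?_⟩
  have hmem : circleMap 0 r θ ∉ tsupport g := fun h => by
    have hle : |r| ≤ R := by simpa using hsupp h
    exact hle.not_gt (hr.trans_le (le_abs_self r))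
  exact ⟨image_eq_zero_of_notMem_tsupport hmem, fderiv_of_notMem_tsupport ℝ hmem⟩

lemma integral_fderiv_radius {g : ℂ → ℂ} (hg : ContDiff ℝ 1 g) (hsupp : HasCompactSupport g)
    (θ : ℝ) : ∫ r in Ioi (0 : ℝ), fderiv ℝ g (circleMap 0 r θ) (circleMap 0 1 θ) = -g 0 := by
  obtain ⟨R, -, hzero⟩ := exists_pos_forall_fderiv_circleMap_eq_zero hsupp
  have := hg.continuous_fderiv one_ne_zero
  have : Continuous fun r : ℝ => circleMap 0 r θ := by unfold circleMap; fun_prop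
  have hderiv := fun r => hasDerivAt_comp_circleMap_radius (hg.differentiable one_ne_zero) r θ
  have hint : IntegrableOn (fun r => fderiv ℝ g (circleMap 0 r θ) (circleMap 0 1 θ)) (Ioi 0) := by
    refine IntegrableOn.of_forall_sdiff_eq_zero (s := Icc 0 R)
      (Continuous.continuousOn (by fun_prop)).integrableOn_Icc measurableSet_Ioi fun r hr => ?_
    rw [(hzero r (not_le.mp fun h => hr.2 ⟨hr.1.le, h⟩) θ).2, zero_apply]
  have hlim : Tendsto (fun r => g (circleMap 0 r θ)) atTop (𝓝 0) :=
    tendsto_const_nhds.congr' <| (eventually_gt_atTop R).mono fun r hr => (hzero r hr θ).1.symm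
  rw [integral_Ioi_of_hasDerivAt_of_tendsto (hderiv 0).continuousAt.continuousWithinAt
    (fun r _ => hderiv r) hint hlim]
  simp

lemma integrableOn_fderiv_circleMap {g : ℂ → ℂ} (hg : ContDiff ℝ 1 g) (hsupp : HasCompactSupport g)
    (c : ℂ) :
    IntegrableOn (fun p : ℝ × ℝ => fderiv ℝ g (circleMap 0 p.1 p.2) (circleMap 0 1 p.2 * c))
      (Ioi 0 ×ˢ Ioo (-Real.pi) Real.pi) := by
  obtain ⟨R, -, hzero⟩ := exists_pos_forall_fderiv_circleMap_eq_zero hsupp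
  have := hg.continuous_fderiv one_ne_zero
  have : Continuous fun p : ℝ × ℝ => circleMap 0 p.1 p.2 := by unfold circleMap; fun_prop
  refine IntegrableOn.of_forall_sdiff_eq_zero (s := Icc 0 R ×ˢ Icc (-Real.pi) Real.pi)
    ((Continuous.continuousOn (by fun_prop)).integrableOn_compact
      (isCompact_Icc.prod isCompact_Icc)) (measurableSet_Ioi.prod measurableSet_Ioo) fun p hp => ?_
  obtain ⟨⟨hp₁, hp₂⟩, hp⟩ := hp
  rw [(hzero p.1 (not_le.mp fun h => hp ⟨⟨hp₁.le, h⟩, Ioo_subset_Icc_self hp₂⟩) p.2).2, zero_apply]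

/- In polar coordinates the integrand splits into a radial derivative, which integrates to `-g 0`
along each ray, and an angular derivative, which integrates to `0` along each circle. -/
theorem integral_dbar_div {g : ℂ → ℂ} (hg : ContDiff ℝ 1 g) (hsupp : HasCompactSupport g) :
    ∫ z : ℂ, dbar g z / z = -Real.pi * g 0 := by
  have hpolar : ∀ p ∈ Ioi (0 : ℝ) ×ˢ Ioo (-Real.pi) Real.pi,
      p.1 • (dbar g (Complex.polarCoord.symm p) / Complex.polarCoord.symm p) =
        (fderiv ℝ g (circleMap 0 p.1 p.2) (circleMap 0 1 p.2 * 1) +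
          Complex.I * fderiv ℝ g (circleMap 0 p.1 p.2) (circleMap 0 1 p.2 * Complex.I)) / 2 := by
    intro p hp
    have hp₁ : (p.1 : ℂ) ≠ 0 := by exact_mod_cast (show 0 < p.1 from hp.1).ne'
    have hsymm : Complex.polarCoord.symm p = circleMap 0 p.1 p.2 := by
      simp [circleMap, Complex.exp_mul_I]
    have hscale : circleMap 0 p.1 p.2 = p.1 * circleMap 0 1 p.2 := by simp [circleMap]
    rw [hsymm, mul_one, ← dbar_div_circleMap, Complex.real_smul]
    nth_rewrite 2 [hscale]
    field_simp
  have hradial := integrableOn_fderiv_circleMap hg hsupp 1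
  have hangular := integrableOn_fderiv_circleMap hg hsupp Complex.I
  rw [← Complex.integral_comp_polarCoord_symm, polarCoord_target,
    setIntegral_congr_fun (measurableSet_Ioi.prod measurableSet_Ioo) hpolar, integral_div,
    integral_add hradial (hangular.const_mul _), integral_const_mul, Measure.volume_eq_prod,
    setIntegral_prod _ hangular, ← Measure.prod_restrict,
    integral_prod_symm _ (by rwa [Measure.prod_restrict])]
  simp_rw [mul_one, integral_fderiv_radius hg hsupp]
  rw [setIntegral_congr_fun measurableSet_Ioi fun r hr =>
    integral_fderiv_angle_eq_zero hg (ne_of_gt hr)]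
  simp only [integral_const, Measure.real, MeasurableSet.univ, Measure.restrict_apply, univ_inter,
    Real.volume_Ioo, sub_neg_eq_add, nonneg_add_self_iff, Real.pi_pos.le, ENNReal.toReal_ofReal,
    smul_neg, Complex.real_smul, Complex.ofReal_add, mul_zero, add_zero, neg_mul]
  ring

/-- The solid Cauchy transform `w ↦ π⁻¹ ∫ V z / (w - z) dz`, which solves `∂̄ u = V`. -/
def cauchyTransform (V : ℂ → ℂ) (w : ℂ) : ℂ :=
  (Real.pi : ℂ)⁻¹ * ((fun z => z⁻¹) ⋆[ContinuousLinearMap.mul ℝ ℂ] V) w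

lemma locallyIntegrable_inv : LocallyIntegrable (fun z : ℂ => z⁻¹) :=
  locallyIntegrable_of_norm_le_rpow (C := 1) (α := 1) (by simp) (by simp)
    (Eventually.of_forall fun z => by simp [Real.rpow_neg_one]) (by fun_prop)

lemma hasFDerivAt_convolution_inv {V : ℂ → ℂ} (hV : ContDiff ℝ 1 V) (hsupp : HasCompactSupport V)
    (w : ℂ) :
    HasFDerivAt ((fun z => z⁻¹) ⋆[ContinuousLinearMap.mul ℝ ℂ] V)
      (((fun z => z⁻¹) ⋆[(ContinuousLinearMap.mul ℝ ℂ).precompR ℂ] fderiv ℝ V) w) w :=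
  hsupp.hasFDerivAt_convolution_right _ locallyIntegrable_inv hV w

lemma differentiable_cauchyTransform {V : ℂ → ℂ} (hV : ContDiff ℝ 1 V)
    (hsupp : HasCompactSupport V) : Differentiable ℝ (cauchyTransform V) := fun w =>
  (hasFDerivAt_convolution_inv hV hsupp w).differentiableAt.const_mul _

lemma dbar_cauchyTransform {V : ℂ → ℂ} (hV : ContDiff ℝ 1 V) (hsupp : HasCompactSupport V)
    (w : ℂ) : dbar (cauchyTransform V) w = V w := by
  have hVd := hV.differentiable one_ne_zero
  have hcont := hV.continuous_fderiv one_ne_zero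
  have hderiv := hasFDerivAt_convolution_inv hV hsupp w
  have hfderiv (v : ℂ) : fderiv ℝ ((fun z => z⁻¹) ⋆[ContinuousLinearMap.mul ℝ ℂ] V) w v =
      ∫ z : ℂ, z⁻¹ * fderiv ℝ V (w - z) v := by
    rw [hderiv.fderiv, convolution_precompR_apply _ locallyIntegrable_inv (hsupp.fderiv ℝ) hcont]
    rfl
  have hint (v : ℂ) : Integrable fun z : ℂ => z⁻¹ * fderiv ℝ V (w - z) v :=
    (hsupp.fderiv_apply (𝕜 := ℝ) v).convolutionExists_right (ContinuousLinearMap.mul ℝ ℂ)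
      locallyIntegrable_inv (by fun_prop) w
  have hpompeiu := integral_dbar_div (g := fun z => V (w - z)) (hV.comp (by fun_prop))
    (hsupp.comp_homeomorph (Homeomorph.subLeft w))
  have hpi : (Real.pi : ℂ) ≠ 0 := by exact_mod_cast Real.pi_ne_zero
  have hdbar : dbar ((fun z => z⁻¹) ⋆[ContinuousLinearMap.mul ℝ ℂ] V) w = Real.pi * V w := by
    rw [dbar, hfderiv, hfderiv, ← integral_const_mul,
      ← integral_add (hint 1) ((hint _).const_mul _), ← integral_div]
    simp only [dbar_comp_sub_left (hVd _), neg_div, integral_neg, sub_zero, neg_mul, neg_inj]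
      at hpompeiu
    rw [← hpompeiu]
    congr 1 with z
    rw [dbar]
    ring
  rw [show cauchyTransform V = fun w => (Real.pi : ℂ)⁻¹ * _ from rfl,
    dbar_const_mul _ hderiv.differentiableAt, hdbar, inv_mul_cancel_left₀ hpi]

lemma norm_cauchyTransform_le (V : ℂ → ℂ) (w : ℂ) :
    ‖cauchyTransform V w‖ ≤ ∫ z, ‖V z‖ * ‖z - w‖⁻¹ := by
  have hpi : ‖(Real.pi : ℂ)⁻¹‖ ≤ 1 := by
    rw [norm_inv, Complex.norm_real, Real.norm_of_nonneg Real.pi_pos.le]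
    exact inv_le_one_of_one_le₀ (by linarith [Real.pi_gt_three])
  calc ‖cauchyTransform V w‖
      ≤ ‖((fun z => z⁻¹) ⋆[ContinuousLinearMap.mul ℝ ℂ] V) w‖ := by
        rw [cauchyTransform, norm_mul]
        exact mul_le_of_le_one_left (norm_nonneg _) hpi
    _ ≤ ∫ z : ℂ, ‖z⁻¹ * V (w - z)‖ := norm_integral_le_integral_norm _
    _ = ∫ z, ‖V z‖ * ‖z - w‖⁻¹ := by
        rw [← integral_sub_left_eq_self _ volume w]
        simp [norm_sub_rev, mul_comm]

end CauchyRiemann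

section RieszKernel

variable {E : Type*} [NormedAddCommGroup E] [NormedSpace ℝ E] [FiniteDimensional ℝ E]
  [MeasurableSpace E] [BorelSpace E] {μ : Measure E} [μ.IsAddHaarMeasure]

lemma exists_setIntegral_norm_sub_rpow_le {p : ℝ} (hp : 0 ≤ p) (hpE : p < Module.finrank ℝ E) :
    ∃ K, ∀ α : E, IntegrableOn (fun z => ‖z - α‖ ^ (-p)) (Metric.closedBall 0 1) μ ∧
      ∫ z in Metric.closedBall 0 1, ‖z - α‖ ^ (-p) ∂μ ≤ K := by
  set Φ : E → ℝ := (Metric.ball 0 1).indicator fun z => ‖z‖ ^ (-p) with hΦ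
  have hΦ_int : Integrable Φ μ := by
    rw [integrable_indicator_iff measurableSet_ball]
    exact integrableOn_ball_of_norm_le_rpow (C := 1) (by exact_mod_cast hp.trans_lt hpE) hpE
      (Eventually.of_forall fun z => by simp [Real.abs_rpow_of_nonneg])
      (Measurable.aestronglyMeasurable (by fun_prop))
  have hΦ_nonneg (z : E) : 0 ≤ Φ z := indicator_nonneg (fun z _ => by positivity) z
  have hle (x : E) : ‖x‖ ^ (-p) ≤ Φ x + 1 := by
    by_cases hx : x ∈ Metric.ball (0 : E) 1
    · simp [hΦ, indicator_of_mem hx]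
    · rw [hΦ, indicator_of_notMem hx, zero_add]
      exact Real.rpow_le_one_of_one_le_of_nonpos (by simpa using hx) (by linarith)
  have hone : IntegrableOn (fun _ : E => (1 : ℝ)) (Metric.closedBall 0 1) μ :=
    integrableOn_const measure_closedBall_lt_top.ne
  refine ⟨∫ z, Φ z ∂μ + ∫ _ in Metric.closedBall (0 : E) 1, (1 : ℝ) ∂μ, fun α => ?_⟩
  have hΦα : Integrable (fun z => Φ (z - α)) μ := hΦ_int.comp_sub_right α
  have hint : IntegrableOn (fun z => ‖z - α‖ ^ (-p)) (Metric.closedBall 0 1) μ := by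
    refine (hΦα.integrableOn.add hone).mono' (Measurable.aestronglyMeasurable (by fun_prop))
      (Eventually.of_forall fun z => ?_)
    rw [Real.norm_of_nonneg (by positivity)]
    exact hle (z - α)
  refine ⟨hint, ?_⟩
  calc ∫ z in Metric.closedBall 0 1, ‖z - α‖ ^ (-p) ∂μ
      ≤ ∫ z in Metric.closedBall 0 1, (Φ (z - α) + 1) ∂μ :=
        integral_mono hint (hΦα.integrableOn.add hone) fun z => hle (z - α)
    _ = ∫ z in Metric.closedBall 0 1, Φ (z - α) ∂μ +
          ∫ _ in Metric.closedBall (0 : E) 1, (1 : ℝ) ∂μ :=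
        integral_add hΦα.integrableOn hone
    _ ≤ ∫ z, Φ (z - α) ∂μ + ∫ _ in Metric.closedBall (0 : E) 1, (1 : ℝ) ∂μ :=
        add_le_add_left (setIntegral_le_integral hΦα (Eventually.of_forall fun z => hΦ_nonneg _)) _
    _ = ∫ z, Φ z ∂μ + ∫ _ in Metric.closedBall (0 : E) 1, (1 : ℝ) ∂μ := by
        rw [integral_sub_right_eq_self Φ α]

end RieszKernel

section RegularizedQuotient

/-- The denominator `|g|² + τ²` of the regularized quotient. -/
def regDenom (g : ℂ) (τ : ℝ) : ℝ := ‖g‖ ^ 2 + τ ^ 2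

/-- The regularization `w ḡ / (|g|² + τ²)` at scale `τ` of the quotient `w / g`. -/
def regQuot (g w : ℂ) (τ : ℝ) : ℂ := w * starRingEnd ℂ g / regDenom g τ

lemma regDenom_pos (g : ℂ) {τ : ℝ} (hτ : τ ≠ 0) : 0 < regDenom g τ := by
  unfold regDenom
  positivity

lemma coe_regDenom (g : ℂ) (τ : ℝ) :
    (regDenom g τ : ℂ) = g * starRingEnd ℂ g + (τ : ℂ) ^ 2 := by
  rw [regDenom, Complex.mul_conj']
  push_cast
  rfl

lemma contDiff_coe_regDenom {G : ℂ → ℂ} {n : ℕ∞ω} (hG : ContDiff ℝ n G) (τ : ℝ) :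
    ContDiff ℝ n fun z => (regDenom (G z) τ : ℂ) := by
  simp_rw [coe_regDenom]
  exact (hG.mul (Complex.conjCLE.contDiff.comp hG)).add contDiff_const

lemma contDiff_inv_regDenom {G : ℂ → ℂ} {n : ℕ∞ω} (hG : ContDiff ℝ n G) {τ : ℝ} (hτ : τ ≠ 0) :
    ContDiff ℝ n fun z => (regDenom (G z) τ : ℂ)⁻¹ :=
  (contDiff_coe_regDenom hG τ).inv fun z => by exact_mod_cast (regDenom_pos (G z) hτ).ne'

lemma differentiable_regQuot {G H : ℂ → ℂ} (hG : Differentiable ℂ G) (hH : Differentiable ℂ H)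
    {τ : ℝ} (hτ : τ ≠ 0) : Differentiable ℝ fun z => regQuot (G z) (H z) τ := by
  have hGR : ContDiff ℝ 1 G := hG.contDiff.restrict_scalars ℝ
  have hHR : ContDiff ℝ 1 H := hH.contDiff.restrict_scalars ℝ
  exact ((hHR.mul (Complex.conjCLE.contDiff.comp hGR)).mul
    (contDiff_inv_regDenom hGR hτ)).differentiable one_ne_zero

lemma dbar_regQuot {G H : ℂ → ℂ} (hG : Differentiable ℂ G) (hH : Differentiable ℂ H) {τ : ℝ}
    (hτ : τ ≠ 0) (z : ℂ) :
    dbar (fun z => regQuot (G z) (H z) τ) z =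
      H z * starRingEnd ℂ (deriv G z) * τ ^ 2 / regDenom (G z) τ ^ 2 := by
  have hGR : ContDiff ℝ 1 G := hG.contDiff.restrict_scalars ℝ
  have hconj : DifferentiableAt ℝ (fun z => starRingEnd ℂ (G z)) z :=
    (Complex.conjCLE.contDiff.comp hGR).differentiable one_ne_zero z
  have hD (z : ℂ) : (regDenom (G z) τ : ℂ) ≠ 0 := by exact_mod_cast (regDenom_pos (G z) hτ).ne'
  have hdbar_conj_mul {F : ℂ → ℂ} (hF : Differentiable ℂ F) :
      dbar (fun z => F z * starRingEnd ℂ (G z)) z = F z * starRingEnd ℂ (deriv G z) := by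
    rw [dbar_mul (hF.restrictScalars ℝ z) hconj, dbar_conj (hG z),
      (differentiableAt_iff_dbar_eq_zero (hF.restrictScalars ℝ z)).mp (hF z), zero_mul, add_zero]
  have hdbarD : dbar (fun z => (regDenom (G z) τ : ℂ)) z = G z * starRingEnd ℂ (deriv G z) := by
    rw [← hdbar_conj_mul hG]
    simp only [coe_regDenom, dbar, fderiv_add_const]
  have hproduct := dbar_mul (differentiable_regQuot hG hH hτ z)
    ((contDiff_coe_regDenom hGR τ).differentiable one_ne_zero z)
  simp only [regQuot, div_mul_cancel₀ _ (hD _)] at hproduct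
  rw [hdbar_conj_mul hH, hdbarD] at hproduct
  have hDz := hD z
  have hDz' := coe_regDenom (G z) τ
  rw [eq_div_iff (pow_ne_zero 2 hDz)]
  field_simp at hproduct
  simp only [regQuot]
  linear_combination -hproduct + H z * starRingEnd ℂ (deriv G z) * hDz'

lemma contDiff_dbar_regQuot {G H : ℂ → ℂ} (hG : Differentiable ℂ G) (hH : Differentiable ℂ H)
    {τ : ℝ} (hτ : τ ≠ 0) : ContDiff ℝ 1 (dbar fun z => regQuot (G z) (H z) τ) := by
  have hGR : ContDiff ℝ 1 G := hG.contDiff.restrict_scalars ℝ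
  have hHR : ContDiff ℝ 1 H := hH.contDiff.restrict_scalars ℝ
  have hdG : ContDiff ℝ 1 (deriv G) := hG.deriv.contDiff.restrict_scalars ℝ
  simp_rw [funext (dbar_regQuot hG hH hτ), div_eq_mul_inv, ← inv_pow]
  exact ((hHR.mul (Complex.conjCLE.contDiff.comp hdG)).mul contDiff_const).mul
    ((contDiff_inv_regDenom hGR hτ).pow 2)

lemma exists_pow_eq_regDenom (g : ℂ) {j : ℕ} (hj : j ≠ 0) {s : ℝ} (hs : 0 < s) :
    ∃ b, s ≤ b ∧ b ^ (4 * j) = regDenom g (s ^ (2 * j)) ∧ ‖g‖ ≤ b ^ (2 * j) := by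
  have hD := regDenom_pos g (pow_ne_zero (2 * j) hs.ne')
  have h4j : 4 * j ≠ 0 := by omega
  obtain ⟨b, hb, hbD⟩ : ∃ b, 0 < b ∧ b ^ (4 * j) = regDenom g (s ^ (2 * j)) :=
    ⟨_, Real.rpow_pos_of_pos hD _, Real.rpow_inv_natCast_pow hD.le h4j⟩
  refine ⟨b, le_of_pow_le_pow_left₀ h4j hb.le ?_, hbD,
    le_of_pow_le_pow_left₀ two_ne_zero (by positivity) ?_⟩
  · rw [hbD, regDenom, ← pow_mul, show 2 * j * 2 = 4 * j by ring]
    linarith [sq_nonneg ‖g‖]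
  · rw [← pow_mul, show 2 * j * 2 = 4 * j by ring, hbD, regDenom]
    linarith [sq_nonneg (s ^ (2 * j))]

lemma norm_le_two_mul_of_norm_pow_sub_le {x y : ℂ} {j : ℕ} (hj : j ≠ 0) {B : ℝ} (hB : 0 ≤ B)
    (hy : ‖y‖ ≤ B ^ j) (hxy : ‖x ^ j - y‖ ≤ B ^ j) : ‖x‖ ≤ 2 * B := by
  refine le_of_pow_le_pow_left₀ hj (by positivity) ?_
  calc ‖x‖ ^ j ≤ ‖y‖ + ‖x ^ j - y‖ := by
        rw [← norm_pow]
        exact norm_le_norm_add_norm_sub' _ _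
    _ ≤ 2 * B ^ j := by linarith
    _ ≤ 2 ^ j * B ^ j := by
        gcongr
        exact le_self_pow₀ one_le_two hj
    _ = (2 * B) ^ j := (mul_pow 2 B j).symm

lemma norm_le_of_norm_pow_sub_pow_le {g w : ℂ} {j : ℕ} (hj : j ≠ 0) {s b : ℝ} (hs : 0 ≤ s)
    (hsb : s ≤ b) (hg : ‖g‖ ≤ b ^ (2 * j))
    (hgw : ‖w ^ j - g ^ (j + 1)‖ ≤ (s ^ (2 * j)) ^ (j + 1)) : ‖w‖ ≤ 2 * b ^ (2 * j + 2) := by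
  have hb : 0 ≤ b := hs.trans hsb
  have hpow : (b ^ (2 * j + 2)) ^ j = (b ^ (2 * j)) ^ (j + 1) := by ring
  refine norm_le_two_mul_of_norm_pow_sub_le hj (by positivity) ?_ (hgw.trans ?_)
  · rw [norm_pow, hpow]
    gcongr
  · rw [hpow]
    gcongr

lemma le_mul_rpow_of_le_of_le {x y A θ : ℝ} (hx : 0 ≤ x) (hA : 1 ≤ A) (hθ : 0 < θ) (hθ' : θ ≤ 1)
    (hxA : x ≤ A) (hxy : x ≤ y) : x ≤ A * y ^ θ := by
  calc x = x ^ (1 - θ) * x ^ θ := by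
        rw [← Real.rpow_add' hx (by norm_num), sub_add_cancel, Real.rpow_one]
    _ ≤ A ^ (1 - θ) * y ^ θ := by gcongr
    _ ≤ A ^ (1 : ℝ) * y ^ θ := by
        have hy : 0 ≤ y := hx.trans hxy
        exact mul_le_mul_of_nonneg_right (Real.rpow_le_rpow_of_exponent_le hA (by linarith))
          (by positivity)
    _ = A * y ^ θ := by rw [Real.rpow_one]

lemma one_sub_inv_two_mul_mem_Ioo {j : ℕ} (hj : j ≠ 0) :
    1 - ((2 * j : ℕ) : ℝ)⁻¹ ∈ Ioo (0 : ℝ) 1 := by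
  have h1 : ((2 * j : ℕ) : ℝ)⁻¹ < 1 := inv_lt_one_of_one_lt₀ (by exact_mod_cast (by omega))
  have h0 : 0 < ((2 * j : ℕ) : ℝ)⁻¹ := by positivity
  constructor <;> linarith

lemma norm_dbar_regQuot_le {g w d : ℂ} {j : ℕ} (hj : j ≠ 0) {s A S : ℝ} (hs : 0 < s) (hA : 1 ≤ A)
    (hS : 0 ≤ S) (hdA : ‖d‖ ≤ A) (hdg : ‖d‖ ≤ ‖g‖ * S)
    (hgw : ‖w ^ j - g ^ (j + 1)‖ ≤ (s ^ (2 * j)) ^ (j + 1)) :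
    ‖w * starRingEnd ℂ d * ((s ^ (2 * j) : ℝ) : ℂ) ^ 2 / (regDenom g (s ^ (2 * j)) : ℂ) ^ 2‖ ≤
      2 * A * s * S ^ (1 - ((2 * j : ℕ) : ℝ)⁻¹) := by
  obtain ⟨hθ, hθ'⟩ := one_sub_inv_two_mul_mem_Ioo hj
  obtain ⟨b, hsb, hbD, hgb⟩ := exists_pow_eq_regDenom g hj hs
  set θ := 1 - ((2 * j : ℕ) : ℝ)⁻¹ with hθ_def
  have hb : 0 < b := hs.trans_le hsb
  have hbθ : (b ^ (2 * j)) ^ θ = b ^ (2 * j - 1) := by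
    rw [← Real.rpow_natCast b, ← Real.rpow_mul hb.le, ← Real.rpow_natCast, hθ_def,
      Nat.cast_sub (by omega)]
    congr 1
    push_cast
    field_simp
  have hd : ‖d‖ ≤ A * (b ^ (2 * j - 1) * S ^ θ) := by
    rw [← hbθ, ← Real.mul_rpow (by positivity) hS]
    exact le_mul_rpow_of_le_of_le (norm_nonneg d) hA hθ hθ'.le hdA (hdg.trans (by gcongr))
  have hw := norm_le_of_norm_pow_sub_pow_le hj hs.le hsb hgb hgw
  have hs4 : s ^ (4 * j) ≤ s * b ^ (4 * j - 1) := by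
    rw [← Nat.sub_add_cancel (show 1 ≤ 4 * j by omega), pow_succ', Nat.add_sub_cancel]
    gcongr
  calc ‖w * starRingEnd ℂ d * ((s ^ (2 * j) : ℝ) : ℂ) ^ 2 / (regDenom g (s ^ (2 * j)) : ℂ) ^ 2‖
      = ‖w‖ * ‖d‖ * s ^ (4 * j) / b ^ (8 * j) := by
        rw [← hbD]
        simp only [norm_mul, norm_div, norm_pow, Complex.norm_real, RCLike.norm_conj,
          Real.norm_of_nonneg hs.le, Real.norm_of_nonneg hb.le]
        ring_nf
    _ ≤ 2 * b ^ (2 * j + 2) * (A * (b ^ (2 * j - 1) * S ^ θ)) * (s * b ^ (4 * j - 1)) /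
          b ^ (8 * j) := by gcongr
    _ = 2 * A * s * S ^ θ *
          (b ^ (2 * j + 2) * b ^ (2 * j - 1) * b ^ (4 * j - 1) / b ^ (8 * j)) := by ring
    _ = 2 * A * s * S ^ θ := by
        rw [← pow_add, ← pow_add, show 2 * j + 2 + (2 * j - 1) + (4 * j - 1) = 8 * j by omega,
          div_self (by positivity), mul_one]

lemma norm_eval_derivative_le {G : Polynomial ℂ} {z : ℂ} (hz : z ∉ G.roots) :
    ‖G.derivative.eval z‖ ≤ ‖G.eval z‖ * (G.roots.map fun α => ‖z - α‖⁻¹).sum := by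
  rcases eq_or_ne G 0 with rfl | hG
  · simp
  replace hz : G.eval z ≠ 0 := fun h => hz ((Polynomial.mem_roots hG).mpr h)
  rw [← div_le_iff₀' (norm_pos_iff.mpr hz), ← norm_div,
    (IsAlgClosed.splits G).eval_derivative_div_eval_of_ne_zero hz]
  refine (norm_multiset_sum_le _).trans_eq ?_
  simp [Multiset.map_map]

lemma rpow_multiset_sum_le {ι : Type*} (S : Multiset ι) {x : ι → ℝ} (hx : ∀ a, 0 ≤ x a) {θ : ℝ}
    (hθ : 0 < θ) (hθ' : θ ≤ 1) : (S.map x).sum ^ θ ≤ (S.map fun a => x a ^ θ).sum := by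
  induction S using Multiset.induction with
  | empty => simp [Real.zero_rpow hθ.ne']
  | cons a S ih =>
    have hsum : 0 ≤ (S.map x).sum :=
      Multiset.sum_nonneg fun y hy => by obtain ⟨i, -, rfl⟩ := Multiset.mem_map.mp hy; exact hx i
    simp only [Multiset.map_cons, Multiset.sum_cons]
    exact (Real.rpow_add_le_add_rpow (hx a) hsum hθ.le hθ').trans (by gcongr)

lemma rpow_neg_mul_inv_le {x y θ : ℝ} (hx : 0 ≤ x) (hy : 0 ≤ y) (hθ : 0 < θ) :
    x ^ (-θ) * y⁻¹ ≤ x ^ (-(1 + θ)) + y ^ (-(1 + θ)) := by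
  have hx' : 0 ≤ x ^ (-(1 + θ)) := by positivity
  have hy' : 0 ≤ y ^ (-(1 + θ)) := by positivity
  have hsplit {t : ℝ} (ht : 0 < t) : t ^ (-(1 + θ)) = t ^ (-θ) * t⁻¹ := by
    rw [neg_add_rev, ← sub_eq_add_neg, Real.rpow_sub ht, Real.rpow_one, div_eq_mul_inv]
  rcases hx.eq_or_lt with rfl | hx
  · rw [Real.zero_rpow (neg_ne_zero.mpr hθ.ne'), zero_mul]
    positivity
  rcases hy.eq_or_lt with rfl | hy
  · rw [inv_zero, mul_zero]
    positivity
  rcases le_total x y with hxy | hxy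
  · calc x ^ (-θ) * y⁻¹ ≤ x ^ (-θ) * x⁻¹ := by gcongr
      _ ≤ x ^ (-(1 + θ)) + y ^ (-(1 + θ)) := by rw [← hsplit hx]; linarith
  · calc x ^ (-θ) * y⁻¹ ≤ y ^ (-θ) * y⁻¹ :=
          mul_le_mul_of_nonneg_right (Real.rpow_le_rpow_of_nonpos hy hxy (by linarith))
            (by positivity)
      _ ≤ x ^ (-(1 + θ)) + y ^ (-(1 + θ)) := by rw [← hsplit hy]; linarith

lemma exists_setIntegral_sum_rpow_mul_inv_le {θ : ℝ} (hθ : θ ∈ Ioo (0 : ℝ) 1) :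
    ∃ K, 0 ≤ K ∧ ∀ (S : Multiset ℂ) (w : ℂ),
      IntegrableOn (fun z => (S.map fun α => ‖z - α‖ ^ (-θ)).sum * ‖z - w‖⁻¹)
        (Metric.closedBall 0 1) ∧
      ∫ z in Metric.closedBall 0 1, (S.map fun α => ‖z - α‖ ^ (-θ)).sum * ‖z - w‖⁻¹ ≤
        K * S.card := by
  obtain ⟨K, hK⟩ := exists_setIntegral_norm_sub_rpow_le (E := ℂ) (μ := volume) (p := 1 + θ)
    (by linarith [hθ.1]) (by rw [Complex.finrank_real_complex]; push_cast; linarith [hθ.2])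
  have hK₀ : 0 ≤ K := (integral_nonneg fun z => by positivity).trans (hK 0).2
  have hpair (α w : ℂ) :
      IntegrableOn (fun z => ‖z - α‖ ^ (-θ) * ‖z - w‖⁻¹) (Metric.closedBall 0 1) ∧
      ∫ z in Metric.closedBall 0 1, ‖z - α‖ ^ (-θ) * ‖z - w‖⁻¹ ≤ 2 * K := by
    have hle (z : ℂ) : ‖z - α‖ ^ (-θ) * ‖z - w‖⁻¹ ≤
        ‖z - α‖ ^ (-(1 + θ)) + ‖z - w‖ ^ (-(1 + θ)) :=
      rpow_neg_mul_inv_le (norm_nonneg _) (norm_nonneg _) hθ.1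
    have hsum := (hK α).1.add (hK w).1
    have hint : IntegrableOn (fun z => ‖z - α‖ ^ (-θ) * ‖z - w‖⁻¹) (Metric.closedBall 0 1) := by
      refine hsum.mono' (Measurable.aestronglyMeasurable (by fun_prop)) (.of_forall fun z => ?_)
      rw [Real.norm_of_nonneg (by positivity)]
      exact hle z
    refine ⟨hint, (integral_mono hint hsum hle).trans ?_⟩
    rw [Pi.add_def, integral_add (hK α).1 (hK w).1]
    linarith [(hK α).2, (hK w).2]
  refine ⟨2 * K, by positivity, fun S w => ?_⟩
  induction S using Multiset.induction with
  | empty => simp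
  | cons α S ih =>
    simp only [Multiset.map_cons, Multiset.sum_cons, Multiset.card_cons, add_mul]
    refine ⟨(hpair α w).1.add ih.1, ?_⟩
    rw [integral_add (hpair α w).1 ih.1]
    push_cast
    linarith [(hpair α w).2, ih.2]

/- Solve `∂̄u = χ ∂̄F` with a cut-off `χ` and take `F - u`. -/
lemma exists_differentiableOn_ball_norm_sub_le {F : ℂ → ℂ} (hF : Differentiable ℝ F)
    (hdF : ContDiff ℝ 1 (dbar F)) {r : ℝ} (hr : 0 < r) :
    ∃ f : ℂ → ℂ, DifferentiableOn ℂ f (Metric.ball 0 r) ∧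
      ∀ w, ‖f w - F w‖ ≤ ∫ z in Metric.closedBall 0 (2 * r), ‖dbar F z‖ * ‖z - w‖⁻¹ := by
  let χ : ContDiffBump (0 : ℂ) := ⟨r, 2 * r, hr, by linarith⟩
  set V : ℂ → ℂ := fun z => χ z • dbar F z with hV
  have hVc : ContDiff ℝ 1 V := χ.contDiff.smul hdF
  have hVs : HasCompactSupport V := χ.hasCompactSupport.smul_right
  have hu := differentiable_cauchyTransform hVc hVs
  refine ⟨fun z => F z - cauchyTransform V z, fun z hz => ?_, fun w => ?_⟩
  · refine ((differentiableAt_iff_dbar_eq_zero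
      ((hF z).fun_sub (hu z))).mpr ?_).differentiableWithinAt
    rw [dbar_sub (hF z) (hu z), dbar_cauchyTransform hVc hVs, hV]
    simp [χ.one_of_mem_closedBall (Metric.ball_subset_closedBall hz)]
  · have hV_zero (z : ℂ) (hz : z ∉ Metric.closedBall 0 (2 * r)) : V z = 0 := by
      simp [hV, χ.zero_of_le_dist (le_of_lt (by simpa using hz) : χ.rOut ≤ dist z 0)]
    have hkernel : IntegrableOn (fun z => ‖dbar F z‖ * ‖z - w‖⁻¹)
        (Metric.closedBall 0 (2 * r)) := by
      have hinv : IntegrableOn (fun z : ℂ => (z - w)⁻¹) (Metric.closedBall 0 (2 * r)) := by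
        have hpre := (measurePreserving_sub_right volume w).integrableOn_comp_preimage
          (measurableEmbedding_subRight w) (f := fun z => z⁻¹)
          (s := Metric.closedBall (-w) (2 * r))
        rw [show (· - w) ⁻¹' Metric.closedBall (-w) (2 * r) = Metric.closedBall 0 (2 * r) by
          ext z; simp [dist_eq_norm]] at hpre
        exact hpre.mpr (locallyIntegrable_inv.integrableOn_isCompact (isCompact_closedBall _ _))
      refine IntegrableOn.continuousOn_mul hdF.continuous.norm.continuousOn ?_
        (isCompact_closedBall 0 (2 * r))
      simpa only [IntegrableOn, norm_inv] using hinv.norm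
    calc ‖F w - cauchyTransform V w - F w‖ = ‖cauchyTransform V w‖ := by
          rw [sub_sub_cancel_left, norm_neg]
      _ ≤ ∫ z, ‖V z‖ * ‖z - w‖⁻¹ := norm_cauchyTransform_le V w
      _ = ∫ z in Metric.closedBall 0 (2 * r), ‖V z‖ * ‖z - w‖⁻¹ :=
          (setIntegral_eq_integral_of_forall_compl_eq_zero fun z hz => by
            simp [hV_zero z hz]).symm
      _ ≤ ∫ z in Metric.closedBall 0 (2 * r), ‖dbar F z‖ * ‖z - w‖⁻¹ := by
          refine integral_mono_of_nonneg (.of_forall fun z => by positivity) hkernel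
            (.of_forall fun z => ?_)
          refine mul_le_mul_of_nonneg_right ?_ (by positivity)
          rw [hV, norm_smul, Real.norm_of_nonneg χ.nonneg]
          exact mul_le_of_le_one_left (norm_nonneg _) χ.le_one

lemma norm_dbar_regQuot_eval_le {j : ℕ} (hj : j ≠ 0) {G : Polynomial ℂ} {H : ℂ → ℂ}
    (hH : Differentiable ℂ H) {A s : ℝ} (hA : 1 ≤ A) (hs : 0 < s) {z : ℂ} (hroot : z ∉ G.roots)
    (hG' : ‖G.derivative.eval z‖ ≤ A)
    (hGH : ‖H z ^ j - G.eval z ^ (j + 1)‖ ≤ (s ^ (2 * j)) ^ (j + 1)) :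
    ‖dbar (fun z => regQuot (G.eval z) (H z) (s ^ (2 * j))) z‖ ≤
      2 * A * s * (G.roots.map fun α => ‖z - α‖ ^ (-(1 - ((2 * j : ℕ) : ℝ)⁻¹))).sum := by
  obtain ⟨hθ, hθ'⟩ := one_sub_inv_two_mul_mem_Ioo hj
  have hsum : 0 ≤ (G.roots.map fun α => ‖z - α‖⁻¹).sum :=
    Multiset.sum_nonneg fun y hy => by obtain ⟨α, -, rfl⟩ := Multiset.mem_map.mp hy; positivity
  rw [dbar_regQuot G.differentiable hH (by positivity), G.deriv]
  refine (norm_dbar_regQuot_le hj hs hA hsum hG' (norm_eval_derivative_le hroot) hGH).trans ?_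
  gcongr
  refine (rpow_multiset_sum_le _ (fun α => by positivity) hθ hθ'.le).trans_eq ?_
  simp only [Real.rpow_neg (norm_nonneg _), Real.inv_rpow (norm_nonneg _)]

theorem exists_holomorphic_near_regQuot {j : ℕ} (hj : j ≠ 0) :
    ∃ K, 0 ≤ K ∧ ∀ (G : Polynomial ℂ) (H : ℂ → ℂ) (A s r : ℝ), Differentiable ℂ H → 1 ≤ A → 0 < s →
      0 < r → 2 * r ≤ 1 →
      (∀ z ∈ Metric.closedBall (0 : ℂ) (2 * r), ‖G.derivative.eval z‖ ≤ A ∧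
        ‖H z ^ j - G.eval z ^ (j + 1)‖ ≤ (s ^ (2 * j)) ^ (j + 1)) →
      ∃ F : ℂ → ℂ, DifferentiableOn ℂ F (Metric.ball 0 r) ∧
        ∀ z, ‖F z - regQuot (G.eval z) (H z) (s ^ (2 * j))‖ ≤ K * A * s * G.roots.card := by
  have hθ := one_sub_inv_two_mul_mem_Ioo hj
  obtain ⟨K, hK₀, hK⟩ := exists_setIntegral_sum_rpow_mul_inv_le hθ
  refine ⟨2 * K, by positivity, fun G H A s r hH hA hs hr hr1 hGH => ?_⟩
  have hτ : s ^ (2 * j) ≠ 0 := by positivity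
  have hG : Differentiable ℂ fun z => G.eval z := G.differentiable
  obtain ⟨F, hF, hFle⟩ := exists_differentiableOn_ball_norm_sub_le
    (differentiable_regQuot hG hH hτ) (contDiff_dbar_regQuot hG hH hτ) hr
  refine ⟨F, hF, fun w => (hFle w).trans ?_⟩
  set θ := 1 - ((2 * j : ℕ) : ℝ)⁻¹
  have hS (z : ℂ) : 0 ≤ (G.roots.map fun α => ‖z - α‖ ^ (-θ)).sum :=
    Multiset.sum_nonneg fun y hy => by obtain ⟨α, -, rfl⟩ := Multiset.mem_map.mp hy; positivity
  have hroots : ∀ᵐ z : ℂ, z ∉ G.roots := by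
    simpa only [Finset.mem_coe, Multiset.mem_toFinset] using
      G.roots.toFinset.countable_toSet.ae_notMem volume
  have hball : Metric.closedBall (0 : ℂ) (2 * r) ⊆ Metric.closedBall 0 1 :=
    Metric.closedBall_subset_closedBall hr1
  obtain ⟨hint, hle⟩ := hK G.roots w
  calc ∫ z in Metric.closedBall 0 (2 * r),
        ‖dbar (fun z => regQuot (G.eval z) (H z) (s ^ (2 * j))) z‖ * ‖z - w‖⁻¹
      ≤ ∫ z in Metric.closedBall 0 (2 * r),
          2 * A * s * ((G.roots.map fun α => ‖z - α‖ ^ (-θ)).sum * ‖z - w‖⁻¹) := by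
        refine integral_mono_of_nonneg (.of_forall fun z => by positivity)
          ((hint.mono_set hball).const_mul _) ?_
        filter_upwards [ae_restrict_mem Metric.isClosed_closedBall.measurableSet,
          ae_restrict_of_ae hroots] with z hz hzroot
        rw [← mul_assoc]
        exact mul_le_mul_of_nonneg_right
          (norm_dbar_regQuot_eval_le hj hH hA hs hzroot (hGH z hz).1 (hGH z hz).2) (by positivity)
    _ ≤ ∫ z in Metric.closedBall 0 1,
          2 * A * s * ((G.roots.map fun α => ‖z - α‖ ^ (-θ)).sum * ‖z - w‖⁻¹) :=
        setIntegral_mono_set (hint.const_mul _)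
          (.of_forall fun z => by have := hS z; positivity) (.of_forall hball)
    _ ≤ 2 * A * s * (K * G.roots.card) := by
        rw [integral_const_mul]
        gcongr
    _ = 2 * K * A * s * G.roots.card := by ring

lemma norm_regQuot (g w : ℂ) (τ : ℝ) : ‖regQuot g w τ‖ = ‖w‖ * ‖g‖ / regDenom g τ := by
  have hD : 0 ≤ regDenom g τ := by
    unfold regDenom
    positivity
  rw [regQuot, norm_div, norm_mul, RCLike.norm_conj, Complex.norm_real, Real.norm_of_nonneg hD]

lemma norm_regQuot_le {g w : ℂ} {j : ℕ} (hj : j ≠ 0) {s : ℝ} (hs : 0 < s)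
    (hgw : ‖w ^ j - g ^ (j + 1)‖ ≤ (s ^ (2 * j)) ^ (j + 1)) :
    ‖regQuot g w (s ^ (2 * j))‖ ≤ 2 * (1 + ‖g‖ + s ^ (2 * j)) := by
  obtain ⟨b, hsb, hbD, hgb⟩ := exists_pow_eq_regDenom g hj hs
  have hb : 0 < b := hs.trans_le hsb
  have hw := norm_le_of_norm_pow_sub_pow_le hj hs.le hsb hgb hgw
  have hb_pow : b ^ (2 * j) ≤ ‖g‖ + s ^ (2 * j) := by
    refine le_of_pow_le_pow_left₀ two_ne_zero (by positivity) ?_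
    rw [← pow_mul, show 2 * j * 2 = 4 * j by ring, hbD, regDenom, add_sq]
    linarith [show 0 ≤ 2 * ‖g‖ * s ^ (2 * j) by positivity]
  have hb_sq : b ^ 2 ≤ 1 + ‖g‖ + s ^ (2 * j) := by
    rcases le_total b 1 with h | h
    · linarith [pow_le_one₀ hb.le h (n := 2), show 0 < ‖g‖ + s ^ (2 * j) by positivity]
    · linarith [pow_le_pow_right₀ h (show 2 ≤ 2 * j by omega)]
  rw [norm_regQuot, ← hbD, div_le_iff₀ (by positivity)]
  calc ‖w‖ * ‖g‖ ≤ 2 * b ^ (2 * j + 2) * b ^ (2 * j) := by gcongr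
    _ = 2 * b ^ 2 * b ^ (4 * j) := by ring
    _ ≤ 2 * (1 + ‖g‖ + s ^ (2 * j)) * b ^ (4 * j) := by gcongr

lemma sq_mul_pow_div_pow_le {s b : ℝ} (hs : 0 < s) (hsb : s ≤ b) {n : ℕ} (hn : 2 ≤ n) :
    b ^ 2 * s ^ n / b ^ n ≤ s ^ 2 := by
  obtain ⟨m, rfl⟩ := Nat.exists_eq_add_of_le hn
  have hb : 0 < b := hs.trans_le hsb
  rw [div_le_iff₀ (by positivity)]
  calc b ^ 2 * s ^ (2 + m) = b ^ 2 * s ^ 2 * s ^ m := by ring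
    _ ≤ b ^ 2 * s ^ 2 * b ^ m := by gcongr
    _ = s ^ 2 * b ^ (2 + m) := by ring

lemma norm_regQuot_sub_regQuot_le {g w : ℂ} {j : ℕ} (hj : j ≠ 0) {s s' : ℝ} (hs' : 0 < s')
    (hss' : s' ≤ s) (hgw : ‖w ^ j - g ^ (j + 1)‖ ≤ (s' ^ (2 * j)) ^ (j + 1)) :
    ‖regQuot g w (s ^ (2 * j)) - regQuot g w (s' ^ (2 * j))‖ ≤ 2 * s ^ 2 := by
  have hs : 0 < s := hs'.trans_le hss'
  obtain ⟨b, hsb, hbD, -⟩ := exists_pow_eq_regDenom g hj hs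
  obtain ⟨b', hsb', hbD', hgb'⟩ := exists_pow_eq_regDenom g hj hs'
  have hb : 0 < b := hs.trans_le hsb
  have hb' : 0 < b' := hs'.trans_le hsb'
  have hw := norm_le_of_norm_pow_sub_pow_le hj hs'.le hsb' hgb' hgw
  have hsub : b ^ (4 * j) - b' ^ (4 * j) = s ^ (4 * j) - s' ^ (4 * j) := by
    rw [hbD, hbD', regDenom, regDenom]
    ring
  have hpow : s' ^ (4 * j) ≤ s ^ (4 * j) := by gcongr
  have hbb' : b' ≤ b := le_of_pow_le_pow_left₀ (by omega : 4 * j ≠ 0) hb.le (by linarith)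
  have hdiff : regQuot g w (s ^ (2 * j)) - regQuot g w (s' ^ (2 * j)) =
      w * starRingEnd ℂ g * ((b ^ (4 * j))⁻¹ - (b' ^ (4 * j))⁻¹ : ℝ) := by
    simp only [regQuot, ← hbD, ← hbD']
    push_cast
    ring
  have hinv : |(b ^ (4 * j))⁻¹ - (b' ^ (4 * j))⁻¹| ≤
      s ^ (4 * j) / (b ^ (4 * j) * b' ^ (4 * j)) := by
    rw [inv_sub_inv (by positivity) (by positivity), abs_div,
      abs_of_pos (show 0 < b ^ (4 * j) * b' ^ (4 * j) by positivity)]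
    gcongr
    rw [abs_sub_comm, hsub, abs_of_nonneg (by linarith)]
    linarith [pow_pos hs' (4 * j)]
  rw [hdiff, norm_mul, norm_mul, RCLike.norm_conj, Complex.norm_real, Real.norm_eq_abs]
  calc ‖w‖ * ‖g‖ * |(b ^ (4 * j))⁻¹ - (b' ^ (4 * j))⁻¹|
      ≤ 2 * b' ^ (2 * j + 2) * b' ^ (2 * j) * (s ^ (4 * j) / (b ^ (4 * j) * b' ^ (4 * j))) := by
        gcongr
    _ = 2 * (b' ^ 2 * s ^ (4 * j) / b ^ (4 * j)) := by
        rw [show 4 * j = 2 * j + 2 * j by ring]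
        field_simp
        ring
    _ ≤ 2 * (b ^ 2 * s ^ (4 * j) / b ^ (4 * j)) := by gcongr
    _ ≤ 2 * s ^ 2 := by
        gcongr
        exact sq_mul_pow_div_pow_le hs hsb (by omega)

lemma norm_sub_regQuot_le {g w y : ℂ} {j : ℕ} (hj : j ≠ 0) {s δ A : ℝ} (hs : 0 < s)
    (hδ : δ ≤ s ^ (2 * j)) (hg : ‖y ^ j - g‖ ≤ δ) (hw : ‖y ^ (j + 1) - w‖ ≤ δ) (hy : ‖y‖ ≤ A) :
    ‖y - regQuot g w (s ^ (2 * j))‖ ≤ δ * (1 + A) / s ^ (2 * j) + 2 * s ^ 2 := by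
  obtain ⟨b, hsb, hbD, hgb⟩ := exists_pow_eq_regDenom g hj hs
  have hb : 0 < b := hs.trans_le hsb
  have hA : 0 ≤ A := (norm_nonneg y).trans hy
  have hδ₀ : 0 ≤ δ := (norm_nonneg _).trans hg
  have hD := regDenom_pos g (pow_ne_zero (2 * j) hs.ne')
  have hquot : y - regQuot g w (s ^ (2 * j)) =
      ((y * g - w) * starRingEnd ℂ g + y * ((s ^ (4 * j) : ℝ) : ℂ)) /
        (regDenom g (s ^ (2 * j)) : ℂ) := by
    have hD' : (regDenom g (s ^ (2 * j)) : ℂ) ≠ 0 := by exact_mod_cast hD.ne'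
    rw [regQuot, eq_div_iff hD', sub_mul, div_mul_cancel₀ _ hD', coe_regDenom]
    push_cast
    ring
  have hyb : ‖y‖ ≤ 2 * b ^ 2 := by
    refine norm_le_two_mul_of_norm_pow_sub_le hj (by positivity) (hgb.trans_eq (pow_mul b 2 j)) ?_
    exact (hg.trans hδ).trans ((pow_le_pow_left₀ hs.le hsb _).trans_eq (pow_mul b 2 j))
  have hyg : ‖y * g - w‖ ≤ δ * (1 + A) := by
    calc ‖y * g - w‖ = ‖(y ^ (j + 1) - w) - y * (y ^ j - g)‖ := by
          congr 1
          ring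
      _ ≤ ‖y ^ (j + 1) - w‖ + ‖y‖ * ‖y ^ j - g‖ := (norm_sub_le _ _).trans_eq (by rw [norm_mul])
      _ ≤ δ + A * δ := by gcongr
      _ = δ * (1 + A) := by ring
  have hgD : ‖g‖ / regDenom g (s ^ (2 * j)) ≤ 1 / s ^ (2 * j) := by
    rw [div_le_div_iff₀ hD (by positivity), regDenom]
    linarith [two_mul_le_add_sq ‖g‖ (s ^ (2 * j)), show 0 ≤ ‖g‖ * s ^ (2 * j) by positivity]
  rw [hquot, norm_div, Complex.norm_real, Real.norm_of_nonneg hD.le]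
  calc ‖(y * g - w) * starRingEnd ℂ g + y * ((s ^ (4 * j) : ℝ) : ℂ)‖ / regDenom g (s ^ (2 * j))
      ≤ (‖y * g - w‖ * ‖g‖ + ‖y‖ * s ^ (4 * j)) / regDenom g (s ^ (2 * j)) := by
        gcongr
        refine (norm_add_le _ _).trans_eq ?_
        rw [norm_mul, norm_mul, RCLike.norm_conj, Complex.norm_real,
          Real.norm_of_nonneg (by positivity)]
    _ ≤ (δ * (1 + A) * ‖g‖ + 2 * b ^ 2 * s ^ (4 * j)) / regDenom g (s ^ (2 * j)) := by gcongr
    _ = δ * (1 + A) * (‖g‖ / regDenom g (s ^ (2 * j))) +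
          2 * (b ^ 2 * s ^ (4 * j) / b ^ (4 * j)) := by rw [hbD]; ring
    _ ≤ δ * (1 + A) * (1 / s ^ (2 * j)) + 2 * s ^ 2 := by
        have := sq_mul_pow_div_pow_le hs hsb (show 2 ≤ 4 * j by omega)
        gcongr
    _ = δ * (1 + A) / s ^ (2 * j) + 2 * s ^ 2 := by ring

end RegularizedQuotient

section ForwardDifferences

variable {E F : Type*} [AddCommGroup E] [NormedAddCommGroup F]

lemma norm_fwdDiff_iter_le {f : E → F} {x v : E} {k : ℕ} {C : ℝ}
    (hf : ∀ i ≤ k, ‖f (x + i • v)‖ ≤ C) : ‖(Δ_[v])^[k] f x‖ ≤ 2 ^ k * C := by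
  rw [fwdDiff_iter_eq_sum_shift]
  calc ‖∑ i ∈ Finset.range (k + 1), ((-1 : ℤ) ^ (k - i) * k.choose i) • f (x + i • v)‖
      ≤ ∑ i ∈ Finset.range (k + 1), (k.choose i : ℝ) * C := by
        refine norm_sum_le_of_le _ fun i hi => ?_
        have hsign : ((-1 : ℤ) ^ (k - i) * k.choose i).natAbs = k.choose i := by
          simp [Int.natAbs_mul, Int.natAbs_pow]
        refine (norm_zsmul_le _ _).trans ?_
        rw [Int.norm_eq_abs, ← Int.cast_abs, Int.abs_eq_natAbs, hsign, Int.cast_natCast]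
        gcongr
        exact hf i (Finset.mem_range_succ_iff.mp hi)
    _ = 2 ^ k * C := by
        rw [← Finset.sum_mul, ← Nat.cast_sum, Nat.sum_range_choose]
        push_cast
        rfl

lemma fwdDiff_iter_congr {f g : E → F} {x v : E} {k : ℕ}
    (hfg : ∀ i ≤ k, f (x + i • v) = g (x + i • v)) : (Δ_[v])^[k] f x = (Δ_[v])^[k] g x := by
  simp_rw [fwdDiff_iter_eq_sum_shift]
  exact Finset.sum_congr rfl fun i hi => by rw [hfg i (Finset.mem_range_succ_iff.mp hi)]

lemma fwdDiff_iter_comp_line [Module ℝ E] (f : E → F) (x v : E) (s : ℝ) (k : ℕ) :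
    (Δ_[s])^[k] (fun t : ℝ => f (x + t • v)) 0 = (Δ_[s • v])^[k] f x := by
  simp_rw [fwdDiff_iter_eq_sum_shift, zero_add, smul_assoc]

variable [NormedSpace ℝ F]

lemma hasDerivAt_fwdDiff_iter {f f' : ℝ → F} {x h : ℝ} {k : ℕ}
    (hf : ∀ i ≤ k, HasDerivAt f (f' (x + i • h)) (x + i • h)) :
    HasDerivAt ((Δ_[h])^[k] f) ((Δ_[h])^[k] f' x) x := by
  have hsum : (Δ_[h])^[k] f = fun y => ∑ i ∈ Finset.range (k + 1),
      ((-1 : ℤ) ^ (k - i) * k.choose i) • f (y + i • h) :=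
    funext fun y => fwdDiff_iter_eq_sum_shift _ _ _ _
  rw [hsum, fwdDiff_iter_eq_sum_shift]
  refine HasDerivAt.fun_sum fun i hi => ?_
  simp_rw [← Int.cast_smul_eq_zsmul ℝ]
  exact ((hf i (Finset.mem_range_succ_iff.mp hi)).comp_add_const x (i • h)).const_smul _

/- The mean value inequality, applied `k` times: each difference trades one step `h` for one
derivative. -/
lemma norm_fwdDiff_iter_sub_le {φ : ℕ → ℝ → F} {h ε : ℝ} (hh : 0 ≤ h) {c : F} {k : ℕ} {x : ℝ}
    (hφ : ∀ i < k, ∀ t ∈ Icc x (x + k * h), HasDerivAt (φ i) (φ (i + 1) t) t)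
    (hc : ∀ t ∈ Icc x (x + k * h), ‖φ k t - c‖ ≤ ε) :
    ‖(Δ_[h])^[k] (φ 0) x - h ^ k • c‖ ≤ h ^ k * ε := by
  induction k generalizing φ x with
  | zero => simpa using hc x (by simp)
  | succ k ih =>
    have hsub : ∀ t ∈ Icc x (x + h), Icc t (t + k * h) ⊆ Icc x (x + (k + 1 : ℕ) * h) := by
      intro t ht s hs
      push_cast
      exact ⟨ht.1.trans hs.1, by linarith [hs.2, ht.2]⟩
    have hderiv : ∀ t ∈ Icc x (x + h),
        HasDerivAt ((Δ_[h])^[k] (φ 0)) ((Δ_[h])^[k] (φ 1) t) t := fun t ht =>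
      hasDerivAt_fwdDiff_iter fun i hi => hφ 0 k.succ_pos _ <| hsub t ht
        ⟨by rw [nsmul_eq_mul]; nlinarith [i.cast_nonneg (α := ℝ)],
          by rw [nsmul_eq_mul]; gcongr⟩
    have hbound : ∀ t ∈ Icc x (x + h), ‖(Δ_[h])^[k] (φ 1) t - h ^ k • c‖ ≤ h ^ k * ε :=
      fun t ht => ih (φ := fun i => φ (i + 1))
        (fun i hi s hs => hφ (i + 1) (by omega) s (hsub t ht hs))
        (fun s hs => hc s (hsub t ht hs))
    have hmvt := (convex_Icc x (x + h)).norm_image_sub_le_of_norm_hasDerivWithin_le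
      (f := fun t => (Δ_[h])^[k] (φ 0) t - t • h ^ k • c) (C := h ^ k * ε)
      (fun t ht => ((hderiv t ht).sub
        ((hasDerivAt_id t).smul_const (h ^ k • c))).hasDerivWithinAt)
      (fun t ht => by simpa using hbound t ht)
      (left_mem_Icc.mpr (by linarith)) (right_mem_Icc.mpr (by linarith))
    rw [Function.iterate_succ_apply', fwdDiff]
    calc ‖(Δ_[h])^[k] (φ 0) (x + h) - (Δ_[h])^[k] (φ 0) x - h ^ (k + 1) • c‖
        = ‖(Δ_[h])^[k] (φ 0) (x + h) - (x + h) • h ^ k • c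
            - ((Δ_[h])^[k] (φ 0) x - x • h ^ k • c)‖ := by
          rw [pow_succ', mul_smul, add_smul]
          congr 1
          abel
      _ ≤ h ^ k * ε * ‖x + h - x‖ := hmvt
      _ = h ^ (k + 1) * ε := by
          rw [add_sub_cancel_left, Real.norm_of_nonneg hh]
          ring

end ForwardDifferences

section DifferencesOnNormedGroups

variable {E F : Type*} [NormedAddCommGroup E] [NormedAddCommGroup F]

lemma continuousOn_of_norm_fwdDiff_le {f : E → F} {s : Set E} {B δ : ℝ} (hδ : 0 < δ)
    (hf : ∀ x ∈ s, ∀ v : E, ‖v‖ < δ → ‖Δ_[v] f x‖ ≤ B * ‖v‖) : ContinuousOn f s := by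
  refine fun x hx => ContinuousAt.continuousWithinAt ?_
  exact continuousAt_of_locally_lipschitz hδ B fun y hy => by
    simpa [fwdDiff, dist_eq_norm] using hf x hx (y - x) (by rwa [← dist_eq_norm])

lemma fwdDiff_iter_indicator_ball {f : E → F} {c x v : E} {R : ℝ} {k : ℕ}
    (hx : dist x c + k * ‖v‖ < R) :
    (Δ_[v])^[k] ((Metric.ball c R).indicator f) x = (Δ_[v])^[k] f x := by
  refine fwdDiff_iter_congr fun i hi => indicator_of_mem (mem_ball_iff_norm.mpr ?_) f
  have hi : ‖i • v‖ ≤ k * ‖v‖ := norm_nsmul_le.trans (by gcongr)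
  rw [dist_eq_norm] at hx
  rw [add_sub_right_comm]
  exact (norm_add_le _ _).trans_lt (by linarith)

lemma integrable_fwdDiff_iter [MeasurableSpace E] [BorelSpace E] {μ : Measure E}
    [μ.IsAddRightInvariant] {G : E → F} (hG : Integrable G μ) (v : E) (k : ℕ) :
    Integrable ((Δ_[v])^[k] G) μ := by
  induction k generalizing G with
  | zero => exact hG
  | succ _ ih => exact ih ((hG.comp_add_right v).sub hG)

lemma integrable_indicator_ball_of_norm_fwdDiff_le [MeasurableSpace E] [BorelSpace E]
    [ProperSpace E] {μ : Measure E} [IsFiniteMeasureOnCompacts μ] {f : E → F} {c : E} {R B₀ B₁ : ℝ}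
    (hR : 0 < R) (hf₀ : ∀ x ∈ Metric.ball c R, ‖f x‖ ≤ B₀)
    (hf₁ : ∀ x ∈ Metric.ball c R, ∀ v, ‖v‖ < R → ‖Δ_[v] f x‖ ≤ B₁ * ‖v‖) :
    Integrable ((Metric.ball c R).indicator f) μ := by
  have hcont : ContinuousOn f (Metric.ball c R) := continuousOn_of_norm_fwdDiff_le hR hf₁
  refine (integrable_indicator_iff measurableSet_ball).mpr <| IntegrableOn.of_bound
    measure_ball_lt_top (hcont.aestronglyMeasurable measurableSet_ball) B₀ ?_
  filter_upwards [ae_restrict_mem measurableSet_ball] with x hx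
  exact hf₀ x hx

end DifferencesOnNormedGroups

section Lines

variable {E F : Type*} [NormedAddCommGroup E] [NormedSpace ℝ E] [NormedAddCommGroup F]
  [NormedSpace ℝ F]

lemma hasDerivAt_iteratedFDeriv_line {g : E → F} {x v : E} {t : ℝ} {i : ℕ}
    (hg : ContDiffAt ℝ (i + 1 : ℕ) g (x + t • v)) :
    HasDerivAt (fun s : ℝ => iteratedFDeriv ℝ i g (x + s • v) fun _ => v)
      (iteratedFDeriv ℝ (i + 1) g (x + t • v) fun _ => v) t := by
  have hline : HasDerivAt (fun s : ℝ => x + s • v) v t := by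
    simpa using ((hasDerivAt_id t).smul_const v).const_add x
  have hdiff : DifferentiableAt ℝ (iteratedFDeriv ℝ i g) (x + t • v) :=
    hg.differentiableAt_iteratedFDeriv (by exact_mod_cast i.lt_succ_self)
  exact (ContinuousMultilinearMap.apply ℝ (fun _ : Fin i => E) F fun _ => v).hasFDerivAt
    |>.comp_hasDerivAt t (hdiff.hasFDerivAt.comp_hasDerivAt t hline)

lemma norm_iteratedFDeriv_diag_le {g : E → F} {k : ℕ} (hg : ContDiff ℝ k g) {x v : E} {B : ℝ}
    (hB : ∀ᶠ s : ℝ in 𝓝[>] 0, ‖(Δ_[s • v])^[k] g x‖ ≤ B * ‖s • v‖ ^ k) :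
    ‖iteratedFDeriv ℝ k g x fun _ => v‖ ≤ B * ‖v‖ ^ k := by
  set φ : ℕ → ℝ → F := fun i t => iteratedFDeriv ℝ i g (x + t • v) fun _ => v with hφ
  have hφ_deriv : ∀ i < k, ∀ t, HasDerivAt (φ i) (φ (i + 1) t) t := fun i hi t =>
    hasDerivAt_iteratedFDeriv_line (hg.contDiffAt.of_le (by exact_mod_cast hi))
  have hφ_cont : Continuous (φ k) :=
    (ContinuousMultilinearMap.apply ℝ (fun _ : Fin k => E) F fun _ => v).continuous.comp
      ((hg.continuous_iteratedFDeriv le_rfl).comp (by fun_prop))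
  have hφ_zero : φ k 0 = iteratedFDeriv ℝ k g x fun _ => v := by simp [hφ]
  have hg_line : (fun t : ℝ => g (x + t • v)) = φ 0 := by
    ext t
    simp [hφ]
  rw [← hφ_zero]
  refine le_of_forall_pos_le_add fun ε hε => ?_
  have hnear : ∀ᶠ s : ℝ in 𝓝[>] 0, ∀ t ∈ Icc 0 (0 + k * s), ‖φ k t - φ k 0‖ ≤ ε := by
    obtain ⟨δ, hδ, hδε⟩ := Metric.continuousAt_iff.mp hφ_cont.continuousAt ε hε
    have hsmall : ∀ᶠ s : ℝ in 𝓝 0, k * s < δ :=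
      (by fun_prop : ContinuousAt (fun s : ℝ => k * s) 0).eventually_lt continuousAt_const
        (by simpa using hδ)
    filter_upwards [hsmall.filter_mono nhdsWithin_le_nhds] with s hs t ht
    rw [← dist_eq_norm]
    refine (hδε ?_).le
    rw [dist_zero_right, Real.norm_of_nonneg ht.1]
    linarith [ht.2]
  obtain ⟨s, hsB, hs, hs_pos : 0 < s⟩ := (hB.and (hnear.and self_mem_nhdsWithin)).exists
  have hdiff := norm_fwdDiff_iter_sub_le hs_pos.le (fun i hi t _ => hφ_deriv i hi t) hs
  rw [← hg_line, fwdDiff_iter_comp_line] at hdiff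
  rw [norm_smul, Real.norm_of_nonneg hs_pos.le, mul_pow] at hsB
  have hmul : s ^ k * ‖φ k 0‖ ≤ s ^ k * (B * ‖v‖ ^ k + ε) := by
    have htri := norm_sub_le ((Δ_[s • v])^[k] g x) ((Δ_[s • v])^[k] g x - s ^ k • φ k 0)
    rw [sub_sub_cancel, norm_smul, norm_pow, Real.norm_of_nonneg hs_pos.le] at htri
    linarith
  exact le_of_mul_le_mul_left hmul (by positivity)

end Lines

section HolomorphicApproximation

lemma norm_fwdDiff_iter_le_of_differentiableOn {D : ℂ → ℂ} {ρ S h : ℝ} {k : ℕ} (hρ : 0 < ρ)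
    (hh : 0 ≤ h) (hD : DifferentiableOn ℂ D (Metric.ball 0 ρ))
    (hS : ∀ z ∈ Metric.ball (0 : ℂ) ρ, ‖D z‖ ≤ S) (hkh : k * h ≤ ρ / 2) :
    ‖(Δ_[h])^[k] (fun t : ℝ => D t) 0‖ ≤ S * (3 * (k * h) / ρ) ^ k := by
  have hball : ∀ t ∈ Icc 0 (0 + k * h), Metric.closedBall (t : ℂ) (ρ / 3) ⊆ Metric.ball 0 ρ := by
    intro t ht
    refine Metric.closedBall_subset_ball' ?_
    rw [dist_zero_right, Complex.norm_real, Real.norm_of_nonneg ht.1]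
    linarith [ht.2]
  have hderiv : ∀ i < k, ∀ t ∈ Icc 0 (0 + k * h),
      HasDerivAt (fun s : ℝ => iteratedDeriv i D s) (iteratedDeriv (i + 1) D t) t := by
    intro i _ t ht
    have hanalytic := (hD.analyticOnNhd Metric.isOpen_ball).iterated_deriv i t
      (hball t ht (Metric.mem_closedBall_self (by positivity)))
    rw [← iteratedDeriv_eq_iterate] at hanalytic
    rw [iteratedDeriv_succ]
    exact hanalytic.differentiableAt.hasDerivAt.comp_ofReal
  have hcauchy : ∀ t ∈ Icc 0 (0 + k * h),
      ‖iteratedDeriv k D t - 0‖ ≤ k.factorial * S / (ρ / 3) ^ k := by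
    intro t ht
    rw [sub_zero]
    exact Complex.norm_iteratedDeriv_le_of_forall_mem_sphere_norm_le k (by positivity)
      ((hD.mono (hball t ht)).diffContOnCl_ball subset_rfl)
      fun z hz => hS z (hball t ht (Metric.sphere_subset_closedBall hz))
  have hS_nonneg : 0 ≤ S := (norm_nonneg _).trans (hS 0 (Metric.mem_ball_self hρ))
  have hdiff := norm_fwdDiff_iter_sub_le hh hderiv hcauchy
  simp only [smul_zero, sub_zero, iteratedDeriv_zero] at hdiff
  calc ‖(Δ_[h])^[k] (fun t : ℝ => D t) 0‖ ≤ h ^ k * (k.factorial * S / (ρ / 3) ^ k) := hdiff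
    _ ≤ h ^ k * ((k : ℝ) ^ k * S / (ρ / 3) ^ k) := by
        gcongr
        exact_mod_cast k.factorial_le_pow
    _ = S * (3 * (k * h) / ρ) ^ k := by
        simp only [div_pow, mul_pow]
        field_simp

/- On the `i`-th disc the Cauchy estimate gains `(1 / radius) ^ k`, and the successive differences
are smaller by one more power of the radius: the contributions form a geometric series. -/
lemma norm_fwdDiff_iter_le_of_dyadic {F : ℕ → ℂ → ℂ} {Y h : ℝ} {k I : ℕ} (hh : 0 ≤ h)
    (hF : ∀ i, DifferentiableOn ℂ (F i) (Metric.ball 0 ((1 / 2) ^ (i + 2))))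
    (hF_zero : ∀ z ∈ Metric.ball (0 : ℂ) ((1 / 2) ^ 2), ‖F 0 z‖ ≤ Y)
    (hF_succ : ∀ i, ∀ z ∈ Metric.ball (0 : ℂ) ((1 / 2) ^ (i + 3)),
      ‖F (i + 1) z - F i z‖ ≤ Y * ((1 / 2) ^ (i + 1)) ^ (k + 1))
    (hkh : k * h ≤ (1 / 2) ^ (I + 3)) :
    ‖(Δ_[h])^[k] (fun t : ℝ => F I t) 0‖ ≤ Y * (12 * (k * h)) ^ k * (2 - (1 / 2) ^ I) := by
  induction I with
  | zero =>
    refine (norm_fwdDiff_iter_le_of_differentiableOn (by norm_num) hh (hF 0) hF_zero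
      (hkh.trans (by norm_num))).trans_eq ?_
    rw [show 3 * (k * h) / (1 / 2 : ℝ) ^ (0 + 2) = 12 * (k * h) by ring]
    ring
  | succ I ih =>
    have hradius : (1 / 2 : ℝ) ^ (I + 3) ≤ (1 / 2) ^ (I + 2) :=
      pow_le_pow_of_le_one (by norm_num) (by norm_num) (by omega)
    have hkh' : k * h ≤ (1 / 2) ^ (I + 3) / 2 := hkh.trans_eq (by ring)
    have hincrement := norm_fwdDiff_iter_le_of_differentiableOn (by positivity) hh
      ((hF (I + 1)).sub ((hF I).mono (Metric.ball_subset_ball hradius))) (hF_succ I) hkh'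
    have hsplit : (fun t : ℝ => F (I + 1) t) =
        (fun t : ℝ => F I t) + fun t : ℝ => (F (I + 1) - F I) t := by
      ext t
      simp
    rw [hsplit, fwdDiff_iter_add]
    refine (norm_add_le_of_le (ih (by linarith [show (0 : ℝ) < (1 / 2) ^ (I + 3) by positivity]))
      hincrement).trans_eq ?_
    have hscale : (1 / 2 : ℝ) ^ (I + 1) * (3 * (k * h) / (1 / 2) ^ (I + 3)) = 12 * (k * h) := by
      field_simp
      ring
    rw [pow_succ _ k, ← hscale, mul_pow ((1 / 2 : ℝ) ^ (I + 1))]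
    ring

lemma norm_fwdDiff_iter_le_of_dyadic_approx_of_lt {f : ℝ → ℂ} {F : ℕ → ℂ → ℂ} {Y h : ℝ} {k I : ℕ}
    (hF : ∀ i, DifferentiableOn ℂ (F i) (Metric.ball 0 ((1 / 2) ^ (i + 2))))
    (hF_zero : ∀ z ∈ Metric.ball (0 : ℂ) ((1 / 2) ^ 2), ‖F 0 z‖ ≤ Y)
    (hF_succ : ∀ i, ∀ z ∈ Metric.ball (0 : ℂ) ((1 / 2) ^ (i + 3)),
      ‖F (i + 1) z - F i z‖ ≤ Y * ((1 / 2) ^ (i + 1)) ^ (k + 1))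
    (hfF : ∀ t ∈ Icc (0 : ℝ) ((1 / 2) ^ (I + 2)),
      ‖f t - F I t‖ ≤ Y * ((1 / 2) ^ (I + 1)) ^ (k + 1))
    (hY : 0 ≤ Y) (hh : 0 ≤ h) (hkh : k * h ≤ (1 / 2) ^ (I + 3))
    (hkh_lt : (1 / 2) ^ (I + 1) < 8 * (k * h)) :
    ‖(Δ_[h])^[k] f 0‖ ≤ 3 * Y * (16 * (k * h)) ^ k := by
  have hF_I := norm_fwdDiff_iter_le_of_dyadic hh hF hF_zero hF_succ hkh
  have hnode : ∀ i ≤ k, 0 + i • h ∈ Icc 0 ((1 / 2) ^ (I + 2)) := fun i hi => by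
    rw [zero_add, nsmul_eq_mul]
    refine ⟨by positivity, le_trans (by gcongr) (hkh.trans ?_)⟩
    exact pow_le_pow_of_le_one (by norm_num) (by norm_num) (by omega)
  have herror : ‖(Δ_[h])^[k] (fun t : ℝ => f t - F I t) 0‖ ≤ Y * (16 * (k * h)) ^ k :=
    calc ‖(Δ_[h])^[k] (fun t : ℝ => f t - F I t) 0‖
        ≤ 2 ^ k * (Y * ((1 / 2) ^ (I + 1)) ^ (k + 1)) :=
          norm_fwdDiff_iter_le fun i hi => hfF _ (hnode i hi)
      _ ≤ 2 ^ k * (Y * (8 * (k * h)) ^ k) := by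
          gcongr
          exact (pow_le_pow_of_le_one (by positivity) (pow_le_one₀ (by norm_num) (by norm_num))
            k.le_succ).trans (by gcongr)
      _ = Y * (16 * (k * h)) ^ k := by
          rw [mul_left_comm, ← mul_pow]
          ring
  have hsplit : f = (fun t : ℝ => F I t) + fun t : ℝ => f t - F I t := by
    ext t
    simp
  have hF_I' : Y * (12 * (k * h)) ^ k * (2 - (1 / 2) ^ I) ≤ Y * (16 * (k * h)) ^ k * 2 := by
    gcongr
    · linarith [pow_le_one₀ (n := I) (by norm_num : (0 : ℝ) ≤ 1 / 2) (by norm_num)]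
    · norm_num
    · linarith [show (0 : ℝ) < (1 / 2) ^ I by positivity]
  rw [hsplit, fwdDiff_iter_add]
  exact (norm_add_le_of_le hF_I herror).trans (by linarith)

/- The scale `I` is chosen so that the disc of `F I` is comparable to the interval `[0, k * h]`. -/
lemma norm_fwdDiff_iter_le_of_dyadic_approx {f : ℝ → ℂ} {F : ℕ → ℂ → ℂ} {Y h : ℝ} {k : ℕ}
    (hF : ∀ i, DifferentiableOn ℂ (F i) (Metric.ball 0 ((1 / 2) ^ (i + 2))))
    (hF_zero : ∀ z ∈ Metric.ball (0 : ℂ) ((1 / 2) ^ 2), ‖F 0 z‖ ≤ Y)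
    (hF_succ : ∀ i, ∀ z ∈ Metric.ball (0 : ℂ) ((1 / 2) ^ (i + 3)),
      ‖F (i + 1) z - F i z‖ ≤ Y * ((1 / 2) ^ (i + 1)) ^ (k + 1))
    (hfF : ∀ i, ∀ t ∈ Icc (0 : ℝ) ((1 / 2) ^ (i + 2)),
      ‖f t - F i t‖ ≤ Y * ((1 / 2) ^ (i + 1)) ^ (k + 1))
    (hf : ∀ t ∈ Icc (0 : ℝ) 1, ‖f t‖ ≤ Y) (hh : 0 < h) (hkh : k * h ≤ 1) :
    ‖(Δ_[h])^[k] f 0‖ ≤ 3 * Y * (16 * (k * h)) ^ k := by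
  have hY : 0 ≤ Y := (norm_nonneg _).trans (hf 0 (by simp))
  by_cases hsmall : 8 * (k * h) ≤ 1 ∧ k ≠ 0
  · obtain ⟨hle, hk⟩ := hsmall
    have : 0 < k * h := by positivity
    obtain ⟨I, hI_lt, hI_le⟩ := exists_nat_pow_near_of_lt_one (y := (1 / 2 : ℝ))
      (by positivity : 0 < 8 * (k * h)) hle (by norm_num) (by norm_num)
    exact norm_fwdDiff_iter_le_of_dyadic_approx_of_lt hF hF_zero hF_succ (hfF I) hY hh.le
      (by rw [pow_add]; linarith) hI_lt
  · have htrivial : ‖(Δ_[h])^[k] f 0‖ ≤ 2 ^ k * Y := norm_fwdDiff_iter_le fun i hi => hf _ <| by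
      rw [zero_add, nsmul_eq_mul]
      exact ⟨by positivity, le_trans (by gcongr) hkh⟩
    have hpow : (2 : ℝ) ^ k ≤ (16 * (k * h)) ^ k := by
      rcases eq_or_ne k 0 with rfl | hk
      · simp
      · have hgt : 1 < 8 * (k * h) := not_le.mp fun hle => hsmall ⟨hle, hk⟩
        gcongr
        linarith
    calc ‖(Δ_[h])^[k] f 0‖ ≤ 2 ^ k * Y := htrivial
      _ ≤ (16 * (k * h)) ^ k * Y := by gcongr
      _ ≤ 3 * Y * (16 * (k * h)) ^ k := by
        linarith [mul_nonneg hY (show 0 ≤ (16 * (k * h)) ^ k by positivity)]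

end HolomorphicApproximation

section PolynomialApproximation

variable {n : ℕ} {A : ℝ}

lemma norm_eval_le_of_norm_coeff_le {P : Polynomial ℂ} {z : ℂ} (hdeg : P.natDegree < n)
    (hcoeff : ∀ i < n, ‖P.coeff i‖ ≤ A) (hz : ‖z‖ ≤ 1) : ‖P.eval z‖ ≤ n * A := by
  rw [Polynomial.eval_eq_sum_range' hdeg]
  refine (norm_sum_le_of_le _ fun i hi => ?_).trans_eq (by simp : ∑ _i ∈ Finset.range n, A = n * A)
  rw [norm_mul, norm_pow]
  exact (mul_le_of_le_one_right (norm_nonneg _) (pow_le_one₀ (norm_nonneg _) hz)).trans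
    (hcoeff i (Finset.mem_range.mp hi))

lemma norm_eval_derivative_le_of_norm_coeff_le {P : Polynomial ℂ} {z : ℂ} (hdeg : P.natDegree < n)
    (hcoeff : ∀ i, ‖P.coeff i‖ ≤ A) (hz : ‖z‖ ≤ 1) : ‖P.derivative.eval z‖ ≤ n ^ 2 * A := by
  rw [sq, mul_assoc]
  refine norm_eval_le_of_norm_coeff_le
    ((P.natDegree_derivative_le.trans (Nat.sub_le _ _)).trans_lt hdeg) (fun i hi => ?_) hz
  rw [Polynomial.coeff_derivative, norm_mul, mul_comm, ← Nat.cast_add_one, Complex.norm_natCast]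
  gcongr
  · exact hi
  · exact hcoeff _

lemma X_pow_dvd_of_isBigO {Q : Polynomial ℂ}
    (hQ : (fun t : ℝ => Q.eval (t : ℂ)) =O[𝓝[>] 0] fun t => t ^ n) : Polynomial.X ^ n ∣ Q := by
  induction n with
  | zero => simp
  | succ n ih =>
    have hle : (fun t : ℝ => t ^ (n + 1)) =O[𝓝[>] 0] fun t => t ^ n :=
      (isLittleO_pow_pow n.lt_succ_self).isBigO.mono nhdsWithin_le_nhds
    obtain ⟨R, rfl⟩ := ih (hQ.trans hle)
    have hR_isBigO : (fun t : ℝ => R.eval (t : ℂ)) =O[𝓝[>] 0] fun t => t := by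
      obtain ⟨C, hC⟩ := hQ.bound
      refine IsBigO.of_bound C ?_
      filter_upwards [hC, self_mem_nhdsWithin] with t ht (ht_pos : 0 < t)
      simp only [Polynomial.eval_mul, Polynomial.eval_pow, Polynomial.eval_X, norm_mul, norm_pow,
        Complex.norm_real, pow_succ, mul_left_comm C] at ht
      exact le_of_mul_le_mul_left ht (pow_pos (norm_pos_iff.mpr ht_pos.ne') n)
    have hR_tendsto : Tendsto (fun t : ℝ => R.eval (t : ℂ)) (𝓝[>] 0) (𝓝 (R.eval 0)) := by
      have hcont : Continuous fun t : ℝ => R.eval (t : ℂ) :=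
        R.continuous.comp Complex.continuous_ofReal
      simpa using (hcont.tendsto 0).mono_left nhdsWithin_le_nhds
    have hR_zero : R.eval 0 = 0 := tendsto_nhds_unique hR_tendsto
      (hR_isBigO.trans_tendsto (tendsto_id.mono_left nhdsWithin_le_nhds))
    rw [pow_succ]
    exact mul_dvd_mul_left _ (by rwa [Polynomial.X_dvd_iff, Polynomial.coeff_zero_eq_eval_zero])

/- Schwarz's lemma of order `n`: the maximum principle for `Q / X ^ n`. -/
lemma norm_eval_le_mul_norm_pow {Q : Polynomial ℂ} {B : ℝ} {z : ℂ} (hdvd : Polynomial.X ^ n ∣ Q)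
    (hB : ∀ z : ℂ, ‖z‖ = 1 → ‖Q.eval z‖ ≤ B) (hz : ‖z‖ ≤ 1) : ‖Q.eval z‖ ≤ B * ‖z‖ ^ n := by
  obtain ⟨R, rfl⟩ := hdvd
  simp only [Polynomial.eval_mul, Polynomial.eval_pow, Polynomial.eval_X, norm_mul,
    norm_pow] at hB ⊢
  have hR : ‖R.eval z‖ ≤ B := by
    refine Complex.norm_le_of_forall_mem_frontier_norm_le (U := Metric.ball 0 1)
      Metric.isBounded_ball (f := fun z => R.eval z) R.differentiable.diffContOnCl
      (fun w hw => ?_) ?_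
    · have hw_norm : ‖w‖ = 1 := by simpa [frontier_ball (0 : ℂ) one_ne_zero] using hw
      simpa [hw_norm] using hB w hw_norm
    · simpa [closure_ball (0 : ℂ) one_ne_zero] using hz
  rw [mul_comm]
  gcongr

lemma isBigO_pow_sub_pow {α : Type*} {l : Filter α} {u v : α → ℂ} {φ : α → ℝ}
    (hu : u =O[l] fun _ => (1 : ℝ)) (hv : v =O[l] fun _ => (1 : ℝ))
    (huv : (fun t => u t - v t) =O[l] φ) (m : ℕ) : (fun t => u t ^ m - v t ^ m) =O[l] φ := by
  induction m with
  | zero => simpa using isBigO_zero φ l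
  | succ m ih =>
    have hsplit : (fun t => u t ^ (m + 1) - v t ^ (m + 1)) =
        fun t => u t * (u t ^ m - v t ^ m) + v t ^ m * (u t - v t) := by
      ext t
      ring
    rw [hsplit]
    simpa only [one_pow, one_mul] using (hu.mul ih).add (by simpa using (hv.pow m).mul huv)

/-- `P` is a polynomial of degree less than `n` which approximates `g` on `[0, 1]` to order `n`
at `0`, the constant `A` bounding both the coefficients and the error. -/
structure IsTaylorApprox (n : ℕ) (A : ℝ) (g : ℝ → ℂ) (P : Polynomial ℂ) : Prop where
  natDegree_lt : P.natDegree < n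
  norm_coeff_le : ∀ i, ‖P.coeff i‖ ≤ A
  norm_sub_le : ∀ t ∈ Icc (0 : ℝ) 1, ‖g t - P.eval (t : ℂ)‖ ≤ A * t ^ n

/-- Taylor data of order `n` along `[0, 1]` for the powers `f ^ j` and `f ^ (j + 1)` of a bounded
function `f`, with a common constant `A`. No regularity of `f` itself is assumed. -/
structure IsPowerJet (j n : ℕ) (A : ℝ) (f : ℝ → ℂ) (G H : Polynomial ℂ) : Prop where
  one_le : 1 ≤ A
  norm_le : ∀ t ∈ Icc (0 : ℝ) 1, ‖f t‖ ≤ A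
  pow_left : IsTaylorApprox n A (fun t => f t ^ j) G
  pow_right : IsTaylorApprox n A (fun t => f t ^ (j + 1)) H

namespace IsTaylorApprox

variable {g : ℝ → ℂ} {P : Polynomial ℂ}

lemma norm_eval_le (h : IsTaylorApprox n A g P) {z : ℂ} (hz : ‖z‖ ≤ 1) : ‖P.eval z‖ ≤ n * A :=
  norm_eval_le_of_norm_coeff_le h.natDegree_lt (fun i _ => h.norm_coeff_le i) hz

lemma isBigO (h : IsTaylorApprox n A g P) :
    (fun t => g t - P.eval (t : ℂ)) =O[𝓝[>] 0] fun t => t ^ n := by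
  refine IsBigO.of_bound A ?_
  filter_upwards [Ioc_mem_nhdsGT (zero_lt_one' ℝ)] with t ht
  rw [norm_pow, Real.norm_of_nonneg ht.1.le]
  exact h.norm_sub_le t (Ioc_subset_Icc_self ht)

end IsTaylorApprox

namespace IsPowerJet

variable {j : ℕ} {f : ℝ → ℂ} {G H : Polynomial ℂ}

lemma one_le_order_mul (h : IsPowerJet j n A f G H) : 1 ≤ n * A :=
  one_le_mul_of_one_le_of_one_le
    (by exact_mod_cast Nat.one_le_iff_ne_zero.mpr (Nat.ne_zero_of_lt h.pow_left.natDegree_lt))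
    h.one_le

/- `f` satisfies `(f ^ (j + 1)) ^ j = (f ^ j) ^ (j + 1)`, hence so do its jets. -/
lemma X_pow_dvd (h : IsPowerJet j n A f G H) : Polynomial.X ^ n ∣ H ^ j - G ^ (j + 1) := by
  have hf : ∀ m : ℕ, (fun t => f t ^ m) =O[𝓝[>] 0] fun _ => (1 : ℝ) := by
    intro m
    refine IsBigO.of_bound (A ^ m) ?_
    filter_upwards [Ioc_mem_nhdsGT (zero_lt_one' ℝ)] with t ht
    rw [norm_one, mul_one, norm_pow]
    gcongr
    exact h.norm_le t (Ioc_subset_Icc_self ht)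
  have hP : ∀ P : Polynomial ℂ, (fun t : ℝ => P.eval (t : ℂ)) =O[𝓝[>] 0] fun _ => (1 : ℝ) :=
    fun P => ((P.continuous.comp Complex.continuous_ofReal).continuousAt.isBigO_one ℝ).mono
      nhdsWithin_le_nhds
  refine X_pow_dvd_of_isBigO ?_
  refine ((isBigO_pow_sub_pow (hf j) (hP G) h.pow_left.isBigO (j + 1)).sub
    (isBigO_pow_sub_pow (hf (j + 1)) (hP H) h.pow_right.isBigO j)).congr_left fun t => ?_
  simp only [Polynomial.eval_sub, Polynomial.eval_pow]
  ring

lemma norm_eval_pow_sub_pow_le (h : IsPowerJet j n A f G H) {z : ℂ} (hz : ‖z‖ ≤ 1) :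
    ‖H.eval z ^ j - G.eval z ^ (j + 1)‖ ≤ 2 * (n * A) ^ (j + 1) * ‖z‖ ^ n := by
  have heval : ∀ z : ℂ, (H ^ j - G ^ (j + 1)).eval z = H.eval z ^ j - G.eval z ^ (j + 1) :=
    fun z => by simp only [Polynomial.eval_sub, Polynomial.eval_pow]
  rw [← heval]
  refine norm_eval_le_mul_norm_pow h.X_pow_dvd (fun w hw => ?_) hz
  rw [heval, two_mul]
  refine norm_sub_le_of_le ?_ ?_ <;> rw [norm_pow]
  · calc ‖H.eval w‖ ^ j ≤ (n * A) ^ j := by gcongr; exact h.pow_right.norm_eval_le hw.le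
      _ ≤ (n * A) ^ (j + 1) := pow_le_pow_right₀ h.one_le_order_mul j.le_succ
  · gcongr
    exact h.pow_left.norm_eval_le hw.le

end IsPowerJet

end PolynomialApproximation

section RegularizedJets

/-- The scale at which the quotient of the jets of `f ^ (j + 1)` and `f ^ j` is regularized on the
disc of radius `x`. For `n = 2 * j * (j + 1) * N` the Schwarz lemma turns the order of contact `n`
of `H ^ j` and `G ^ (j + 1)` into the order `N` of this scale. -/
def jetScale (n N : ℕ) (A x : ℝ) : ℝ := 2 * (n * A) * x ^ N

namespace IsPowerJet

variable {j n N : ℕ} {A x : ℝ} {f : ℝ → ℂ} {G H : Polynomial ℂ}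

lemma jetScale_pos (h : IsPowerJet j n A f G H) (hx : 0 < x) : 0 < jetScale n N A x :=
  mul_pos (mul_pos two_pos (one_pos.trans_le h.one_le_order_mul)) (pow_pos hx N)

lemma jetScale_sq_le (h : IsPowerJet j n A f G H) (hx : 0 ≤ x) (hx1 : x ≤ 1) :
    jetScale n N A x ^ 2 ≤ 4 * (n * A) ^ (2 * j + 2) * x ^ N := by
  have hnA := h.one_le_order_mul
  calc jetScale n N A x ^ 2 = 4 * (n * A) ^ 2 * x ^ N * x ^ N := by
        rw [jetScale]
        ring
    _ ≤ 4 * (n * A) ^ (2 * j + 2) * x ^ N * 1 := by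
        gcongr 4 * ?_ * x ^ N * ?_
        · exact pow_le_pow_right₀ hnA (by omega)
        · exact pow_le_one₀ hx hx1
    _ = 4 * (n * A) ^ (2 * j + 2) * x ^ N := mul_one _

lemma jetScale_pow_le (h : IsPowerJet j n A f G H) (hx : 0 ≤ x) (hx1 : x ≤ 1) :
    jetScale n N A x ^ (2 * j) ≤ 4 ^ j * (n * A) ^ (2 * j + 2) := by
  have hnA := h.one_le_order_mul
  calc jetScale n N A x ^ (2 * j) ≤ (2 * (n * A) * 1) ^ (2 * j) := by
        unfold jetScale
        gcongr
        exact pow_le_one₀ hx hx1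
    _ = 4 ^ j * (n * A) ^ (2 * j) := by
        rw [mul_one, mul_pow, pow_mul]
        norm_num
    _ ≤ 4 ^ j * (n * A) ^ (2 * j + 2) := by
        gcongr 4 ^ j * ?_
        exact pow_le_pow_right₀ hnA (by omega)

lemma norm_eval_pow_sub_pow_le_jetScale (h : IsPowerJet j n A f G H) (hj : j ≠ 0)
    (hn : n = 2 * j * (j + 1) * N) (hx1 : x ≤ 1) {z : ℂ} (hz : ‖z‖ ≤ x) :
    ‖H.eval z ^ j - G.eval z ^ (j + 1)‖ ≤ (jetScale n N A x ^ (2 * j)) ^ (j + 1) := by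
  have hnA := h.one_le_order_mul
  calc ‖H.eval z ^ j - G.eval z ^ (j + 1)‖ ≤ 2 * (n * A) ^ (j + 1) * ‖z‖ ^ n :=
        h.norm_eval_pow_sub_pow_le (hz.trans hx1)
    _ ≤ 2 ^ (j + 1) * (n * A) ^ (j + 1) * x ^ n := by
        gcongr
        exact le_self_pow₀ one_le_two j.succ_ne_zero
    _ = (2 * (n * A)) ^ (j + 1) * x ^ n := by rw [mul_pow 2]
    _ ≤ (2 * (n * A)) ^ (2 * j * (j + 1)) * x ^ n := by
        gcongr ?_ * x ^ n
        · exact pow_nonneg ((norm_nonneg z).trans hz) n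
        · exact pow_le_pow_right₀ (by linarith) (Nat.le_mul_of_pos_left _ (by omega))
    _ = (jetScale n N A x ^ (2 * j)) ^ (j + 1) := by
        rw [← pow_mul, jetScale, mul_pow _ (x ^ N), ← pow_mul x, mul_comm N, ← hn]

lemma norm_regQuot_jetScale_le (h : IsPowerJet j n A f G H) (hj : j ≠ 0)
    (hn : n = 2 * j * (j + 1) * N) (hx : 0 < x) (hx1 : x ≤ 1) {z : ℂ} (hz : ‖z‖ ≤ x) :
    ‖regQuot (G.eval z) (H.eval z) (jetScale n N A x ^ (2 * j))‖ ≤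
      (4 + 2 * 4 ^ j) * (n * A) ^ (2 * j + 2) := by
  have hnA := h.one_le_order_mul
  have hG : ‖G.eval z‖ ≤ (n * A) ^ (2 * j + 2) :=
    (h.pow_left.norm_eval_le (hz.trans hx1)).trans (le_self_pow₀ hnA (by omega))
  have hone : 1 ≤ (n * A) ^ (2 * j + 2) := one_le_pow₀ hnA
  have hquot := norm_regQuot_le hj (h.jetScale_pos hx)
    (h.norm_eval_pow_sub_pow_le_jetScale hj hn hx1 hz)
  linarith [h.jetScale_pow_le (N := N) hx.le hx1]

lemma norm_regQuot_jetScale_sub_le (h : IsPowerJet j n A f G H) (hj : j ≠ 0)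
    (hn : n = 2 * j * (j + 1) * N) {x' : ℝ} (hx' : 0 < x') (hxx' : x' ≤ x) (hx1 : x ≤ 1) {z : ℂ}
    (hz : ‖z‖ ≤ x') :
    ‖regQuot (G.eval z) (H.eval z) (jetScale n N A x ^ (2 * j)) -
      regQuot (G.eval z) (H.eval z) (jetScale n N A x' ^ (2 * j))‖ ≤
      8 * (n * A) ^ (2 * j + 2) * x ^ N := by
  have hnA := h.one_le_order_mul
  have hle : jetScale n N A x' ≤ jetScale n N A x := by
    unfold jetScale
    gcongr
  have hquot := norm_regQuot_sub_regQuot_le hj (h.jetScale_pos hx') hle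
    (h.norm_eval_pow_sub_pow_le_jetScale hj hn (hxx'.trans hx1) hz)
  linarith [h.jetScale_sq_le (N := N) (hx'.le.trans hxx') hx1]

lemma mul_pow_le_pow_mul_jetScale_pow (h : IsPowerJet j n A f G H) (hj : j ≠ 0)
    (hn : n = 2 * j * (j + 1) * N) (hx : 0 ≤ x) (hx1 : x ≤ 1) :
    A * x ^ n ≤ x ^ N * jetScale n N A x ^ (2 * j) := by
  have hnA := h.one_le_order_mul
  have hj' : 1 ≤ j := Nat.one_le_iff_ne_zero.mpr hj
  have hA : A ≤ (2 * (n * A)) ^ (2 * j) :=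
    calc A ≤ 2 * (n * A) := by
          have : (1 : ℝ) ≤ n := by exact_mod_cast Nat.one_le_of_lt h.pow_left.natDegree_lt
          nlinarith [h.one_le]
      _ ≤ (2 * (n * A)) ^ (2 * j) := le_self_pow₀ (by linarith) (by omega)
  have hxn : x ^ n ≤ x ^ (N + N * (2 * j)) := by
    refine pow_le_pow_of_le_one hx hx1 ?_
    rw [hn]
    nlinarith [Nat.mul_le_mul hj' hj', Nat.zero_le N]
  calc A * x ^ n ≤ (2 * (n * A)) ^ (2 * j) * x ^ (N + N * (2 * j)) := by gcongr
    _ = x ^ N * jetScale n N A x ^ (2 * j) := by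
        rw [jetScale, mul_pow _ (x ^ N), pow_add, pow_mul x]
        ring

lemma norm_sub_regQuot_jetScale_le (h : IsPowerJet j n A f G H) (hj : j ≠ 0)
    (hn : n = 2 * j * (j + 1) * N) (hx : 0 < x) (hx1 : x ≤ 1) {t : ℝ} (ht : t ∈ Icc 0 x) :
    ‖f t - regQuot (G.eval t) (H.eval t) (jetScale n N A x ^ (2 * j))‖ ≤
      10 * (n * A) ^ (2 * j + 2) * x ^ N := by
  have hnA := h.one_le_order_mul
  have hA₀ : 0 < A := one_pos.trans_le h.one_le
  have hs := h.jetScale_pos (N := N) hx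
  have hδ := h.mul_pow_le_pow_mul_jetScale_pow hj hn hx.le hx1
  have ht1 : t ∈ Icc (0 : ℝ) 1 := ⟨ht.1, ht.2.trans hx1⟩
  have hpow : A * t ^ n ≤ A * x ^ n := by
    gcongr
    exacts [ht.1, ht.2]
  have hquot := norm_sub_regQuot_le hj hs
    (hδ.trans (mul_le_of_le_one_left (by positivity) (pow_le_one₀ hx.le hx1)))
    ((h.pow_left.norm_sub_le t ht1).trans hpow) ((h.pow_right.norm_sub_le t ht1).trans hpow)
    (h.norm_le t ht1)
  have hδ_div : A * x ^ n * (1 + A) / jetScale n N A x ^ (2 * j) ≤ x ^ N * (1 + A) := by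
    rw [div_le_iff₀ (by positivity), mul_right_comm (x ^ N)]
    gcongr
  have hA : 1 + A ≤ 2 * (n * A) ^ (2 * j + 2) := by
    have : (1 : ℝ) ≤ n := by exact_mod_cast Nat.one_le_of_lt h.pow_left.natDegree_lt
    have : A ≤ n * A := le_mul_of_one_le_left hA₀.le this
    linarith [h.one_le, le_self_pow₀ hnA (show 2 * j + 2 ≠ 0 by omega)]
  have hδ_final : x ^ N * (1 + A) ≤ x ^ N * (2 * (n * A) ^ (2 * j + 2)) := by gcongr
  linarith [h.jetScale_sq_le (N := N) hx.le hx1]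

end IsPowerJet

lemma exists_holomorphic_near_regQuot_jetScale {j : ℕ} (hj : j ≠ 0) :
    ∃ K, 0 ≤ K ∧ ∀ {n N : ℕ} {A : ℝ} {f : ℝ → ℂ} {G H : Polynomial ℂ}, IsPowerJet j n A f G H →
      n = 2 * j * (j + 1) * N → ∀ x ∈ Ioc (0 : ℝ) 1,
      ∃ F : ℂ → ℂ, DifferentiableOn ℂ F (Metric.ball 0 (x / 2)) ∧
        ∀ z, ‖F z - regQuot (G.eval z) (H.eval z) (jetScale n N A x ^ (2 * j))‖ ≤
          K * (n * A) ^ (2 * j + 2) * x ^ N := by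
  obtain ⟨K, hK, happrox⟩ := exists_holomorphic_near_regQuot hj
  refine ⟨2 * K, by positivity, fun {n N A f G H} h hn x ⟨hx, hx1⟩ => ?_⟩
  have hn_one : (1 : ℝ) ≤ n := by exact_mod_cast Nat.one_le_of_lt h.pow_left.natDegree_lt
  have hA := h.one_le
  obtain ⟨F, hF, hF_near⟩ := happrox G (fun z => H.eval z) (n ^ 2 * A) (jetScale n N A x) (x / 2)
    H.differentiable (one_le_mul_of_one_le_of_one_le (one_le_pow₀ hn_one) hA) (h.jetScale_pos hx)
    (by positivity) (by linarith) fun z hz => by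
      have hz' : ‖z‖ ≤ x := by
        rw [mem_closedBall_zero_iff] at hz
        linarith
      exact ⟨norm_eval_derivative_le_of_norm_coeff_le h.pow_left.natDegree_lt
        h.pow_left.norm_coeff_le (hz'.trans hx1),
        h.norm_eval_pow_sub_pow_le_jetScale hj hn hx1 hz'⟩
  refine ⟨F, hF, fun z => (hF_near z).trans ?_⟩
  have hs := (h.jetScale_pos (N := N) hx).le
  have hcard : (G.roots.card : ℝ) ≤ n := by
    exact_mod_cast G.card_roots'.trans h.pow_left.natDegree_lt.le
  calc K * (n ^ 2 * A) * jetScale n N A x * G.roots.card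
      ≤ K * (n ^ 2 * A) * jetScale n N A x * n := by gcongr
    _ = 2 * K * (n ^ 4 * A ^ 2) * x ^ N := by
        rw [jetScale]
        ring
    _ ≤ 2 * K * (n ^ 4 * A ^ 4) * x ^ N := by
        gcongr 2 * K * (n ^ 4 * ?_) * x ^ N
        exact pow_le_pow_right₀ hA (by norm_num)
    _ ≤ 2 * K * (n * A) ^ (2 * j + 2) * x ^ N := by
        rw [← mul_pow]
        gcongr 2 * K * ?_ * x ^ N
        exact pow_le_pow_right₀ h.one_le_order_mul (by omega)

lemma exists_dyadic_holomorphic_approx {j : ℕ} (hj : j ≠ 0) :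
    ∃ C, 1 ≤ C ∧ ∀ {n N : ℕ} {A : ℝ} {f : ℝ → ℂ} {G H : Polynomial ℂ}, IsPowerJet j n A f G H →
      n = 2 * j * (j + 1) * N → ∃ F : ℕ → ℂ → ℂ,
        (∀ i, DifferentiableOn ℂ (F i) (Metric.ball 0 ((1 / 2) ^ (i + 2)))) ∧
        (∀ z ∈ Metric.ball (0 : ℂ) ((1 / 2) ^ 2), ‖F 0 z‖ ≤ C * (n * A) ^ (2 * j + 2)) ∧
        (∀ i, ∀ z ∈ Metric.ball (0 : ℂ) ((1 / 2) ^ (i + 3)),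
          ‖F (i + 1) z - F i z‖ ≤ C * (n * A) ^ (2 * j + 2) * ((1 / 2) ^ (i + 1)) ^ N) ∧
        ∀ i, ∀ t ∈ Icc (0 : ℝ) ((1 / 2) ^ (i + 2)),
          ‖f t - F i t‖ ≤ C * (n * A) ^ (2 * j + 2) * ((1 / 2) ^ (i + 1)) ^ N := by
  obtain ⟨K, hK, happrox⟩ := exists_holomorphic_near_regQuot_jetScale hj
  have h4 : (1 : ℝ) ≤ 4 ^ j := one_le_pow₀ (by norm_num)
  refine ⟨2 * K + 10 + 2 * 4 ^ j, by linarith, fun {n N A f G H} hjet hn => ?_⟩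
  set B : ℝ := (n * A) ^ (2 * j + 2)
  have hB_pos : 0 < B := pow_pos (one_pos.trans_le hjet.one_le_order_mul) _
  set x : ℕ → ℝ := fun i => (1 / 2) ^ (i + 1) with hx
  have hx_pos : ∀ i, 0 < x i := fun i => by positivity
  have hx_anti : ∀ i, x (i + 1) ≤ x i := fun i =>
    pow_le_pow_of_le_one (by norm_num) (by norm_num) (Nat.le_succ _)
  have hx_one : ∀ i, x i ≤ 1 := fun i => pow_le_one₀ (by norm_num) (by norm_num)
  have hx_half : ∀ i, x i / 2 = x (i + 1) := fun i => by
    simp only [hx]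
    ring
  choose F hF hF_near using fun i => happrox hjet hn (x i) ⟨hx_pos i, hx_one i⟩
  simp only [hx_half] at hF
  have hBx : ∀ i, 0 < B * x i ^ N := fun i => mul_pos hB_pos (pow_pos (hx_pos i) N)
  refine ⟨F, hF, fun z hz => ?_, fun i z hz => ?_, fun i t ht => ?_⟩
  · have hquot := hjet.norm_regQuot_jetScale_le hj hn (hx_pos 0) (hx_one 0)
      ((mem_ball_zero_iff.mp hz).le.trans (hx_anti 0))
    refine (norm_le_norm_add_norm_sub' _ _).trans (add_le_add hquot (hF_near 0 z)) |>.trans ?_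
    have hdecay : K * B * x 0 ^ N ≤ K * B * 1 := by
      gcongr
      exact pow_le_one₀ (hx_pos 0).le (hx_one 0)
    nlinarith [mul_nonneg hK hB_pos.le]
  · have hquot := hjet.norm_regQuot_jetScale_sub_le hj hn (hx_pos (i + 1)) (hx_anti i) (hx_one i)
      ((mem_ball_zero_iff.mp hz).le.trans (hx_anti (i + 1)))
    have hnear := fun i => (dist_eq_norm _ _).trans_le (hF_near i z)
    rw [← dist_eq_norm, dist_comm] at hquot
    rw [← dist_eq_norm]
    refine (dist_triangle4_right _ _ _ _).trans
      (add_le_add_three (hnear (i + 1)) (hnear i) hquot) |>.trans ?_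
    have hdecay : K * B * x (i + 1) ^ N ≤ K * B * x i ^ N := by gcongr; exact hx_anti i
    nlinarith [hBx i, mul_nonneg hK (hBx i).le]
  · have hquot := hjet.norm_sub_regQuot_jetScale_le hj hn (hx_pos i) (hx_one i)
      ⟨ht.1, ht.2.trans (hx_anti i)⟩
    refine (norm_sub_le_norm_sub_add_norm_sub _ _ _).trans (add_le_add hquot
      ((norm_sub_rev _ _).trans_le (hF_near i t))) |>.trans ?_
    nlinarith [hBx i, mul_nonneg hK (hBx i).le]

theorem exists_norm_fwdDiff_iter_le_of_isPowerJet {j : ℕ} (hj : j ≠ 0) :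
    ∃ C, 0 ≤ C ∧ ∀ {n k : ℕ} {A h : ℝ} {f : ℝ → ℂ} {G H : Polynomial ℂ},
      IsPowerJet j n A f G H → n = 2 * j * (j + 1) * (k + 1) → 0 < h → k * h ≤ 1 →
      ‖(Δ_[h])^[k] f 0‖ ≤ C * (n * A) ^ (2 * j + 2) * (16 * (k * h)) ^ k := by
  obtain ⟨C, hC, happrox⟩ := exists_dyadic_holomorphic_approx hj
  refine ⟨3 * C, by linarith, fun {n k A h f G H} hjet hn hh hkh => ?_⟩
  obtain ⟨F, hF, hF_zero, hF_succ, hfF⟩ := happrox hjet hn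
  have hnA := hjet.one_le_order_mul
  have hn_one : (1 : ℝ) ≤ n := by exact_mod_cast Nat.one_le_of_lt hjet.pow_left.natDegree_lt
  have hf : ∀ t ∈ Icc (0 : ℝ) 1, ‖f t‖ ≤ C * (n * A) ^ (2 * j + 2) := fun t ht =>
    calc ‖f t‖ ≤ A := hjet.norm_le t ht
      _ ≤ n * A := le_mul_of_one_le_left (by linarith [hjet.one_le]) hn_one
      _ ≤ (n * A) ^ (2 * j + 2) := le_self_pow₀ hnA (by omega)
      _ ≤ C * (n * A) ^ (2 * j + 2) := le_mul_of_one_le_left (by positivity) hC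
  exact (norm_fwdDiff_iter_le_of_dyadic_approx hF hF_zero hF_succ hfF hf hh hkh).trans_eq (by ring)

end RegularizedJets

section WeightSequences

variable {M m : ℕ → ℝ}

namespace LogConvexSeq

lemma sq_succ_le (hm : LogConvexSeq m) (k : ℕ) : m (k + 1) ^ 2 ≤ m k * m (k + 2) :=
  hm (k + 1) k.succ_pos

lemma mul_le_succ_of_mul_le_succ (hm : LogConvexSeq m) (hpos : ∀ k, 0 < m k) {κ : ℝ} {l k : ℕ}
    (hl : κ * m l ≤ m (l + 1)) (hlk : l ≤ k) : κ * m k ≤ m (k + 1) := by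
  induction k, hlk using Nat.le_induction with
  | base => exact hl
  | succ k _ ih =>
    refine le_of_mul_le_mul_left ?_ (hpos k)
    calc m k * (κ * m (k + 1)) = κ * m k * m (k + 1) := by ring
      _ ≤ m (k + 1) * m (k + 1) := mul_le_mul_of_nonneg_right ih (hpos _).le
      _ ≤ m k * m (k + 2) := (sq (m (k + 1))).symm.trans_le (hm.sq_succ_le k)

lemma monotone (hm : LogConvexSeq m) (hpos : ∀ k, 0 < m k) (h01 : m 0 ≤ m 1) : Monotone m := by
  refine monotone_nat_of_le_succ fun k => ?_
  simpa only [one_mul] using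
    hm.mul_le_succ_of_mul_le_succ hpos (κ := 1) (by rwa [one_mul]) k.zero_le

lemma pow_succ_le_succ_pow (hm : LogConvexSeq m) (hpos : ∀ k, 0 < m k) (h0 : m 0 = 1) (k : ℕ) :
    m k ^ (k + 1) ≤ m (k + 1) ^ k := by
  induction k with
  | zero => simp [h0]
  | succ k ih =>
    refine le_of_mul_le_mul_left ?_ (pow_pos (hpos (k + 1)) k)
    calc m (k + 1) ^ k * m (k + 1) ^ (k + 2) = (m (k + 1) ^ 2) ^ (k + 1) := by ring
      _ ≤ (m k * m (k + 2)) ^ (k + 1) := by gcongr; exact hm.sq_succ_le k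
      _ = m k ^ (k + 1) * m (k + 2) ^ (k + 1) := mul_pow _ _ _
      _ ≤ m (k + 1) ^ k * m (k + 2) ^ (k + 1) :=
        mul_le_mul_of_nonneg_right ih (pow_pos (hpos _) _).le

lemma le_pow_of_le_pow (hm : LogConvexSeq m) (hpos : ∀ k, 0 < m k) (h0 : m 0 = 1) {a : ℝ}
    (ha : 0 ≤ a) {i n : ℕ} (hn : m n ≤ a ^ n) (hi : i ≤ n) : m i ≤ a ^ i := by
  induction hi using Nat.decreasingInduction with
  | self => exact hn
  | of_succ i _ ih =>
    refine le_of_pow_le_pow_left₀ i.succ_ne_zero (pow_nonneg ha i) ?_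
    calc m i ^ (i + 1) ≤ m (i + 1) ^ i := hm.pow_succ_le_succ_pow hpos h0 i
      _ ≤ (a ^ (i + 1)) ^ i := pow_le_pow_left₀ (hpos _).le ih i
      _ = (a ^ i) ^ (i + 1) := pow_right_comm _ _ _

lemma exists_pow_le_mul (hm : LogConvexSeq m) (hpos : ∀ k, 0 < m k) {κ : ℝ} (hκ : 0 ≤ κ) {l : ℕ}
    (hl : κ * m l ≤ m (l + 1)) : ∃ K, ∀ k, κ ^ k ≤ K * m k := by
  have hanti : ∀ k ≥ l, κ ^ k / m k ≤ κ ^ l / m l := by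
    intro k hk
    induction k, hk using Nat.le_induction with
    | base => exact le_rfl
    | succ k hk ih =>
      refine le_trans ?_ ih
      rw [div_le_div_iff₀ (hpos _) (hpos _), pow_succ, mul_assoc]
      exact mul_le_mul_of_nonneg_left (hm.mul_le_succ_of_mul_le_succ hpos hl hk) (pow_nonneg hκ k)
  obtain ⟨K, hK⟩ := (isBoundedUnder_of_eventually_le
    ((eventually_ge_atTop l).mono hanti)).bddAbove_range
  exact ⟨K, fun k => (div_le_iff₀ (hpos k)).mp (hK (mem_range_self k))⟩

end LogConvexSeq

lemma rootTendsToInfty_iff (hpos : ∀ k, 0 < m k) :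
    RootTendsToInfty m ↔ ∀ κ, 0 < κ → ∃ K, ∀ k, κ ^ k ≤ K * m k := by
  have hroot : ∀ {k : ℕ} {κ : ℝ}, k ≠ 0 → 0 ≤ κ → (κ ≤ m k ^ (1 / (k : ℝ)) ↔ κ ^ k ≤ m k) :=
    fun {k κ} hk hκ => by
      rw [one_div, Real.le_rpow_inv_iff_of_pos hκ (hpos k).le (by positivity), Real.rpow_natCast]
  constructor
  · intro h κ hκ
    have hbdd : ∀ᶠ k in atTop, κ ^ k / m k ≤ 1 := by
      filter_upwards [h.eventually_ge_atTop κ, eventually_ne_atTop 0] with k hk hk0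
      exact div_le_one_of_le₀ ((hroot hk0 hκ.le).mp hk) (hpos k).le
    obtain ⟨K, hK⟩ := (isBoundedUnder_of_eventually_le hbdd).bddAbove_range
    exact ⟨K, fun k => (div_le_iff₀ (hpos k)).mp (hK (mem_range_self k))⟩
  · intro h
    refine tendsto_atTop.mpr fun b => ?_
    have hκ : 0 < max b 1 := lt_max_of_lt_right one_pos
    obtain ⟨K, hK⟩ := h (2 * max b 1) (by positivity)
    filter_upwards [(tendsto_pow_atTop_atTop_of_one_lt one_lt_two).eventually_ge_atTop K,
      eventually_ne_atTop 0] with k hk hk0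
    refine (le_max_left b 1).trans ((hroot hk0 hκ.le).mpr ?_)
    refine le_of_mul_le_mul_left ?_ (pow_pos (zero_lt_two' ℝ) k)
    calc 2 ^ k * max b 1 ^ k = (2 * max b 1) ^ k := (mul_pow _ _ _).symm
      _ ≤ K * m k := hK k
      _ ≤ 2 ^ k * m k := mul_le_mul_of_nonneg_right hk (hpos k).le

lemma mseq_pos (hM : ∀ k, 0 < M k) (k : ℕ) : 0 < mseq M k :=
  div_pos (hM k) (by positivity)

lemma factorial_mul_mseq (M : ℕ → ℝ) (k : ℕ) : k.factorial * mseq M k = M k :=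
  mul_div_cancel₀ _ (by positivity)

/- Otherwise `M (k + 1) / M k` grows at most linearly, and the harmonic series would converge. -/
lemma NonQuasianalytic.exists_mul_mseq_le (hM : ∀ k, 0 < M k) (hnq : NonQuasianalytic M)
    (κ : ℝ) : ∃ l, κ * mseq M l ≤ mseq M (l + 1) := by
  by_contra! hlt
  refine Real.not_summable_one_div_natCast ((summable_nat_add_iff 1).mp ?_)
  refine Summable.of_nonneg_of_le (fun k => by positivity) (fun k => ?_) (hnq.mul_left κ)
  have hk := (hlt k).le
  rw [← mul_div_assoc, div_le_div_iff₀ (by positivity) (hM _), one_mul]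
  rw [← factorial_mul_mseq M (k + 1), ← factorial_mul_mseq M k, Nat.factorial_succ]
  push_cast
  calc ((k + 1) * k.factorial : ℝ) * mseq M (k + 1)
      ≤ ((k + 1) * k.factorial : ℝ) * (κ * mseq M k) := by gcongr
    _ = κ * (k.factorial * mseq M k) * (k + 1) := by ring

lemma rootTendsToInfty_mseq (hM : ∀ k, 0 < M k) (hnq : NonQuasianalytic M)
    (hmlc : LogConvexSeq (mseq M)) : RootTendsToInfty (mseq M) := by
  refine (rootTendsToInfty_iff (mseq_pos hM)).mpr fun κ hκ => ?_
  obtain ⟨l, hl⟩ := hnq.exists_mul_mseq_le hM κ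
  exact hmlc.exists_pow_le_mul (mseq_pos hM) hκ.le hl

lemma moderateGrowth_mseq (hM : ∀ k, 0 < M k) (hmg : ModerateGrowth M) :
    ModerateGrowth (mseq M) := by
  obtain ⟨C, hC, hC_le⟩ := hmg
  refine ⟨C, hC, fun j k => ?_⟩
  have hj := mseq_pos hM j
  have hk := mseq_pos hM k
  have hfact : (j.factorial * k.factorial : ℝ) ≤ (j + k).factorial := by
    exact_mod_cast Nat.le_of_dvd (Nat.factorial_pos _)
      (Nat.factorial_mul_factorial_dvd_factorial_add j k)
  refine le_of_mul_le_mul_left ?_ (by positivity : (0 : ℝ) < (j + k).factorial)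
  calc (j + k).factorial * mseq M (j + k)
      ≤ C ^ (j + k) * M j * M k := (factorial_mul_mseq M _).trans_le (hC_le j k)
    _ = j.factorial * k.factorial * (C ^ (j + k) * mseq M j * mseq M k) := by
        rw [← factorial_mul_mseq M j, ← factorial_mul_mseq M k]
        ring
    _ ≤ (j + k).factorial * (C ^ (j + k) * mseq M j * mseq M k) := by gcongr

namespace ModerateGrowth

lemma exists_one_le (hm : ModerateGrowth m) (hpos : ∀ k, 0 < m k) :
    ∃ C, 1 ≤ C ∧ ∀ j k, m (j + k) ≤ C ^ (j + k) * m j * m k := by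
  obtain ⟨C, hC, hmg⟩ := hm
  refine ⟨max C 1, le_max_right _ _, fun j k => (hmg j k).trans ?_⟩
  have := hpos j
  have := hpos k
  gcongr
  exact le_max_left _ _

lemma exists_mul_le_pow (hm : ModerateGrowth m) (hpos : ∀ k, 0 < m k) (h0 : m 0 = 1) (l : ℕ) :
    ∃ C, 1 ≤ C ∧ ∀ k, m (l * k) ≤ C ^ k * m k ^ l := by
  obtain ⟨C, hC, hmg⟩ := hm.exists_one_le hpos
  induction l with
  | zero => exact ⟨1, le_rfl, by simp [h0]⟩
  | succ l ih =>
    obtain ⟨B, hB, hB_le⟩ := ih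
    refine ⟨C ^ (l + 1) * B, one_le_mul_of_one_le_of_one_le (one_le_pow₀ hC) hB, fun k => ?_⟩
    have := hpos k
    calc m ((l + 1) * k) = m (l * k + k) := by rw [add_one_mul]
      _ ≤ C ^ (l * k + k) * m (l * k) * m k := hmg _ _
      _ ≤ C ^ (l * k + k) * (B ^ k * m k ^ l) * m k := by gcongr; exact hB_le k
      _ = (C ^ (l + 1) * B) ^ k * m k ^ (l + 1) := by ring

lemma exists_succ_le (hm : ModerateGrowth m) (hpos : ∀ k, 0 < m k) :
    ∃ C, 0 < C ∧ ∀ k, m (k + 1) ≤ C ^ (k + 1) * m k := by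
  obtain ⟨C, hC, hmg⟩ := hm.exists_one_le hpos
  have := hpos 1
  refine ⟨C * max (m 1) 1, by positivity, fun k => (hmg k 1).trans ?_⟩
  have := hpos k
  calc C ^ (k + 1) * m k * m 1 ≤ C ^ (k + 1) * m k * max (m 1) 1 ^ (k + 1) := by
        gcongr
        exact (le_max_left _ _).trans (le_self_pow₀ (le_max_right _ _) k.succ_ne_zero)
    _ = (C * max (m 1) 1) ^ (k + 1) * m k := by ring

/- `a` is the `n`-th root of `m n` for `n = L * (k + 1)`. -/
lemma exists_forall_le_pow (hmg : ModerateGrowth m) (hm : LogConvexSeq m) (hpos : ∀ k, 0 < m k)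
    (h0 : m 0 = 1) (h1 : 1 ≤ m 1) {L : ℕ} (hL : L ≠ 0) :
    ∃ D, 0 < D ∧ ∀ k, ∃ a, 0 < a ∧ (∀ i ≤ L * (k + 1), m i ≤ a ^ i) ∧
      a ^ k ≤ D ^ (k + 1) * m k := by
  obtain ⟨B, hB, hB_le⟩ := hmg.exists_mul_le_pow hpos h0 L
  obtain ⟨C, hC, hC_le⟩ := hmg.exists_succ_le hpos
  refine ⟨B * C, by positivity, fun k => ?_⟩
  set n := L * (k + 1) with hn
  have hn0 : n ≠ 0 := mul_ne_zero hL k.succ_ne_zero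
  set a : ℝ := m n ^ ((n : ℝ)⁻¹)
  have ha_pow : a ^ n = m n := Real.rpow_inv_natCast_pow (hpos n).le hn0
  have ha : 1 ≤ a := by
    refine Real.one_le_rpow ?_ (by positivity)
    exact h0.symm.le.trans (hm.monotone hpos (h0.le.trans h1) n.zero_le)
  refine ⟨a, by positivity, fun i => hm.le_pow_of_le_pow hpos h0 (by positivity) ha_pow.ge, ?_⟩
  have hroot : a ^ (k + 1) ≤ B ^ (k + 1) * m (k + 1) := by
    have := hpos (k + 1)
    refine le_of_pow_le_pow_left₀ hL (by positivity) ?_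
    calc (a ^ (k + 1)) ^ L = m n := by rw [← pow_mul, mul_comm, ← hn, ha_pow]
      _ ≤ B ^ (k + 1) * m (k + 1) ^ L := hB_le (k + 1)
      _ ≤ (B ^ (k + 1)) ^ L * m (k + 1) ^ L := by
        gcongr
        exact le_self_pow₀ (one_le_pow₀ hB) hL
      _ = (B ^ (k + 1) * m (k + 1)) ^ L := (mul_pow _ _ _).symm
  calc a ^ k ≤ a ^ (k + 1) := pow_le_pow_right₀ ha k.le_succ
    _ ≤ B ^ (k + 1) * (C ^ (k + 1) * m k) := hroot.trans (by gcongr; exact hC_le k)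
    _ = (B * C) ^ (k + 1) * m k := by rw [mul_pow, mul_assoc]

end ModerateGrowth

/- The two terms of `ρ = min r (1 / (2 * σ * a))` are controlled by the growth of `m k ^ (1 / k)`
and by moderate growth, respectively. -/
lemma exists_taylor_radius (hM : IsWeightSeq M) (hmg : ModerateGrowth M)
    (hmlc : LogConvexSeq (mseq M)) (hroot : RootTendsToInfty (mseq M)) {L : ℕ} (hL : L ≠ 0)
    {r τ : ℝ} (hr : 0 < r) (hτ : 0 < τ) :
    ∃ σ K, 0 < σ ∧ 0 < K ∧ ∀ k, ∃ ρ, 0 < ρ ∧ ρ ≤ r ∧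
      (∀ i ≤ L * (k + 1), σ ^ i * M i * ρ ^ i ≤ i.factorial / 2 ^ i) ∧
      (1 / ρ) ^ k ≤ K * τ ^ k * mseq M k := by
  obtain ⟨hM0, hMpos, hM1, -, -⟩ := hM
  have hpos := mseq_pos hMpos
  obtain ⟨D, hD, hD_le⟩ := (moderateGrowth_mseq hMpos hmg).exists_forall_le_pow hmlc hpos
    (by simp [mseq, hM0]) (by simpa [mseq] using hM1) hL
  obtain ⟨K, hK⟩ := (rootTendsToInfty_iff hpos).mp hroot (1 / (r * τ)) (by positivity)
  refine ⟨τ / (2 * D), max K D, by positivity, lt_max_of_lt_right hD, fun k => ?_⟩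
  obtain ⟨a, ha, ha_le, ha_pow⟩ := hD_le k
  have hmk := hpos k
  set ρ := min r (D / (τ * a)) with hρ
  refine ⟨ρ, by positivity, min_le_left _ _, fun i hi => ?_, ?_⟩
  · calc (τ / (2 * D)) ^ i * M i * ρ ^ i
        ≤ (τ / (2 * D)) ^ i * (i.factorial * a ^ i) * (D / (τ * a)) ^ i := by
          rw [← factorial_mul_mseq M i]
          gcongr
          · exact ha_le i hi
          · exact min_le_right _ _
      _ = i.factorial / 2 ^ i := by
          simp only [div_pow, mul_pow]
          field_simp
  · rcases min_choice r (D / (τ * a)) with h | h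
    · calc (1 / ρ) ^ k = (1 / (r * τ)) ^ k * τ ^ k := by
            rw [hρ, h, ← mul_pow]
            field_simp
        _ ≤ K * mseq M k * τ ^ k := by gcongr; exact hK k
        _ ≤ max K D * τ ^ k * mseq M k := by
            rw [mul_right_comm]
            gcongr
            exact le_max_left _ _
    · calc (1 / ρ) ^ k = (τ / D) ^ k * a ^ k := by
            rw [hρ, h, ← mul_pow]
            field_simp
        _ ≤ (τ / D) ^ k * (D ^ (k + 1) * mseq M k) := by gcongr
        _ = D * τ ^ k * mseq M k := by
            rw [div_pow, pow_succ]
            field_simp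
        _ ≤ max K D * τ ^ k * mseq M k := by
            gcongr
            exact le_max_right _ _

end WeightSequences

section TaylorJets

variable {E F : Type*} [NormedAddCommGroup E] [NormedSpace ℝ E] [NormedAddCommGroup F]
  [NormedSpace ℝ F]

lemma iteratedDerivWithin_line {g : E → F} {x v : E} {s : Set ℝ} {n i : ℕ}
    (hs : UniqueDiffOn ℝ s) (hg : ∀ t ∈ s, ContDiffAt ℝ n g (x + t • v)) (hi : i ≤ n) :
    ∀ t ∈ s, iteratedDerivWithin i (fun t : ℝ => g (x + t • v)) s t =
      iteratedFDeriv ℝ i g (x + t • v) fun _ => v := by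
  induction i with
  | zero => simp
  | succ i ih =>
    intro t ht
    rw [iteratedDerivWithin_succ, derivWithin_congr (ih (by omega)) (ih (by omega) t ht)]
    exact (hasDerivAt_iteratedFDeriv_line ((hg t ht).of_le (by exact_mod_cast hi)))
      |>.hasDerivWithinAt.derivWithin (hs t ht)

/- The powers of `1 / 2` absorb the factor `n` by which Mathlib's Taylor remainder bound exceeds
Lagrange's. -/
lemma exists_isTaylorApprox {φ : ℝ → ℂ} {n : ℕ} {A : ℝ} (hn : n ≠ 0) (hA : 0 ≤ A)
    (hφ : ContDiffOn ℝ n φ (Icc 0 1)) (hφ_le : ∀ i ≤ n, ∀ t ∈ Icc (0 : ℝ) 1,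
      ‖iteratedDerivWithin i φ (Icc 0 1) t‖ ≤ A * (i.factorial / 2 ^ i)) :
    ∃ P, IsTaylorApprox n A φ P := by
  obtain ⟨n, rfl⟩ := Nat.exists_eq_succ_of_ne_zero hn
  set c : ℕ → ℂ := fun i => (i.factorial : ℂ)⁻¹ * iteratedDerivWithin i φ (Icc 0 1) 0 with hc
  refine ⟨∑ i ∈ Finset.range (n + 1), Polynomial.C (c i) * Polynomial.X ^ i, ?_, fun i => ?_,
    fun t ht => ?_⟩
  · refine Nat.lt_succ_of_le (Polynomial.natDegree_sum_le_of_forall_le _ _ fun i hi => ?_)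
    exact (Polynomial.natDegree_C_mul_X_pow_le _ _).trans (Finset.mem_range_succ_iff.mp hi)
  · simp only [Polynomial.finsetSum_coeff, Polynomial.coeff_C_mul_X_pow, Finset.sum_ite_eq]
    split_ifs with hi
    · rw [hc, norm_mul, norm_inv, Complex.norm_natCast, inv_mul_le_iff₀ (by positivity)]
      refine (hφ_le i (Finset.mem_range.mp hi).le 0 (by simp)).trans ?_
      rw [mul_comm]
      gcongr
      exact div_le_self (by positivity) (one_le_pow₀ one_le_two)
    · simpa using hA
  · have heval : (∑ i ∈ Finset.range (n + 1), Polynomial.C (c i) * Polynomial.X ^ i).eval (t : ℂ) =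
        taylorWithinEval φ n (Icc 0 1) 0 t := by
      simp only [taylor_within_apply, Polynomial.eval_finsetSum, Polynomial.eval_mul,
        Polynomial.eval_C, Polynomial.eval_pow, Polynomial.eval_X, Complex.real_smul, sub_zero, hc]
      push_cast
      exact Finset.sum_congr rfl fun i _ => by ring
    have hrem := taylor_mean_remainder_bound zero_le_one (by exact_mod_cast hφ) ht
      (hφ_le (n + 1) le_rfl)
    rw [heval]
    refine hrem.trans ?_
    have hpow : ((n + 1 : ℕ) : ℝ) / 2 ^ (n + 1) ≤ 1 :=
      div_le_one_of_le₀ (by exact_mod_cast Nat.lt_two_pow_self.le) (by positivity)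
    calc A * ((n + 1).factorial / 2 ^ (n + 1)) * (t - 0) ^ (n + 1) / n.factorial
        = A * t ^ (n + 1) * ((n + 1 : ℕ) / 2 ^ (n + 1)) := by
          rw [Nat.factorial_succ, sub_zero]
          push_cast
          field_simp
      _ ≤ A * t ^ (n + 1) := mul_le_of_le_one_right (mul_nonneg hA (pow_nonneg ht.1 _)) hpow

lemma exists_isTaylorApprox_line {g : E → ℂ} {x w : E} {n : ℕ} {A : ℝ} (hn : n ≠ 0) (hA : 0 ≤ A)
    (hg : ∀ t ∈ Icc (0 : ℝ) 1, ContDiffAt ℝ n g (x + t • w))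
    (hg_le : ∀ i ≤ n, ∀ t ∈ Icc (0 : ℝ) 1,
      ‖iteratedFDeriv ℝ i g (x + t • w)‖ * ‖w‖ ^ i ≤ A * (i.factorial / 2 ^ i)) :
    ∃ P, IsTaylorApprox n A (fun t => g (x + t • w)) P := by
  refine exists_isTaylorApprox hn hA
    (fun t ht => ((hg t ht).comp t (by fun_prop)).contDiffWithinAt) fun i hi t ht => ?_
  rw [iteratedDerivWithin_line (uniqueDiffOn_Icc zero_lt_one) hg hi t ht]
  refine (ContinuousMultilinearMap.le_opNorm _ _).trans ?_
  simpa using hg_le i hi t ht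

end TaylorJets

section FiniteDifferenceBounds

lemma exists_norm_fwdDiff_iter_le_mul_pow {j : ℕ} (hj : j ≠ 0) :
    ∃ C c, 1 ≤ C ∧ 2 ≤ c ∧ ∀ {k : ℕ} {A h : ℝ} {f : ℝ → ℂ} {G H : Polynomial ℂ},
      IsPowerJet j (2 * j * (j + 1) * (k + 1)) A f G H → 0 < h → k * h ≤ 1 →
      ‖(Δ_[h])^[k] f 0‖ ≤ C * A ^ (2 * j + 2) * (c * (k * h)) ^ k := by
  obtain ⟨C, _, hC_le⟩ := exists_norm_fwdDiff_iter_le_of_isPowerJet hj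
  set L : ℝ := (2 * j * (j + 1) : ℕ) ^ (2 * j + 2) with hL
  refine ⟨max (C * L) 1, 2 ^ (2 * j + 2) * 16, le_max_right _ _, ?_,
    fun {k A h f G H} hjet hh hkh => (hC_le hjet rfl hh hkh).trans ?_⟩
  · linarith [one_le_pow₀ (one_le_two (α := ℝ)) (n := 2 * j + 2)]
  have hA := hjet.one_le
  have hk : ((k + 1 : ℕ) : ℝ) ≤ 2 ^ k := by exact_mod_cast Nat.lt_two_pow_self
  calc C * ((2 * j * (j + 1) * (k + 1) : ℕ) * A) ^ (2 * j + 2) * (16 * (k * h)) ^ k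
      = C * L * (k + 1 : ℕ) ^ (2 * j + 2) * A ^ (2 * j + 2) * (16 * (k * h)) ^ k := by
        rw [hL, Nat.cast_mul _ (k + 1), mul_pow, mul_pow]
        ring
    _ ≤ max (C * L) 1 * (2 ^ k) ^ (2 * j + 2) * A ^ (2 * j + 2) * (16 * (k * h)) ^ k := by
        gcongr
        exact le_max_left _ _
    _ = max (C * L) 1 * A ^ (2 * j + 2) * (2 ^ (2 * j + 2) * 16 * (k * h)) ^ k := by
        rw [pow_right_comm, mul_assoc (2 ^ (2 * j + 2)), mul_pow (2 ^ (2 * j + 2))]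
        ring

variable {E : Type*} [NormedAddCommGroup E] [NormedSpace ℝ E]

lemma exists_norm_fwdDiff_iter_le_of_isPowerJet_line {j : ℕ} (hj : j ≠ 0) :
    ∃ C c, 0 < C ∧ 0 < c ∧ ∀ {k : ℕ} {A ρ : ℝ} {f : E → ℂ} {x v : E}, 1 ≤ A → 0 < ρ →
      (∀ i ≤ k, ‖f (x + i • v)‖ ≤ A) →
      (∀ w, ‖w‖ = ρ → ∃ G H,
        IsPowerJet j (2 * j * (j + 1) * (k + 1)) A (fun t : ℝ => f (x + t • w)) G H) →
      ‖(Δ_[v])^[k] f x‖ ≤ C * A ^ (2 * j + 2) * (c * (k * (‖v‖ / ρ))) ^ k := by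
  obtain ⟨C, c, hC, hc, hC_le⟩ := exists_norm_fwdDiff_iter_le_mul_pow hj
  refine ⟨C, c, by positivity, by positivity, fun {k A ρ f x v} hA hρ hf hjet => ?_⟩
  by_cases hlarge : 1 ≤ (k * (‖v‖ / ρ)) ^ k
  · calc ‖(Δ_[v])^[k] f x‖ ≤ 2 ^ k * A := norm_fwdDiff_iter_le hf
      _ ≤ c ^ k * (C * A ^ (2 * j + 2)) := by
        gcongr
        exact (le_self_pow₀ hA (by omega)).trans (le_mul_of_one_le_left (by positivity) hC)
      _ ≤ c ^ k * (C * A ^ (2 * j + 2)) * (k * (‖v‖ / ρ)) ^ k :=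
        le_mul_of_one_le_right (by positivity) hlarge
      _ = C * A ^ (2 * j + 2) * (c * (k * (‖v‖ / ρ))) ^ k := by ring
  have hk : k ≠ 0 := by
    rintro rfl
    simp at hlarge
  rcases eq_or_ne v 0 with rfl | hv
  · obtain ⟨k, rfl⟩ := Nat.exists_eq_succ_of_ne_zero hk
    rw [Function.iterate_succ_apply', fwdDiff, add_zero, sub_self, norm_zero]
    positivity
  have hv_norm : 0 < ‖v‖ := norm_pos_iff.mpr hv
  obtain ⟨G, H, hGH⟩ := hjet ((ρ / ‖v‖) • v) (by
    rw [norm_smul, Real.norm_of_nonneg (by positivity), div_mul_cancel₀ _ hv_norm.ne'])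
  have hsmall : k * (‖v‖ / ρ) ≤ 1 :=
    le_of_not_ge fun h => hlarge (one_le_pow₀ h)
  have hline := hC_le hGH (div_pos hv_norm hρ) hsmall
  rwa [fwdDiff_iter_comp_line, smul_smul, div_mul_div_cancel₀ hρ.ne', div_self hv_norm.ne',
    one_smul] at hline

/-- `g` is smooth at every point of `S` and satisfies the estimates defining the Beurling class
`E^{(M)}` uniformly on `S`, instead of on compact subsets only. -/
def UniformBeurlingOn (M : ℕ → ℝ) (g : E → ℂ) (S : Set E) : Prop :=
  (∀ x ∈ S, ContDiffAt ℝ ∞ g x) ∧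
    ∀ σ, 0 < σ → ∃ A, ∀ x ∈ S, ∀ k, ‖iteratedFDeriv ℝ k g x‖ ≤ A * σ ^ k * M k

lemma BeurlingOn.eventually_uniformBeurlingOn_ball [ProperSpace E] {M : ℕ → ℝ} {g : E → ℂ}
    {U : Set E} {c : E} (hg : BeurlingOn M g U) (hU : IsOpen U) (hc : c ∈ U) :
    ∀ᶠ R in 𝓝[>] 0, UniformBeurlingOn M g (Metric.ball c R) := by
  obtain ⟨R, hR, hRU⟩ := Metric.nhds_basis_closedBall.mem_iff.mp (hU.mem_nhds hc)
  filter_upwards [Ioc_mem_nhdsGT hR] with r hr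
  have hclosure : closure (Metric.ball c r) ⊆ U :=
    (Metric.closure_ball_subset_closedBall.trans (Metric.closedBall_subset_closedBall hr.2)).trans
      hRU
  have hball : Metric.ball c r ⊆ U := subset_closure.trans hclosure
  refine ⟨fun x hx => hg.1.contDiffAt (hU.mem_nhds (hball hx)), fun σ hσ => ?_⟩
  obtain ⟨A, -, hA⟩ := hg.2 _ Metric.isOpen_ball Metric.isBounded_ball.isCompact_closure hclosure
    σ hσ
  refine ⟨A, fun x hx k => ?_⟩
  rw [← iteratedFDerivWithin_of_isOpen k hU (hball hx)]
  exact hA x hx k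

lemma exists_isPowerJet_line {f : E → ℂ} {x w : E} {j n : ℕ} {A : ℝ} (hn : n ≠ 0)
    (hA : 1 ≤ A) (hf : ∀ t ∈ Icc (0 : ℝ) 1, ‖f (x + t • w)‖ ≤ A)
    (hpow : ∀ p ∈ ({j, j + 1} : Set ℕ), ∀ t ∈ Icc (0 : ℝ) 1, ContDiffAt ℝ ∞ (f ^ p) (x + t • w) ∧
      ∀ i ≤ n, ‖iteratedFDeriv ℝ i (f ^ p) (x + t • w)‖ * ‖w‖ ^ i ≤ A * (i.factorial / 2 ^ i)) :
    ∃ G H, IsPowerJet j n A (fun t : ℝ => f (x + t • w)) G H := by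
  have hjet : ∀ p ∈ ({j, j + 1} : Set ℕ),
      ∃ P, IsTaylorApprox n A (fun t : ℝ => (f ^ p) (x + t • w)) P := fun p hp =>
    exists_isTaylorApprox_line hn (one_pos.le.trans hA)
      (fun t ht => (hpow p hp t ht).1.of_le (by exact_mod_cast le_top))
      (fun i hi t ht => (hpow p hp t ht).2 i hi)
  obtain ⟨G, hG⟩ := hjet j (by simp)
  obtain ⟨H, hH⟩ := hjet (j + 1) (by simp)
  exact ⟨G, H, hA, hf, hG, hH⟩

end FiniteDifferenceBounds

section PowersInTheBeurlingClass

variable {E : Type*} [NormedAddCommGroup E] {M : ℕ → ℝ} {f : E → ℂ} {c : E}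
  {R : ℝ} {j : ℕ}

lemma add_mem_ball_of_norm_le_half {x v : E} (hx : x ∈ Metric.ball c (R / 2))
    (hv : ‖v‖ ≤ R / 2) : x + v ∈ Metric.ball c R := by
  rw [mem_ball_iff_norm] at hx ⊢
  calc ‖x + v - c‖ = ‖(x - c) + v‖ := by rw [add_sub_right_comm]
    _ ≤ ‖x - c‖ + ‖v‖ := norm_add_le _ _
    _ < R := by linarith

variable [NormedSpace ℝ E]

lemma UniformBeurlingOn.exists_common_bound {S : Set E} (hM0 : M 0 = 1) (hM : ∀ k, 0 < M k)
    (hj : j ≠ 0) (hf : ∀ p ∈ ({j, j + 1} : Set ℕ), UniformBeurlingOn M (f ^ p) S)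
    {σ : ℝ} (hσ : 0 < σ) :
    ∃ A, 1 ≤ A ∧ (∀ x ∈ S, ‖f x‖ ≤ A) ∧ ∀ p ∈ ({j, j + 1} : Set ℕ), ∀ x ∈ S, ∀ k,
      ‖iteratedFDeriv ℝ k (f ^ p) x‖ ≤ A * σ ^ k * M k := by
  obtain ⟨A₁, hA₁⟩ := (hf j (by simp)).2 σ hσ
  obtain ⟨A₂, hA₂⟩ := (hf (j + 1) (by simp)).2 σ hσ
  set A := max (max A₁ A₂) 1
  have hpow : ∀ p ∈ ({j, j + 1} : Set ℕ), ∀ x ∈ S, ∀ k,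
      ‖iteratedFDeriv ℝ k (f ^ p) x‖ ≤ A * σ ^ k * M k := by
    rintro p (rfl | rfl) x hx k
    · refine (hA₁ x hx k).trans ?_
      have := hM k
      gcongr
      exact (le_max_left _ _).trans (le_max_left _ _)
    · refine (hA₂ x hx k).trans ?_
      have := hM k
      gcongr
      exact (le_max_right _ _).trans (le_max_left _ _)
  refine ⟨A, le_max_right _ _, fun x hx => ?_, hpow⟩
  rcases le_total ‖f x‖ 1 with h1 | h1
  · exact h1.trans (le_max_right _ _)
  · calc ‖f x‖ ≤ ‖f x‖ ^ j := le_self_pow₀ h1 hj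
      _ ≤ A := by simpa [hM0] using hpow j (by simp) x hx 0

lemma mul_nat_mul_div_pow_le {c K τ m ρ t : ℝ} {k : ℕ} (hc : 0 ≤ c) (hρ : 0 ≤ ρ)
    (ht : 0 ≤ t) (hρ_le : (1 / ρ) ^ k ≤ K * τ ^ k * m) :
    (c * (k * (t / ρ))) ^ k ≤ K * (c * Real.exp 1 * τ) ^ k * (k.factorial * m) * t ^ k := by
  have hk : (k : ℝ) ^ k ≤ Real.exp 1 ^ k * k.factorial := by
    rw [← Real.exp_nat_mul, mul_one, ← div_le_iff₀ (by positivity)]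
    exact Real.pow_div_factorial_le_exp _ k.cast_nonneg k
  calc (c * (k * (t / ρ))) ^ k = c ^ k * t ^ k * ((k : ℝ) ^ k * (1 / ρ) ^ k) := by
        simp only [mul_pow, div_eq_mul_inv, one_mul]
        ring
    _ ≤ c ^ k * t ^ k * (Real.exp 1 ^ k * k.factorial * (K * τ ^ k * m)) := by gcongr
    _ = K * (c * Real.exp 1 * τ) ^ k * (k.factorial * m) * t ^ k := by
        simp only [mul_pow]
        ring

/- The length `ρ` of the segments carrying the Taylor polynomials is adapted to the order `k` of
the difference: moderate growth makes the polynomials accurate to order `≈ k` on them, and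
`ρ ^ (-k)` is still `O(τ ^ k m_k)` for every `τ`. -/
theorem exists_norm_fwdDiff_iter_le_of_uniformBeurlingOn (hM : IsWeightSeq M)
    (hmg : ModerateGrowth M) (hmlc : LogConvexSeq (mseq M)) (hroot : RootTendsToInfty (mseq M))
    (hj : j ≠ 0) (hR : 0 < R)
    (hf : ∀ p ∈ ({j, j + 1} : Set ℕ), UniformBeurlingOn M (f ^ p) (Metric.ball c R))
    {σ : ℝ} (hσ : 0 < σ) :
    ∃ B, 0 < B ∧ ∀ k : ℕ, ∀ x ∈ Metric.ball c (R / 2), ∀ v : E, k * ‖v‖ < R / 2 →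
      ‖(Δ_[v])^[k] f x‖ ≤ B * σ ^ k * M k * ‖v‖ ^ k := by
  obtain ⟨C, b, hC, hb, hdiff⟩ := exists_norm_fwdDiff_iter_le_of_isPowerJet_line (E := E) hj
  obtain ⟨s, K, hs, hK, hradius⟩ := exists_taylor_radius hM hmg hmlc hroot
    (L := 2 * j * (j + 1)) (by positivity) (half_pos hR) (τ := σ / (b * Real.exp 1))
    (by positivity)
  obtain ⟨A, hA, hf_le, hpow_le⟩ := UniformBeurlingOn.exists_common_bound hM.1 hM.2.1 hj hf hs
  refine ⟨C * A ^ (2 * j + 2) * K, by positivity, fun k x hx v hv => ?_⟩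
  obtain ⟨ρ, hρ, hρR, hsmall, hρ_le⟩ := hradius k
  have hjet (w : E) (hw : ‖w‖ = ρ) : ∃ G H,
      IsPowerJet j (2 * j * (j + 1) * (k + 1)) A (fun t : ℝ => f (x + t • w)) G H := by
    have hmem (t : ℝ) (ht : t ∈ Icc (0 : ℝ) 1) : x + t • w ∈ Metric.ball c R :=
      add_mem_ball_of_norm_le_half hx <| by
        rw [norm_smul, Real.norm_of_nonneg ht.1, hw]
        exact (mul_le_of_le_one_left hρ.le ht.2).trans hρR
    refine exists_isPowerJet_line (by positivity) hA (fun t ht => hf_le _ (hmem t ht))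
      fun p hp t ht => ⟨(hf p hp).1 _ (hmem t ht), fun i hi => ?_⟩
    calc ‖iteratedFDeriv ℝ i (f ^ p) (x + t • w)‖ * ‖w‖ ^ i
        ≤ A * s ^ i * M i * ρ ^ i := by
          rw [hw]
          gcongr
          exact hpow_le p hp _ (hmem t ht) i
      _ = A * (s ^ i * M i * ρ ^ i) := by ring
      _ ≤ A * (i.factorial / 2 ^ i) := by gcongr; exact hsmall i hi
  have hpoints (i : ℕ) (hi : i ≤ k) : ‖f (x + i • v)‖ ≤ A := by
    refine hf_le _ (add_mem_ball_of_norm_le_half hx (norm_nsmul_le.trans (le_trans ?_ hv.le)))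
    gcongr
  have := mseq_pos hM.2.1 k
  calc ‖(Δ_[v])^[k] f x‖ ≤ C * A ^ (2 * j + 2) * (b * (k * (‖v‖ / ρ))) ^ k :=
        hdiff hA hρ hpoints hjet
    _ ≤ C * A ^ (2 * j + 2) * (K * (b * Real.exp 1 * (σ / (b * Real.exp 1))) ^ k *
        (k.factorial * mseq M k) * ‖v‖ ^ k) := by
        gcongr
        exact mul_nat_mul_div_pow_le hb.le hρ.le (norm_nonneg v) hρ_le
    _ = C * A ^ (2 * j + 2) * K * σ ^ k * M k * ‖v‖ ^ k := by
        rw [mul_div_cancel₀ _ (by positivity), factorial_mul_mseq]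
        ring

end PowersInTheBeurlingClass

section SymmetryOfIteratedDerivatives

variable {E F : Type*} [NormedAddCommGroup E] [NormedSpace ℝ E] [NormedAddCommGroup F]
  [NormedSpace ℝ F] {g : E → F} {n : ℕ}

lemma iteratedFDeriv_succ_apply_eq_fderiv (hg : ContDiff ℝ (n + 1 : ℕ) g) (x : E)
    (v : Fin (n + 1) → E) :
    iteratedFDeriv ℝ (n + 1) g x v =
      fderiv ℝ (fun y => iteratedFDeriv ℝ n g y (Fin.tail v)) x (v 0) := by
  have hdiff : DifferentiableAt ℝ (iteratedFDeriv ℝ n g) x :=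
    hg.differentiable_iteratedFDeriv (by exact_mod_cast n.lt_succ_self) x
  have happly := (ContinuousMultilinearMap.apply ℝ (fun _ : Fin n => E) F
    (Fin.tail v)).hasFDerivAt.comp x hdiff.hasFDerivAt
  rw [iteratedFDeriv_succ_apply_left]
  exact (DFunLike.congr_fun happly.fderiv (v 0)).symm

lemma fderiv_fderiv_apply_comm (hg : ContDiff ℝ 2 g) (x a b : E) :
    fderiv ℝ (fun y => fderiv ℝ g y a) x b = fderiv ℝ (fun y => fderiv ℝ g y b) x a := by
  have happly (a b : E) :
      fderiv ℝ (fun y => fderiv ℝ g y a) x b = fderiv ℝ (fderiv ℝ g) x b a := by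
    have hdiff : DifferentiableAt ℝ (fderiv ℝ g) x :=
      (hg.fderiv_right (m := 1) (by norm_num)).differentiable one_ne_zero x
    rw [(hdiff.hasFDerivAt.clm_apply (hasFDerivAt_const a x)).fderiv]
    simp
  rw [happly, happly]
  exact hg.contDiffAt.isSymmSndFDerivAt (by simp) b a

lemma iteratedFDeriv_comp_swap_zero_one (hg : ContDiff ℝ (n + 2 : ℕ) g) (x : E)
    (v : Fin (n + 2) → E) :
    iteratedFDeriv ℝ (n + 2) g x (v ∘ Equiv.swap 0 1) = iteratedFDeriv ℝ (n + 2) g x v := by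
  have hsnd (w : Fin (n + 2) → E) : iteratedFDeriv ℝ (n + 2) g x w =
      fderiv ℝ (fun y => fderiv ℝ (fun y => iteratedFDeriv ℝ n g y (Fin.tail (Fin.tail w))) y
        (w 1)) x (w 0) := by
    rw [iteratedFDeriv_succ_apply_eq_fderiv hg]
    simp_rw [iteratedFDeriv_succ_apply_eq_fderiv (n := n)
      (hg.of_le (by exact_mod_cast (n + 1).le_succ))]
    rfl
  have htail : Fin.tail (Fin.tail (v ∘ Equiv.swap 0 1)) = Fin.tail (Fin.tail v) := by
    ext i
    simp only [Fin.tail, Function.comp_apply]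
    rw [Equiv.swap_apply_of_ne_of_ne (by simp [Fin.ext_iff]) (by simp [Fin.ext_iff])]
  have happly : ContDiff ℝ 2 fun y => iteratedFDeriv ℝ n g y (Fin.tail (Fin.tail v)) :=
    (ContinuousMultilinearMap.apply ℝ (fun _ : Fin n => E) F _).contDiff.comp
      (hg.iteratedFDeriv_right (by norm_cast; omega))
  rw [hsnd, hsnd, htail]
  simpa using fderiv_fderiv_apply_comm happly x (v 0) (v 1)

lemma iteratedFDeriv_comp_perm (hg : ContDiff ℝ n g) (x : E) (σ : Equiv.Perm (Fin n))
    (v : Fin n → E) : iteratedFDeriv ℝ n g x (v ∘ σ) = iteratedFDeriv ℝ n g x v := by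
  induction n generalizing x with
  | zero => exact congrArg _ (Subsingleton.elim _ _)
  | succ n ih =>
    have hσ : σ ∈ Submonoid.closure
        (Set.range fun i : Fin n => Equiv.swap i.castSucc i.succ) := by
      rw [Equiv.Perm.mclosure_swap_castSucc_succ]
      trivial
    induction hσ using Submonoid.closure_induction generalizing v with
    | one => rfl
    | mul a b _ _ ha hb => exact (hb (v ∘ a)).trans (ha v)
    | mem τ hτ =>
      obtain ⟨i, rfl⟩ := hτ
      obtain ⟨n, rfl⟩ := Nat.exists_eq_add_one_of_ne_zero i.pos.ne'
      cases i using Fin.cases with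
      | zero => exact iteratedFDeriv_comp_swap_zero_one hg x v
      | succ i =>
        have htail : Fin.tail (v ∘ Equiv.swap i.succ.castSucc i.succ.succ) =
            Fin.tail v ∘ Equiv.swap i.castSucc i.succ := by
          ext l
          simp only [Fin.tail, Function.comp_apply, ← Fin.succ_castSucc,
            (Fin.succ_injective _).swap_apply]
        have hhead : (v ∘ Equiv.swap i.succ.castSucc i.succ.succ) 0 = v 0 := by
          rw [Function.comp_apply,
            Equiv.swap_apply_of_ne_of_ne (by simp [Fin.ext_iff]) (by simp [Fin.ext_iff])]
        rw [iteratedFDeriv_succ_apply_eq_fderiv hg, iteratedFDeriv_succ_apply_eq_fderiv hg,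
          htail, hhead]
        simp_rw [ih (hg.of_le (by exact_mod_cast (n + 1).le_succ))]

end SymmetryOfIteratedDerivatives

section Polarization

variable {E F : Type*} [AddCommGroup E] [Module ℝ E] [NormedAddCommGroup F] [NormedSpace ℝ F]

/- Expanding by multilinearity, the left side counts each map `Fin k → Fin k` with a sign; by
inclusion-exclusion only the surjective ones survive. -/
lemma sum_neg_one_pow_smul_map_sum_compl {k : ℕ} (T : MultilinearMap ℝ (fun _ : Fin k => E) F)
    (v : Fin k → E) :
    ∑ S : Finset (Fin k), (-1 : ℤ) ^ S.card • T (fun _ => ∑ i ∈ Sᶜ, v i) =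
      ∑ σ : Equiv.Perm (Fin k), T (v ∘ σ) := by
  classical
  let avoid (i : Fin k) : Finset (Fin k → Fin k) := {r | ∀ a, r a ≠ i}
  have havoid (S : Finset (Fin k)) :
      S.inf avoid = Fintype.piFinset fun _ : Fin k => Sᶜ := by
    ext r
    simp only [Finset.mem_inf, avoid, Finset.mem_filter_univ, Fintype.mem_piFinset,
      Finset.mem_compl]
    exact ⟨fun h a ha => h _ ha a rfl, fun h i hi a ha => h a (ha ▸ hi)⟩
  have hsurj (r : Fin k → Fin k) :
      r ∈ (Finset.univ.inf fun i => (avoid i)ᶜ) ↔ Function.Bijective r := by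
    rw [← Finite.surjective_iff_bijective]
    simp [Finset.mem_inf, avoid, Function.Surjective]
  simp_rw [MultilinearMap.map_sum_finset, ← havoid]
  rw [← Finset.powerset_univ, ← Finset.inclusion_exclusion_sum_inf_compl]
  refine (Finset.sum_bij (fun (σ : Equiv.Perm (Fin k)) _ => (σ : Fin k → Fin k)) ?_ ?_ ?_ ?_).symm
  · exact fun σ _ => (hsurj σ).mpr σ.bijective
  · exact fun σ _ τ _ h => Equiv.coe_fn_injective h
  · exact fun r hr => ⟨Equiv.ofBijective r ((hsurj r).mp hr), Finset.mem_univ _, rfl⟩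
  · exact fun σ _ => rfl

end Polarization

section SmoothnessFromDifferences

variable {E F : Type*} [NormedAddCommGroup E] [NormedSpace ℝ E] [NormedAddCommGroup F]
  [NormedSpace ℝ F]

lemma norm_map_le_of_symmetric_of_diag {k : ℕ}
    {T : ContinuousMultilinearMap ℝ (fun _ : Fin k => E) F}
    (hsymm : ∀ (σ : Equiv.Perm (Fin k)) (v : Fin k → E), T (v ∘ σ) = T v) {B : ℝ} (hB : 0 ≤ B)
    (hdiag : ∀ v : E, ‖T fun _ => v‖ ≤ B * ‖v‖ ^ k) {v : Fin k → E} (hv : ∀ i, ‖v i‖ ≤ 1) :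
    ‖T v‖ ≤ (2 * Real.exp 1) ^ k * B := by
  have hfact : (0 : ℝ) < k.factorial := by positivity
  have hpolar : (k.factorial : ℝ) • T v =
      ∑ S : Finset (Fin k), (-1 : ℤ) ^ S.card • T (fun _ => ∑ i ∈ Sᶜ, v i) := by
    have hsum := sum_neg_one_pow_smul_map_sum_compl T.toMultilinearMap v
    simp only [ContinuousMultilinearMap.coe_coe, hsymm, Finset.sum_const, Finset.card_univ,
      Fintype.card_perm, Fintype.card_fin] at hsum
    rw [hsum, Nat.cast_smul_eq_nsmul]
  have hterm (S : Finset (Fin k)) :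
      ‖(-1 : ℤ) ^ S.card • T (fun _ => ∑ i ∈ Sᶜ, v i)‖ ≤ B * k ^ k := by
    have hsum : ‖∑ i ∈ Sᶜ, v i‖ ≤ k := by
      refine (norm_sum_le_of_le _ fun i _ => hv i).trans ?_
      simpa using Sᶜ.card_le_univ
    have hunit : ‖(-1 : ℤ) ^ S.card • T (fun _ => ∑ i ∈ Sᶜ, v i)‖ =
        ‖T fun _ => ∑ i ∈ Sᶜ, v i‖ := by
      rcases neg_one_pow_eq_or ℤ S.card with h | h <;> simp [h]
    rw [hunit]
    exact (hdiag _).trans (by gcongr)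
  have hmul : k.factorial * ‖T v‖ ≤ 2 ^ k * (B * k ^ k) := by
    rw [← Real.norm_natCast, ← norm_smul, hpolar]
    refine (norm_sum_le_of_le _ fun S _ => hterm S).trans_eq ?_
    simp [Fintype.card_finset]
  have hstirling : (k : ℝ) ^ k ≤ Real.exp k * k.factorial :=
    (div_le_iff₀ hfact).mp (Real.pow_div_factorial_le_exp _ k.cast_nonneg k)
  refine le_of_mul_le_mul_left (hmul.trans ?_) hfact
  calc 2 ^ k * (B * (k : ℝ) ^ k) ≤ 2 ^ k * (B * (Real.exp k * k.factorial)) := by gcongr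
    _ = k.factorial * ((2 * Real.exp 1) ^ k * B) := by
      rw [mul_pow, ← Real.exp_nat_mul, mul_one]
      ring

lemma opNorm_le_of_symmetric_of_diag {k : ℕ}
    {T : ContinuousMultilinearMap ℝ (fun _ : Fin k => E) F}
    (hsymm : ∀ (σ : Equiv.Perm (Fin k)) (v : Fin k → E), T (v ∘ σ) = T v) {B : ℝ} (hB : 0 ≤ B)
    (hdiag : ∀ v : E, ‖T fun _ => v‖ ≤ B * ‖v‖ ^ k) :
    ‖T‖ ≤ (2 * Real.exp 1) ^ k * B := by
  refine ContinuousMultilinearMap.opNorm_le_bound (by positivity) fun v => ?_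
  have hunit (i : Fin k) : ‖‖v i‖⁻¹ • v i‖ ≤ 1 := by
    rw [norm_smul, norm_inv, norm_norm]
    exact inv_mul_le_one
  have hscale : v = fun i => ‖v i‖ • ‖v i‖⁻¹ • v i := by
    ext i
    by_cases hi : v i = 0
    · simp [hi]
    · rw [smul_inv_smul₀ (norm_ne_zero_iff.mpr hi)]
  calc ‖T v‖ = (∏ i, ‖v i‖) * ‖T fun i => ‖v i‖⁻¹ • v i‖ := by
        conv_lhs => rw [hscale, ContinuousMultilinearMap.map_smul_univ, norm_smul]
        simp
    _ ≤ (∏ i, ‖v i‖) * ((2 * Real.exp 1) ^ k * B) := by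
        gcongr
        exact norm_map_le_of_symmetric_of_diag hsymm hB hdiag hunit
    _ = (2 * Real.exp 1) ^ k * B * ∏ i, ‖v i‖ := mul_comm _ _

lemma norm_iteratedFDeriv_le_of_fwdDiff_iter_le {g : E → F} (hg : ContDiff ℝ ∞ g) {x : E} {k : ℕ}
    {B δ : ℝ} (hB : 0 ≤ B) (hδ : 0 < δ)
    (hdiff : ∀ v : E, k * ‖v‖ < δ → ‖(Δ_[v])^[k] g x‖ ≤ B * ‖v‖ ^ k) :
    ‖iteratedFDeriv ℝ k g x‖ ≤ (2 * Real.exp 1) ^ k * B := by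
  have hgk : ContDiff ℝ k g := hg.of_le (by exact_mod_cast le_top)
  refine opNorm_le_of_symmetric_of_diag
    (iteratedFDeriv_comp_perm hgk x) hB fun v =>
    norm_iteratedFDeriv_diag_le hgk ?_
  have hsmall : ∀ᶠ s : ℝ in 𝓝 0, k * ‖s • v‖ < δ :=
    (by fun_prop : ContinuousAt (fun s : ℝ => k * ‖s • v‖) 0).eventually_lt continuousAt_const
      (by simpa using hδ)
  filter_upwards [hsmall.filter_mono nhdsWithin_le_nhds] with s hs using hdiff _ hs

/- Landau's interpolation inequality: `h (x + s • v) - h x` differs from `s • fderiv ℝ h x v` by at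
most `b * s`. -/
lemma norm_fderiv_le_of_norm_le {h : E → F} {x : E} {s ε b : ℝ} (hs : 0 < s)
    (hh : ∀ y ∈ Metric.closedBall x s, DifferentiableAt ℝ h y)
    (hε : ∀ y ∈ Metric.closedBall x s, ‖h y‖ ≤ ε)
    (hb : ∀ y ∈ Metric.closedBall x s, ‖fderiv ℝ h y - fderiv ℝ h x‖ ≤ b) :
    ‖fderiv ℝ h x‖ ≤ 2 * ε / s + b := by
  have hx : x ∈ Metric.closedBall x s := Metric.mem_closedBall_self hs.le
  have hε_nonneg : 0 ≤ ε := (norm_nonneg _).trans (hε x hx)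
  have hb_nonneg : 0 ≤ b := (norm_nonneg _).trans (hb x hx)
  refine ContinuousLinearMap.opNorm_le_of_unit_norm (by positivity) fun v hv => ?_
  have hnorm : ‖s • v‖ = s := by rw [norm_smul, hv, mul_one, Real.norm_of_nonneg hs.le]
  have hy : x + s • v ∈ Metric.closedBall x s := by simp [hnorm]
  have hmvt : ‖h (x + s • v) - h x - s • fderiv ℝ h x v‖ ≤ b * s := by
    simpa [hnorm] using
      (convex_closedBall x s).norm_image_sub_le_of_norm_fderiv_le' hh hb hx hy
  have htri : ‖s • fderiv ℝ h x v‖ ≤ 2 * ε + b * s :=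
    calc ‖s • fderiv ℝ h x v‖
        = ‖h (x + s • v) - h x - (h (x + s • v) - h x - s • fderiv ℝ h x v)‖ := by
          rw [sub_sub_cancel]
      _ ≤ ‖h (x + s • v)‖ + ‖h x‖ + b * s :=
          (norm_sub_le _ _).trans (add_le_add (norm_sub_le _ _) hmvt)
      _ ≤ 2 * ε + b * s := by linarith [hε _ hy, hε x hx]
  rw [norm_smul, Real.norm_of_nonneg hs.le] at htri
  rw [div_add' _ _ _ hs.ne', le_div_iff₀ hs]
  linarith

lemma norm_iteratedFDeriv_succ_le {g : E → F} {k : ℕ} (hg : ContDiff ℝ (k + 2 : ℕ) g) {x : E}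
    {s ε B : ℝ} (hs : 0 < s)
    (hε : ∀ y ∈ Metric.closedBall x s, ‖iteratedFDeriv ℝ k g y‖ ≤ ε)
    (hB : ∀ y ∈ Metric.closedBall x s, ‖iteratedFDeriv ℝ (k + 2) g y‖ ≤ B) :
    ‖iteratedFDeriv ℝ (k + 1) g x‖ ≤ 2 * ε / s + B * s := by
  have hdiff {i : ℕ} (hi : i < k + 2) (y : E) : DifferentiableAt ℝ (iteratedFDeriv ℝ i g) y :=
    hg.differentiable_iteratedFDeriv (by exact_mod_cast hi) y
  rw [← norm_fderiv_iteratedFDeriv]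
  refine norm_fderiv_le_of_norm_le hs (fun y _ => hdiff (by omega) y) hε fun y hy => ?_
  have hx : x ∈ Metric.closedBall x s := Metric.mem_closedBall_self hs.le
  have hB_nonneg : 0 ≤ B := (norm_nonneg _).trans (hB x hx)
  calc ‖fderiv ℝ (iteratedFDeriv ℝ k g) y - fderiv ℝ (iteratedFDeriv ℝ k g) x‖
      = ‖iteratedFDeriv ℝ (k + 1) g y - iteratedFDeriv ℝ (k + 1) g x‖ := by
        rw [fderiv_iteratedFDeriv, ← LinearIsometryEquiv.norm_map
          (continuousMultilinearCurryLeftEquiv ℝ (fun _ : Fin (k + 1) => E) F)]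
        exact congrArg norm (LinearIsometryEquiv.map_sub _ _ _).symm
    _ ≤ B * ‖y - x‖ := (convex_closedBall x s).norm_image_sub_le_of_norm_fderiv_le
        (fun z _ => hdiff (by omega) z)
        (fun z hz => norm_fderiv_iteratedFDeriv.trans_le (hB z hz)) hx hy
    _ ≤ B * s := by gcongr; exact mem_closedBall_iff_norm.mp hy

lemma uniformCauchySeqOn_iteratedFDeriv {g : ℕ → E → F} (hg : ∀ n, ContDiff ℝ ∞ (g n)) {c : E}
    {r : ℝ} {B : ℕ → ℝ} (hB : ∀ n k, ∀ x ∈ Metric.ball c r, ‖iteratedFDeriv ℝ k (g n) x‖ ≤ B k)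
    (hcauchy : ∀ ρ < r, UniformCauchySeqOn g atTop (Metric.ball c ρ)) (k : ℕ) {ρ : ℝ}
    (hρ : ρ < r) :
    UniformCauchySeqOn (fun n => iteratedFDeriv ℝ k (g n)) atTop (Metric.ball c ρ) := by
  induction k generalizing ρ with
  | zero =>
    refine Metric.uniformCauchySeqOn_iff.mpr fun ε hε => ?_
    simpa only [iteratedFDeriv_zero_eq_comp, Function.comp_apply, LinearIsometryEquiv.dist_map]
      using Metric.uniformCauchySeqOn_iff.mp (hcauchy ρ hρ) ε hε
  | succ k ih =>
    have hgk (n i : ℕ) : ContDiff ℝ i (g n) := (hg n).of_le (by exact_mod_cast le_top)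
    have hsub (m n i : ℕ) (x : E) : iteratedFDeriv ℝ i (g m - g n) x =
        iteratedFDeriv ℝ i (g m) x - iteratedFDeriv ℝ i (g n) x :=
      iteratedFDeriv_sub_apply (hgk m i).contDiffAt (hgk n i).contDiffAt
    refine Metric.uniformCauchySeqOn_iff.mpr fun ε hε => ?_
    obtain ⟨s, hsε, hs, hsr⟩ : ∃ s, 2 * B (k + 2) * s < ε / 2 ∧ 0 < s ∧ ρ + s < r := by
      have hsmall : ∀ᶠ s in 𝓝[>] (0 : ℝ), 2 * B (k + 2) * s < ε / 2 ∧ ρ + s < r :=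
        (((by fun_prop : ContinuousAt (fun s => 2 * B (k + 2) * s) 0).eventually_lt
          continuousAt_const (by simpa using hε)).and
          ((by fun_prop : ContinuousAt (fun s => ρ + s) 0).eventually_lt
            continuousAt_const (by simpa using hρ))).filter_mono nhdsWithin_le_nhds
      obtain ⟨s, ⟨hsε, hsr⟩, hs⟩ := (hsmall.and self_mem_nhdsWithin).exists
      exact ⟨s, hsε, hs, hsr⟩
    obtain ⟨N, hN⟩ := Metric.uniformCauchySeqOn_iff.mp (ih (ρ := (ρ + s + r) / 2) (by linarith))
      (ε * s / 4) (by positivity)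
    refine ⟨N, fun m hm n hn x hx => ?_⟩
    have hball {y : E} (hy : y ∈ Metric.closedBall x s) : dist y c < ρ + s := by
      linarith [dist_triangle y x c, Metric.mem_closedBall.mp hy, Metric.mem_ball.mp hx]
    have hlandau := norm_iteratedFDeriv_succ_le ((hgk m (k + 2)).sub (hgk n (k + 2))) hs
      (x := x) (ε := ε * s / 4) (B := 2 * B (k + 2))
      (fun y hy => by
        have hy' : y ∈ Metric.ball c ((ρ + s + r) / 2) :=
          Metric.mem_ball.mpr (by linarith [hball hy])
        simpa only [← Pi.sub_def, hsub, dist_eq_norm] using (hN m hm n hn y hy').le)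
      (fun y hy => by
        have hy' : y ∈ Metric.ball c r := Metric.mem_ball.mpr (by linarith [hball hy])
        simp only [← Pi.sub_def, hsub]
        exact (norm_sub_le _ _).trans (by linarith [hB m (k + 2) y hy', hB n (k + 2) y hy']))
    simp only [← Pi.sub_def, hsub, ← dist_eq_norm] at hlandau
    have hε_cancel : 2 * (ε * s / 4) / s = ε / 2 := by field_simp; norm_num
    linarith

lemma contDiffOn_of_tendsto_of_norm_iteratedFDeriv_le [CompleteSpace F] {g : ℕ → E → F}
    (hg : ∀ n, ContDiff ℝ ∞ (g n)) {f : E → F} {c : E} {r : ℝ} {B : ℕ → ℝ}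
    (hB : ∀ n k, ∀ x ∈ Metric.ball c r, ‖iteratedFDeriv ℝ k (g n) x‖ ≤ B k)
    (hlim : ∀ ρ < r, TendstoUniformlyOn g f atTop (Metric.ball c ρ)) :
    ContDiffOn ℝ ∞ f (Metric.ball c r) ∧
      ∀ k, ∀ x ∈ Metric.ball c r, ‖iteratedFDerivWithin ℝ k f (Metric.ball c r) x‖ ≤ B k := by
  have hcauchy (k : ℕ) {ρ : ℝ} (hρ : ρ < r) :=
    uniformCauchySeqOn_iteratedFDeriv hg hB (fun ρ hρ => (hlim ρ hρ).uniformCauchySeqOn) k hρ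
  have hinner {x : E} (hx : x ∈ Metric.ball c r) : ∃ ρ < r, x ∈ Metric.ball c ρ :=
    (exists_between (Metric.mem_ball.mp hx)).imp fun ρ hρ => ⟨hρ.2, hρ.1⟩
  have hpointwise (k : ℕ) (x : E) (hx : x ∈ Metric.ball c r) :
      ∃ p, Tendsto (fun n => iteratedFDeriv ℝ k (g n) x) atTop (𝓝 p) := by
    obtain ⟨ρ, hρ, hxρ⟩ := hinner hx
    exact cauchySeq_tendsto_of_complete ((hcauchy k hρ).cauchySeq hxρ)
  choose! p hp using hpointwise
  have hunif (k : ℕ) : TendstoLocallyUniformlyOn (fun n => iteratedFDeriv ℝ k (g n)) (p k) atTop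
      (Metric.ball c r) := by
    refine tendstoLocallyUniformlyOn_of_forall_exists_nhds fun x hx => ?_
    obtain ⟨ρ, hρ, hxρ⟩ := hinner hx
    exact ⟨Metric.ball c ρ, mem_nhdsWithin_of_mem_nhds (Metric.isOpen_ball.mem_nhds hxρ),
      (hcauchy k hρ).tendstoUniformlyOn_of_tendsto fun y hy =>
        hp k y (Metric.ball_subset_ball hρ.le hy)⟩
  have hcurry (k : ℕ) : TendstoLocallyUniformlyOn (fun n => fderiv ℝ (iteratedFDeriv ℝ k (g n)))
      (fun x => (p (k + 1) x).curryLeft) atTop (Metric.ball c r) :=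
    (continuousMultilinearCurryLeftEquiv ℝ (fun _ : Fin (k + 1) => E) F).isometry.uniformContinuous
      |>.comp_tendstoLocallyUniformlyOn (hunif (k + 1))
  have hderiv (k : ℕ) (x : E) (hx : x ∈ Metric.ball c r) :
      HasFDerivAt (p k) (p (k + 1) x).curryLeft x :=
    hasFDerivAt_of_tendstoLocallyUniformlyOn Metric.isOpen_ball (hcurry k)
      (fun n y _ => ((hg n).differentiable_iteratedFDeriv
        (by exact_mod_cast WithTop.coe_lt_top k) y).hasFDerivAt) (hp k) hx
  have htaylor : HasFTaylorSeriesUpToOn ∞ f (fun x k => p k x) (Metric.ball c r) := by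
    refine ⟨fun x hx => ?_, fun k _ x hx => (hderiv k x hx).hasFDerivWithinAt,
      fun k _ x hx => (hderiv k x hx).continuousAt.continuousWithinAt⟩
    obtain ⟨ρ, hρ, hxρ⟩ := hinner hx
    exact tendsto_nhds_unique
      (((continuousMultilinearCurryFin0 ℝ E F).continuous.tendsto _).comp (hp 0 x hx))
      ((hlim ρ hρ).tendsto_at hxρ)
  refine ⟨htaylor.contDiffOn, fun k x hx => ?_⟩
  rw [← htaylor.eq_iteratedFDerivWithin_of_uniqueDiffOn (by exact_mod_cast le_top)
    Metric.isOpen_ball.uniqueDiffOn hx]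
  exact le_of_tendsto (hp k x hx).norm (Eventually.of_forall fun n => hB n k x hx)

lemma fwdDiff_iter_convolution [MeasurableSpace E] [BorelSpace E] [FiniteDimensional ℝ E]
    {μ : Measure E} [μ.IsAddHaarMeasure] {ψ : E → ℝ} (hψ : Continuous ψ)
    (hψ_supp : HasCompactSupport ψ) {G : E → F} (hG : Integrable G μ) (v : E) (k : ℕ) :
    (Δ_[v])^[k] (ψ ⋆[ContinuousLinearMap.lsmul ℝ ℝ, μ] G) =
      ψ ⋆[ContinuousLinearMap.lsmul ℝ ℝ, μ] (Δ_[v])^[k] G := by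
  induction k generalizing G with
  | zero => rfl
  | succ k ih =>
    have hexists : ConvolutionExists ψ G (ContinuousLinearMap.lsmul ℝ ℝ) μ :=
      hψ_supp.convolutionExists_left _ hψ hG.locallyIntegrable
    have hstep : Δ_[v] (ψ ⋆[ContinuousLinearMap.lsmul ℝ ℝ, μ] G) =
        ψ ⋆[ContinuousLinearMap.lsmul ℝ ℝ, μ] Δ_[v] G := by
      ext x
      simp only [fwdDiff, convolution]
      rw [← integral_sub (hexists (x + v)) (hexists x)]
      simp_rw [← map_sub, add_sub_right_comm]
    rw [Function.iterate_succ_apply, Function.iterate_succ_apply, hstep]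
    exact ih ((hG.comp_add_right v).sub hG)

lemma norm_fwdDiff_iter_convolution_le [MeasurableSpace E] [BorelSpace E] {μ : Measure E}
    [μ.IsAddHaarMeasure] [FiniteDimensional ℝ E] [CompleteSpace F] (ψ : ContDiffBump (0 : E))
    {G : E → F} (hG : Integrable G μ) {x v : E} {k : ℕ} {C : ℝ} (hC : 0 ≤ C)
    (hbound : ∀ y ∈ Metric.ball x ψ.rOut, ‖(Δ_[v])^[k] G y‖ ≤ C) :
    ‖(Δ_[v])^[k] (ψ.normed μ ⋆[ContinuousLinearMap.lsmul ℝ ℝ, μ] G) x‖ ≤ C := by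
  rw [fwdDiff_iter_convolution ψ.continuous_normed ψ.hasCompactSupport_normed hG, ← dist_zero_right]
  exact dist_convolution_le hC ψ.support_normed_eq.subset ψ.nonneg_normed ψ.integral_normed
    (integrable_fwdDiff_iter hG v k).aestronglyMeasurable fun y hy =>
      (dist_zero_right _).trans_le (hbound y hy)

/- Mollifying `f` preserves the bounds on its differences, so the mollifications and all their
derivatives are bounded uniformly and converge. -/
theorem contDiffOn_of_norm_fwdDiff_iter_le [FiniteDimensional ℝ E] [CompleteSpace F] {f : E → F}
    {c : E} {R : ℝ} (hR : 0 < R) {B : ℕ → ℝ} (hB : ∀ k, 0 ≤ B k)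
    (hf : ∀ k : ℕ, ∀ x ∈ Metric.ball c R, ∀ v : E, k * ‖v‖ < R →
      ‖(Δ_[v])^[k] f x‖ ≤ B k * ‖v‖ ^ k) :
    ContDiffOn ℝ ∞ f (Metric.ball c (R / 2)) ∧ ∀ k, ∀ x ∈ Metric.ball c (R / 2),
      ‖iteratedFDerivWithin ℝ k f (Metric.ball c (R / 2)) x‖ ≤ (2 * Real.exp 1) ^ k * B k := by
  borelize E
  let μ : Measure E := Measure.addHaar
  set G : E → F := (Metric.ball c R).indicator f with hG_def
  have hG : Integrable G μ := integrable_indicator_ball_of_norm_fwdDiff_le hR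
    (fun x hx => by simpa using hf 0 x hx 0 (by simpa))
    fun x hx v hv => by simpa using hf 1 x hx v (by simpa)
  have hG_diff {k : ℕ} {x y v : E} (hx : x ∈ Metric.ball c (R / 2)) (hy : dist y x < R / 4)
      (hv : k * ‖v‖ < R / 4) : ‖(Δ_[v])^[k] G y‖ ≤ B k * ‖v‖ ^ k := by
    have hyc := (dist_triangle y x c).trans_lt (add_lt_add hy hx)
    rw [hG_def, fwdDiff_iter_indicator_ball (by linarith)]
    exact hf k y (Metric.mem_ball.mpr (by linarith)) v (by linarith)
  have hbump (n : ℕ) : ∃ ψ : ContDiffBump (0 : E), ψ.rOut = R / 4 / (n + 1) :=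
    ⟨⟨R / 8 / (n + 1), R / 4 / (n + 1), by positivity, by gcongr; norm_num⟩, rfl⟩
  choose ψ hψ using hbump
  have hψ_le (n : ℕ) : (ψ n).rOut ≤ R / 4 := hψ n ▸ div_le_self (by positivity) (by simp)
  have hsmooth (n : ℕ) :
      ContDiff ℝ ∞ ((ψ n).normed μ ⋆[ContinuousLinearMap.lsmul ℝ ℝ, μ] G) :=
    (ψ n).hasCompactSupport_normed.contDiff_convolution_left _ (ψ n).contDiff_normed
      hG.locallyIntegrable
  refine contDiffOn_of_tendsto_of_norm_iteratedFDeriv_le hsmooth (fun n k x hx => ?_)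
    fun ρ hρ => Metric.tendstoUniformlyOn_iff.mpr fun ε hε => ?_
  · refine norm_iteratedFDeriv_le_of_fwdDiff_iter_le (hsmooth n) (hB k) (δ := R / 4)
      (by positivity) fun v hv => ?_
    exact norm_fwdDiff_iter_convolution_le (ψ n) hG (mul_nonneg (hB k) (by positivity))
      fun y hy => hG_diff hx (hy.trans_le (hψ_le n)) hv
  · have hlim : Tendsto (fun n => B 1 * (ψ n).rOut) atTop (𝓝 0) := by
      simpa [hψ, div_eq_mul_inv, mul_assoc] using
        (tendsto_one_div_add_atTop_nhds_zero_nat (𝕜 := ℝ)).const_mul (B 1 * (R / 4))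
    filter_upwards [hlim.eventually (gt_mem_nhds hε)] with n hn x hx
    have hx : x ∈ Metric.ball c (R / 2) := Metric.ball_subset_ball hρ.le hx
    have hGx : G x = f x :=
      indicator_of_mem (Metric.ball_subset_ball (by linarith) hx : x ∈ Metric.ball c R) f
    rw [← hGx, dist_comm]
    refine ((ψ n).dist_normed_convolution_le hG.aestronglyMeasurable fun y hy => ?_).trans_lt hn
    have hdiff := hG_diff (k := 1) (x := x) (y := x) (v := y - x) hx (by simpa using hR)
      (by simpa [← dist_eq_norm] using hy.trans_le (hψ_le n))
    have hyx : ‖y - x‖ ≤ (ψ n).rOut := (mem_ball_iff_norm.mp hy).le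
    simp only [Function.iterate_one, fwdDiff, add_sub_cancel, pow_one] at hdiff
    rw [dist_eq_norm]
    exact hdiff.trans (mul_le_mul_of_nonneg_left hyx (hB 1))

end SmoothnessFromDifferences

section PropertyD

theorem statement4_general {E : Type*} [NormedAddCommGroup E] [NormedSpace ℝ E]
    [FiniteDimensional ℝ E] {M : ℕ → ℝ} (hM : IsWeightSeq M) (hmg : ModerateGrowth M)
    (hmlc : LogConvexSeq (mseq M)) (hroot : RootTendsToInfty (mseq M)) {f : E → ℂ} {c : E}
    {j : ℕ} (hj : 1 ≤ j) (h1 : ∃ U : Set E, IsOpen U ∧ c ∈ U ∧ BeurlingOn M (f ^ j) U)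
    (h2 : ∃ U : Set E, IsOpen U ∧ c ∈ U ∧ BeurlingOn M (f ^ (j + 1)) U) :
    ∃ U : Set E, IsOpen U ∧ c ∈ U ∧ BeurlingOn M f U := by
  have := FiniteDimensional.proper_real E
  obtain ⟨U₁, hU₁, hcU₁, hf₁⟩ := h1
  obtain ⟨U₂, hU₂, hcU₂, hf₂⟩ := h2
  obtain ⟨R, ⟨hR₁, hR₂⟩, hR : 0 < R⟩ := ((hf₁.eventually_uniformBeurlingOn_ball hU₁ hcU₁).and
    (hf₂.eventually_uniformBeurlingOn_ball hU₂ hcU₂)).and self_mem_nhdsWithin |>.exists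
  have hderiv (σ : ℝ) (hσ : 0 < σ) : ∃ B, 0 < B ∧
      ContDiffOn ℝ ∞ f (Metric.ball c (R / 2 / 2)) ∧ ∀ k, ∀ x ∈ Metric.ball c (R / 2 / 2),
        ‖iteratedFDerivWithin ℝ k f (Metric.ball c (R / 2 / 2)) x‖ ≤ B * σ ^ k * M k := by
    obtain ⟨B, hB, hdiff⟩ := exists_norm_fwdDiff_iter_le_of_uniformBeurlingOn hM hmg hmlc hroot
      (Nat.one_le_iff_ne_zero.mp hj) hR (by rintro p (rfl | rfl) <;> assumption)
      (σ := σ / (2 * Real.exp 1)) (by positivity)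
    obtain ⟨hsmooth, hbound⟩ := contDiffOn_of_norm_fwdDiff_iter_le (half_pos hR)
      (fun k => mul_nonneg (by positivity) (hM.2.1 k).le) hdiff
    refine ⟨B, hB, hsmooth, fun k x hx => (hbound k x hx).trans_eq ?_⟩
    rw [div_pow]
    field_simp
  obtain ⟨_, _, hsmooth, _⟩ := hderiv 1 one_pos
  refine ⟨_, Metric.isOpen_ball, Metric.mem_ball_self (by positivity), hsmooth,
    fun V _ _ hV σ hσ => ?_⟩
  obtain ⟨B, hB, -, hbound⟩ := hderiv σ hσ
  exact ⟨B, hB, fun x hx k => hbound k x (hV (subset_closure hx))⟩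

end PropertyD

/-- the ring of germs at `0 ∈ ℝ^d` of `E^{(M)}`-functions has property (D)
for a non-quasianalytic weight sequence `M` of moderate growth with `m` log-convex. -/
theorem statement4 (d : ℕ) (hd : 1 ≤ d) (M : ℕ → ℝ)
    (hM : IsWeightSeq M) (hnq : NonQuasianalytic M) (hmg : ModerateGrowth M)
    (hmlc : LogConvexSeq (mseq M))
    (f : EuclideanSpace ℝ (Fin d) → ℂ) (j : ℕ) (hj : 1 ≤ j)
    (h1 : ∃ U : Set (EuclideanSpace ℝ (Fin d)), IsOpen U ∧ 0 ∈ U ∧ BeurlingOn M (f ^ j) U)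
    (h2 : ∃ U : Set (EuclideanSpace ℝ (Fin d)), IsOpen U ∧ 0 ∈ U ∧
      BeurlingOn M (f ^ (j + 1)) U) :
    ∃ U : Set (EuclideanSpace ℝ (Fin d)), IsOpen U ∧ 0 ∈ U ∧ BeurlingOn M f U := by
  exact statement4_general hM hmg hmlc (rootTendsToInfty_mseq hM.2.1 hnq hmlc) hj h1 h2
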